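/- Let d ≥ 3 and let D ⊂ ℝ^d be a bounded strongly minimally convex domain. Then the metric space (D, ρ_D) is Gromov hyperbolic: there exists δ ≥ 0 such that for all x, y, z, o ∈ D one has (x|y)_o ≥ min((x|z)_o, (y|z)_o) − δ, where the Gromov products are taken with respect to the minimal distance ρ_D. -/

import Mathlib

/-!
The domain `D` is compared with a hyperbolic filling of its closure. Let `S` be a `C¹` function on
`D` comparable to the distance to the boundary, put `h = √S` and
`G x y = 2 log ((‖x - y‖ + h x ∨ h y) / √(h x * h y))`. The quasi-distance `‖x - y‖ + h x ∨ h y`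
satisfies a Ptolemy-type inequality, so `G` satisfies the four-point condition, which the minimal
distance `ρ` is to inherit.

*Upper bounds.* Flat conformal disks show that at height `S` it costs a bounded amount of `ρ` to
move by `S` inwards, or by `√S` tangentially to the boundary. The hypothesis `d ≥ 3` leaves room to
choose the second direction of the disk tangent to the level sets of the defining function. Hence
`ρ` is coarsely bounded by `G`.

*Lower bounds.* There is a bounded function on `D` whose Hessian has positive trace on every
2-plane. Mean value estimates along conformal harmonic disks then give `‖v‖ ≤ C √S g_D(x, v)` and a
Lipschitz bound for `log S`. Hence points with `ρ ≤ 1` are at bounded `G`.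

*Transfer.* The quasi-intervals of `G` form a slim family of connecting sets. A bisection argument
in the style of the guessing-geodesics lemma shows that they stay within bounded distance of rough
geodesics of `ρ`. Points of a quasi-interval of `G` are therefore almost between its ends for `ρ`,
and hyperbolicity passes from `G` to `ρ`.
-/

open scoped RealInnerProductSpace ENNReal
open Metric Set Filter

noncomputable section

/-- Euclidean space `ℝ^d`. -/
abbrev Euc (d : ℕ) := EuclideanSpace ℝ (Fin d)

/-- The open unit disk in `ℝ²`. -/
def unitDisk : Set (Euc 2) := Metric.ball 0 1

/-- Partial derivative of `f` at `z` in the `i`-th coordinate direction. -/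
def pd {d : ℕ} (i : Fin 2) (f : Euc 2 → Euc d) (z : Euc 2) : Euc d :=
  fderiv ℝ f z (EuclideanSpace.single i 1)

/-- `f` is a conformal harmonic map on the unit disk: it is `C²`, its (vector)
Laplacian vanishes (equivalently, every component is harmonic), and at each point
its two partial derivatives are orthogonal and of equal norm. -/
def ConformalHarmonicOnDisk {d : ℕ} (f : Euc 2 → Euc d) : Prop :=
  ContDiffOn ℝ 2 f unitDisk ∧
  (∀ z ∈ unitDisk,
    fderiv ℝ (pd 0 f) z (EuclideanSpace.single 0 1)
      + fderiv ℝ (pd 1 f) z (EuclideanSpace.single 1 1) = 0) ∧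
  (∀ z ∈ unitDisk, ‖pd 0 f z‖ = ‖pd 1 f z‖ ∧ ⟪pd 0 f z, pd 1 f z⟫ = 0)

/-- The minimal (Forstnerič–Kalaj) metric of a domain `D ⊆ ℝ^d`:
`g_D(x,v) = inf {1/r : r > 0, f ∈ CH(𝔻, D), f 0 = x, f_x 0 = r • v}`. -/
def minMetric {d : ℕ} (D : Set (Euc d)) (x v : Euc d) : ℝ :=
  sInf {c : ℝ | ∃ r : ℝ, 0 < r ∧ c = 1 / r ∧
    ∃ f : Euc 2 → Euc d, ConformalHarmonicOnDisk f ∧ (∀ z ∈ unitDisk, f z ∈ D) ∧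
      f 0 = x ∧ pd 0 f 0 = r • v}

/-- `γ` is a piecewise `C¹` curve on `[a, b]`. -/
def PiecewiseC1On {d : ℕ} (γ : ℝ → Euc d) (a b : ℝ) : Prop :=
  ContinuousOn γ (Set.Icc a b) ∧
  ∃ (n : ℕ) (t : Fin (n + 2) → ℝ), Monotone t ∧ t 0 = a ∧ t (Fin.last (n + 1)) = b ∧
    ∀ i : Fin (n + 1), ContDiffOn ℝ 1 γ (Set.Icc (t i.castSucc) (t i.succ))

/-- The minimal pseudodistance `ρ_D`: infimum of minimal lengths of piecewise `C¹`
curves in `D` joining `x` to `y`. -/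
def minDist {d : ℕ} (D : Set (Euc d)) (x y : Euc d) : ℝ :=
  sInf {L : ℝ | ∃ γ : ℝ → Euc d, PiecewiseC1On γ 0 1 ∧
    (∀ t ∈ Set.Icc (0:ℝ) 1, γ t ∈ D) ∧ γ 0 = x ∧ γ 1 = y ∧
    L = ∫ t in (0:ℝ)..(1:ℝ), minMetric D (γ t) (deriv γ t)}

/-- The Gromov product `(x|y)_o` with respect to the minimal pseudodistance of `D`. -/
def gromovProd {d : ℕ} (D : Set (Euc d)) (o x y : Euc d) : ℝ :=
  (minDist D x o + minDist D y o - minDist D x y) / 2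

/-- `D` is hyperbolic: the minimal pseudodistance is a genuine distance. -/
def MinHyperbolic {d : ℕ} (D : Set (Euc d)) : Prop :=
  ∀ x ∈ D, ∀ y ∈ D, x ≠ y → 0 < minDist D x y

/-- The Hessian quadratic form of `u` at `x` in direction `v`. -/
def hessQ {d : ℕ} (u : Euc d → ℝ) (x v : Euc d) : ℝ :=
  fderiv ℝ (fun y => fderiv ℝ u y v) x v

/-- `D` is a bounded domain with `C²` boundary, described by a `C²` defining
function `u` on a neighborhood `U` of `∂D` with nonvanishing differential. -/
def IsC2BoundedDomain {d : ℕ} (D : Set (Euc d)) : Prop :=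
  IsOpen D ∧ IsConnected D ∧ Bornology.IsBounded D ∧
  ∃ (U : Set (Euc d)) (u : Euc d → ℝ), IsOpen U ∧ frontier D ⊆ U ∧ ContDiffOn ℝ 2 u U ∧
    D ∩ U = {x | x ∈ U ∧ u x < 0} ∧ frontier D = {x | x ∈ U ∧ u x = 0} ∧
    ∀ x ∈ frontier D, fderiv ℝ u x ≠ 0

/-- `D` is a bounded strongly minimally convex domain: it has a `C²` defining function
which is strongly minimally plurisubharmonic near `∂D`, i.e. the trace of its Hessian
on every 2-plane (spanned by an orthonormal pair `v, w`) is strictly positive. -/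
def IsStronglyMinimallyConvex {d : ℕ} (D : Set (Euc d)) : Prop :=
  IsOpen D ∧ IsConnected D ∧ Bornology.IsBounded D ∧
  ∃ (U : Set (Euc d)) (u : Euc d → ℝ), IsOpen U ∧ frontier D ⊆ U ∧ ContDiffOn ℝ 2 u U ∧
    D ∩ U = {x | x ∈ U ∧ u x < 0} ∧ frontier D = {x | x ∈ U ∧ u x = 0} ∧
    (∀ x ∈ frontier D, fderiv ℝ u x ≠ 0) ∧
    (∀ x ∈ U, ∀ v w : Euc d, ‖v‖ = 1 → ‖w‖ = 1 → ⟪v, w⟫ = 0 →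
      0 < hessQ u x v + hessQ u x w)

/-- `D` is a bounded strongly convex domain: convex, with a `C²` defining function whose
Hessian is positive definite on the tangent space at every boundary point
(equivalently, all principal curvatures of `∂D` w.r.t. the inner normal are positive). -/
def IsStronglyConvexDomain {d : ℕ} (D : Set (Euc d)) : Prop :=
  IsOpen D ∧ IsConnected D ∧ Bornology.IsBounded D ∧ Convex ℝ D ∧
  ∃ (U : Set (Euc d)) (u : Euc d → ℝ), IsOpen U ∧ frontier D ⊆ U ∧ ContDiffOn ℝ 2 u U ∧
    D ∩ U = {x | x ∈ U ∧ u x < 0} ∧ frontier D = {x | x ∈ U ∧ u x = 0} ∧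
    (∀ x ∈ frontier D, fderiv ℝ u x ≠ 0) ∧
    (∀ ξ ∈ frontier D, ∀ w : Euc d, w ≠ 0 → fderiv ℝ u ξ w = 0 → 0 < hessQ u ξ w)

/-- For `x ∈ D` with nearest boundary point `p`, the outer unit normal direction
`n_{π(x)} = (p - x)/‖p - x‖`. -/
def nvec {d : ℕ} (x p : Euc d) : Euc d := ‖p - x‖⁻¹ • (p - x)

/-- Normal component of `v` at `x` with nearest boundary point `p`. -/
def vN {d : ℕ} (x p v : Euc d) : Euc d := ⟪v, nvec x p⟫ • nvec x p

/-- Tangential component of `v` at `x` with nearest boundary point `p`. -/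
def vT {d : ℕ} (x p v : Euc d) : Euc d := v - vN x p v

/-- The intrinsic distance `H` on the boundary `∂D`: infimum of Euclidean lengths of
piecewise `C¹` curves in `∂D` joining two boundary points. -/
def bdist {d : ℕ} (D : Set (Euc d)) (ξ η : Euc d) : ℝ :=
  sInf {L : ℝ | ∃ α : ℝ → Euc d, PiecewiseC1On α 0 1 ∧
    (∀ t ∈ Set.Icc (0:ℝ) 1, α t ∈ frontier D) ∧ α 0 = ξ ∧ α 1 = η ∧
    L = ∫ t in (0:ℝ)..(1:ℝ), ‖deriv α t‖}

/-- `h(x) = δ_D(x)^{1/2}`. -/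
def hfun {d : ℕ} (D : Set (Euc d)) (x : Euc d) : ℝ :=
  Real.sqrt (Metric.infDist x (frontier D))

/-- The length of a curve with respect to the boundary Finsler metric
`F(x,v) = ‖v_N‖/(2 δ_D(x)) + ‖v_T‖/δ_D(x)^{1/2}`. -/
def Flen {d : ℕ} (D : Set (Euc d)) (π : Euc d → Euc d) (γ : ℝ → Euc d) : ℝ :=
  ∫ t in (0:ℝ)..(1:ℝ),
    (‖vN (γ t) (π (γ t)) (deriv γ t)‖ / (2 * Metric.infDist (γ t) (frontier D))
      + ‖vT (γ t) (π (γ t)) (deriv γ t)‖ / Real.sqrt (Metric.infDist (γ t) (frontier D)))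

/-- The filling Finsler metric `F`: the boundary Finsler metric on
`N = {δ_D ≤ ε}` and `c‖v‖` elsewhere. -/
def Fmet {d : ℕ} (D : Set (Euc d)) (π : Euc d → Euc d) (ε c : ℝ) (x v : Euc d) : ℝ :=
  if Metric.infDist x (frontier D) ≤ ε then
    ‖vN x (π x) v‖ / (2 * Metric.infDist x (frontier D))
      + ‖vT x (π x) v‖ / Real.sqrt (Metric.infDist x (frontier D))
  else c * ‖v‖

/-- The intrinsic distance `d_F` associated to the filling Finsler metric `F`. -/
def dF {d : ℕ} (D : Set (Euc d)) (π : Euc d → Euc d) (ε c : ℝ) (x y : Euc d) : ℝ :=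
  sInf {L : ℝ | ∃ γ : ℝ → Euc d, PiecewiseC1On γ 0 1 ∧
    (∀ t ∈ Set.Icc (0:ℝ) 1, γ t ∈ D) ∧ γ 0 = x ∧ γ 1 = y ∧
    L = ∫ t in (0:ℝ)..(1:ℝ), Fmet D π ε c (γ t) (deriv γ t)}

/-- The hyperbolic filling distance
`d_H(x,y) = 2 log((H(π x, π y) + h(x) ∨ h(y)) / √(h(x) h(y)))`. -/
def dH {d : ℕ} (D : Set (Euc d)) (π : Euc d → Euc d) (x y : Euc d) : ℝ :=
  2 * Real.log ((bdist D (π x) (π y) + max (hfun D x) (hfun D y)) /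
    Real.sqrt (hfun D x * hfun D y))

/-- `δ̂_D(x,v)`: the supremum over 2-dimensional linear subspaces `Λ ∋ v` of the
distance (in `ℝ≥0∞`, so `∞` if `x + Λ ⊆ D`) from `x` to `(x + Λ) \ D`. -/
def deltaHat {d : ℕ} (D : Set (Euc d)) (x v : Euc d) : ℝ≥0∞ :=
  ⨆ (Λ : Submodule ℝ (Euc d)) (_ : Module.finrank ℝ Λ = 2) (_ : v ∈ Λ),
    ⨅ (y : Euc d) (_ : y - x ∈ Λ ∧ y ∉ D), edist x y

/-- The positive parameter at which the ray `t ↦ x + t • v` exits the convex domain `D`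
(equal to `0`, by the `sInf ∅ = 0` convention, when the ray stays in `D`,
i.e. when the corresponding chord endpoint is the point at infinity). -/
def chordParam {d : ℕ} (D : Set (Euc d)) (x v : Euc d) : ℝ :=
  sInf {s : ℝ | 0 < s ∧ x + s • v ∉ D}

/-- The Hilbert Finsler metric `h_D(x,v) = (‖v‖/2)(1/‖x-a‖ + 1/‖x-b‖)` of a convex
domain, with the convention `1/‖x-∞‖ = 0` (here `‖x-b‖ = chordParam D x v • ‖v‖` and
`‖x-a‖ = chordParam D x (-v) • ‖v‖`, and division by zero is zero). -/
def hilbertFinsler {d : ℕ} (D : Set (Euc d)) (x v : Euc d) : ℝ :=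
  (1/2) * (1 / chordParam D x v + 1 / chordParam D x (-v))

/- The Hilbert distance of a convex domain: for `x ≠ y`,
`H_D(x,y) = ½ log((‖x-b‖ ‖y-a‖)/(‖x-a‖ ‖y-b‖))` where `a, x, y, b` are aligned on the
chord through `x, y`, with the convention that ratios involving the point at infinity
(detected by `chordParam = 0`) are equal to `1`. -/
open Classical in
def hilbertDist {d : ℕ} (D : Set (Euc d)) (x y : Euc d) : ℝ :=
  if x = y then 0 else
    (1/2) * Real.log
      ((if chordParam D x (y - x) = 0 then 1
        else chordParam D x (y - x) / (chordParam D x (y - x) - 1)) *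
       (if chordParam D x (x - y) = 0 then 1
        else (1 + chordParam D x (x - y)) / chordParam D x (x - y)))

/-! ### Stability of slim families of connecting sets -/

section SlimFamily

variable {X : Type*} [PseudoMetricSpace X]

/-- A discrete rough geodesic: the points `c a, …, c b` are spaced, up to an additive error `2`,
like the integers `a, …, b`. -/
def IsRoughChain (c : ℕ → X) (a b : ℕ) : Prop :=
  ∀ i j, a ≤ i → i ≤ j → j ≤ b →
    dist (c i) (c j) ≤ (j : ℝ) - i ∧ (j : ℝ) - i - 2 ≤ dist (c i) (c j)

lemma IsRoughChain.mono {c : ℕ → X} {a b a' b' : ℕ} (hc : IsRoughChain c a b) (ha : a ≤ a')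
    (hb : b' ≤ b) : IsRoughChain c a' b' :=
  fun i j hi hij hj => hc i j (ha.trans hi) hij (hj.trans hb)

/-- A family of connecting sets `I x y` whose triangles are `Δ`-slim and whose members between
points at distance at most `1` are `Δ`-small, as in the guessing-geodesics lemma. -/
structure IsSlimFamily (I : X → X → Set X) (Δ : ℝ) : Prop where
  const_nonneg : 0 ≤ Δ
  slim : ∀ ⦃x y p⦄, p ∈ I x y → ∀ z, ∃ q ∈ I x z ∪ I z y, dist p q ≤ Δ
  short : ∀ ⦃x y p⦄, dist x y ≤ 1 → p ∈ I x y → dist p x ≤ Δ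

/-- The sets `I x y` stay within distance `T` of every rough chain from `x` to `y` of at most `n`
steps. -/
def StaysClose (I : X → X → Set X) (n : ℕ) (T : ℝ) : Prop :=
  ∀ (c : ℕ → X) (a b : ℕ), IsRoughChain c a b → a ≤ b → b ≤ a + n → ∀ p ∈ I (c a) (c b),
    ∃ i ∈ Icc a b, dist p (c i) ≤ T

variable {I : X → X → Set X} {Δ : ℝ}

lemma StaysClose.mono {n n' : ℕ} {T T' : ℝ} (h : StaysClose I n T) (hn : n' ≤ n) (hT : T ≤ T') :
    StaysClose I n' T' := fun c a b hc hab hb p hp =>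
  let ⟨i, hi, hpi⟩ := h c a b hc hab (by omega) p hp
  ⟨i, hi, hpi.trans hT⟩

/-- By repeated bisection of the chain. -/
lemma IsSlimFamily.staysClose_two_pow (hI : IsSlimFamily I Δ) (n : ℕ) :
    StaysClose I (2 ^ n) (Δ * n + Δ) := by
  induction n with
  | zero =>
    intro c a b hc hab hb p hp
    have hlen : (b : ℝ) ≤ a + 1 := by exact_mod_cast hb
    refine ⟨a, left_mem_Icc.2 hab, ?_⟩
    simpa using hI.short ((hc a b le_rfl hab le_rfl).1.trans (by linarith)) hp
  | succ n ih =>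
    intro c a b hc hab hb p hp
    rw [pow_succ'] at hb
    obtain ⟨q, hq, hpq⟩ := hI.slim hp (c ((a + b) / 2))
    obtain ⟨i, hi, hqi⟩ : ∃ i ∈ Icc a b, dist q (c i) ≤ Δ * n + Δ := by
      rcases hq with hq | hq
      · obtain ⟨i, ⟨hai, hib⟩, hqi⟩ := ih c a ((a + b) / 2) (hc.mono le_rfl (by omega)) (by omega)
          (by omega) q hq
        exact ⟨i, ⟨hai, by omega⟩, hqi⟩
      · obtain ⟨i, ⟨hai, hib⟩, hqi⟩ := ih c ((a + b) / 2) b (hc.mono (by omega) le_rfl) (by omega)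
          (by omega) q hq
        exact ⟨i, ⟨by omega, hib⟩, hqi⟩
    refine ⟨i, hi, (dist_triangle p q _).trans ?_⟩
    push_cast
    linarith

lemma StaysClose.trim_left {n R : ℕ} {T S : ℝ} (hT : StaysClose I n T) (hI : IsSlimFamily I Δ)
    (hR : S + Δ + T + 2 < R) {c : ℕ → X} {a b i : ℕ} (hc : IsRoughChain c a b) (hb : b ≤ a + n)
    (hi : i ∈ Icc a b) {p : X} (hp : p ∈ I (c a) (c b)) (hpi : dist p (c i) ≤ S) :
    ∃ a' ∈ Icc a i, i ≤ a' + R ∧ ∃ q ∈ I (c a') (c b), dist p q ≤ Δ := by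
  obtain ⟨hai, hib⟩ := hi
  by_cases hnear : i ≤ a + R
  · exact ⟨a, ⟨le_rfl, hai⟩, hnear, p, hp, by simpa using hI.const_nonneg⟩
  obtain ⟨q, hq | hq, hpq⟩ := hI.slim hp (c (i - R))
  · exfalso
    obtain ⟨j, ⟨haj, hji⟩, hqj⟩ := hT c a (i - R) (hc.mono le_rfl (by omega)) (by omega)
      (by omega) q hq
    have hfar := (hc j i haj (by omega) hib).2
    have hgap : (j : ℝ) + R ≤ i := by exact_mod_cast (by omega : j + R ≤ i)
    have hdist := dist_triangle4 (c j) q p (c i)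
    rw [dist_comm (c j) q, dist_comm q p] at hdist
    linarith
  · exact ⟨i - R, ⟨by omega, by omega⟩, by omega, q, hq, hpq⟩

lemma StaysClose.trim_right {n R : ℕ} {T S : ℝ} (hT : StaysClose I n T) (hI : IsSlimFamily I Δ)
    (hR : S + Δ + T + 2 < R) {c : ℕ → X} {a b i : ℕ} (hc : IsRoughChain c a b) (hb : b ≤ a + n)
    (hi : i ∈ Icc a b) {p : X} (hp : p ∈ I (c a) (c b)) (hpi : dist p (c i) ≤ S) :
    ∃ b' ∈ Icc i b, b' ≤ i + R ∧ ∃ q ∈ I (c a) (c b'), dist p q ≤ Δ := by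
  obtain ⟨hai, hib⟩ := hi
  by_cases hnear : b ≤ i + R
  · exact ⟨b, ⟨hib, le_rfl⟩, hnear, p, hp, by simpa using hI.const_nonneg⟩
  obtain ⟨q, hq | hq, hpq⟩ := hI.slim hp (c (i + R))
  · exact ⟨i + R, ⟨by omega, by omega⟩, le_rfl, q, hq, hpq⟩
  · exfalso
    obtain ⟨j, ⟨hij, hjb⟩, hqj⟩ := hT c (i + R) b (hc.mono (by omega) le_rfl) (by omega)
      (by omega) q hq
    have hfar := (hc i j hai (by omega) hjb).2
    have hgap : (i : ℝ) + R ≤ j := by exact_mod_cast hij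
    have hdist := dist_triangle4 (c i) p q (c j)
    rw [dist_comm (c i) p] at hdist
    linarith

lemma exists_linear_le_two_pow_and_mul_le (hΔ : 0 ≤ Δ) : ∃ C : ℝ, 0 ≤ C ∧ ∀ T : ℝ, 0 ≤ T →
    ∃ k : ℕ, 2 * (2 * T + 2 * Δ + 4) ≤ 2 ^ k ∧ 3 * Δ + Δ * k ≤ T / 2 + C := by
  obtain ⟨k₀, hk₀⟩ := pow_unbounded_of_one_lt (8 * (Δ + 1) + 4 * Δ + 8) (one_lt_two (α := ℝ))
  refine ⟨3 * Δ + Δ * k₀, by positivity, fun T hT => ?_⟩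
  set m := ⌊T / (2 * (Δ + 1))⌋₊
  have hm_le : (m : ℝ) ≤ T / (2 * (Δ + 1)) := Nat.floor_le (by positivity)
  have hm_gt : T < (m + 1) * (2 * (Δ + 1)) := by
    rw [← div_lt_iff₀ (by positivity)]
    exact Nat.lt_floor_add_one _
  have hm_pow : (m : ℝ) + 1 ≤ 2 ^ m := by exact_mod_cast Nat.lt_two_pow_self (n := m)
  refine ⟨k₀ + m, ?_, ?_⟩
  · calc 2 * (2 * T + 2 * Δ + 4) ≤ 4 * ((m + 1) * (2 * (Δ + 1))) + (4 * Δ + 8) * (m + 1) := by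
          nlinarith [Nat.cast_nonneg (α := ℝ) m]
      _ = (8 * (Δ + 1) + 4 * Δ + 8) * (m + 1) := by ring
      _ ≤ 2 ^ k₀ * 2 ^ m := by gcongr
      _ = 2 ^ (k₀ + m) := (pow_add ..).symm
  · have hmul : Δ * m ≤ T / 2 := by
      rw [le_div_iff₀ (by positivity)] at hm_le
      linarith [Nat.cast_nonneg (α := ℝ) m]
    push_cast
    linarith

/-- Only the part of the chain within `2 T + 2 Δ + 4` steps of a point close to `p` matters, so
bisection gives a bound logarithmic in `T`. -/
lemma IsSlimFamily.exists_improvement (hI : IsSlimFamily I Δ) : ∃ C : ℝ, 0 ≤ C ∧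
    ∀ (n : ℕ) (T : ℝ), 0 ≤ T → StaysClose I n T → StaysClose I n (T / 2 + C) := by
  have hΔ := hI.const_nonneg
  obtain ⟨C, hC, hexp⟩ := exists_linear_le_two_pow_and_mul_le hΔ
  refine ⟨C, hC, fun n T hT hclose c a b hc hab hb p hp => ?_⟩
  obtain ⟨k, hk, hkC⟩ := hexp T hT
  obtain ⟨R, hR, hRk⟩ : ∃ R : ℕ, 2 * T + 2 * Δ + 2 < R ∧ 2 * R ≤ 2 ^ k := by
    refine ⟨⌊2 * T + 2 * Δ + 2⌋₊ + 1, by exact_mod_cast Nat.lt_floor_add_one _, ?_⟩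
    have hfloor := Nat.floor_le (show 0 ≤ 2 * T + 2 * Δ + 2 by positivity)
    exact_mod_cast (by push_cast; linarith :
      ((2 * (⌊2 * T + 2 * Δ + 2⌋₊ + 1) : ℕ) : ℝ) ≤ ((2 ^ k : ℕ) : ℝ))
  obtain ⟨i, hi, hpi⟩ := hclose c a b hc hab hb p hp
  obtain ⟨a', ⟨haa', ha'i⟩, hia', q, hq, hpq⟩ :=
    hclose.trim_left (R := R) hI (by linarith) hc hb hi hp hpi
  obtain ⟨b', ⟨hib', hb'b⟩, hb'i, q', hq', hqq'⟩ :=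
    hclose.trim_right (R := R) hI (S := T + Δ) (by linarith) (hc.mono haa' le_rfl) (by omega)
      ⟨ha'i, hi.2⟩ hq ((dist_triangle_left q (c i) p).trans (by linarith))
  obtain ⟨j, ⟨ha'j, hjb'⟩, hq'j⟩ := hI.staysClose_two_pow k c a' b' (hc.mono haa' hb'b) (by omega)
    (by omega) q' hq'
  refine ⟨j, ⟨by omega, by omega⟩, (dist_triangle4 p q q' _).trans ?_⟩
  linarith

theorem IsSlimFamily.exists_staysClose (hI : IsSlimFamily I Δ) :
    ∃ T : ℝ, 0 ≤ T ∧ ∀ n, StaysClose I n T := by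
  have hΔ := hI.const_nonneg
  obtain ⟨C, hC, himprove⟩ := hI.exists_improvement
  have hiterate (n j : ℕ) : StaysClose I n ((Δ * n + Δ) / 2 ^ j + 2 * C) := by
    induction j with
    | zero =>
      exact (hI.staysClose_two_pow n).mono Nat.lt_two_pow_self.le (by simp; linarith)
    | succ j ih =>
      have hhalf : ((Δ * n + Δ) / 2 ^ j + 2 * C) / 2 + C = (Δ * n + Δ) / 2 ^ (j + 1) + 2 * C := by
        rw [pow_succ]
        field_simp
        ring
      exact hhalf ▸ himprove n _ (by positivity) ih
  refine ⟨1 + 2 * C, by positivity, fun n => ?_⟩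
  obtain ⟨j, hj⟩ := pow_unbounded_of_one_lt (Δ * n + Δ) (one_lt_two (α := ℝ))
  have hsmall : (Δ * n + Δ) / 2 ^ j ≤ 1 := (div_le_one (by positivity)).2 hj.le
  exact (hiterate n j).mono le_rfl (by linarith)

end SlimFamily

/-! ### Gromov hyperbolicity from a comparison gauge -/

section Gauge

variable {X : Type*} {G : X → X → ℝ} {K K₁ : ℝ}

/-- A hyperbolic gauge: a symmetric function with rough geodesics that satisfies the four-point
condition of Gromov hyperbolic spaces. -/
structure IsHyperbolicGauge (G : X → X → ℝ) (K : ℝ) : Prop where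
  const_nonneg : 0 ≤ K
  nonneg : ∀ x y, 0 ≤ G x y
  symm : ∀ x y, G x y = G y x
  self : ∀ x, G x x = 0
  four_point : ∀ x y z w, G x y + G z w ≤ max (G x z + G y w) (G x w + G y z) + K
  exists_between : ∀ x y t, 0 ≤ t → t ≤ G x y → ∃ p, G x p ≤ t + K ∧ G p y ≤ G x y - t + K

/-- The quasi-interval of a gauge `G` between `x` and `y`, with additive error `K`. -/
def quasiInterval (G : X → X → ℝ) (K : ℝ) (x y : X) : Set X :=
  {p | G x p + G p y ≤ G x y + K}

lemma mem_quasiInterval {x y p : X} :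
    p ∈ quasiInterval G K x y ↔ G x p + G p y ≤ G x y + K := Iff.rfl

lemma quasiInterval_mono (hK : K ≤ K₁) (x y : X) :
    quasiInterval G K x y ⊆ quasiInterval G K₁ x y :=
  fun _ hp => (mem_quasiInterval.1 hp).trans (by linarith)

namespace IsHyperbolicGauge

lemma mem_quasiInterval_or (hG : IsHyperbolicGauge G K) {x y p : X}
    (hp : p ∈ quasiInterval G K₁ x y) (z : X) :
    p ∈ quasiInterval G (K₁ + K) x z ∪ quasiInterval G (K₁ + K) z y := by
  have hfour := hG.four_point p z x y
  rw [hG.symm p x, hG.symm p z, hG.symm z x] at hfour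
  rw [mem_quasiInterval] at hp
  simp only [mem_union, mem_quasiInterval]
  rcases le_max_iff.1 (sub_le_iff_le_add.2 hfour) with h | h
  · right; rw [hG.symm z p] at h ⊢; linarith
  · left; rw [hG.symm z p] at h; linarith

lemma exists_mem_quasiInterval_near (hG : IsHyperbolicGauge G K) (hK₁ : 0 ≤ K₁) {x y p : X}
    (hp : p ∈ quasiInterval G K₁ x y) :
    ∃ q ∈ quasiInterval G (2 * K) x y, G p q ≤ K₁ + 2 * K := by
  obtain ⟨q, hxq, hqy⟩ := hG.exists_between x y (min (G x p) (G x y))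
    (le_min (hG.nonneg x p) (hG.nonneg x y)) (min_le_right _ _)
  refine ⟨q, by rw [mem_quasiInterval]; linarith, ?_⟩
  have hfour := hG.four_point p q x y
  rw [hG.symm p x, hG.symm q x] at hfour
  rw [mem_quasiInterval] at hp
  have hpy := hG.nonneg p y
  have hleft := min_le_left (G x p) (G x y)
  rcases le_max_iff.1 (sub_le_iff_le_add.2 hfour) with h | h <;>
    rcases min_choice (G x p) (G x y) with hmin | hmin <;> linarith

/-- The Gromov product `(y|o)_x`, truncated to `[0, G x y]`, is the position of an approximate
centre on the quasi-interval from `x` to `y`. -/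
lemma exists_center (hG : IsHyperbolicGauge G K) (x y o : X) :
    ∃ p ∈ quasiInterval G (6 * K) x y,
      p ∈ quasiInterval G (6 * K) o x ∧ p ∈ quasiInterval G (6 * K) o y := by
  have hK := hG.const_nonneg
  have htri (u v w : X) : G u v ≤ G u w + G v w + K := by
    simpa [hG.self] using hG.four_point u v w w
  have hxo := htri x o y
  have hyo := htri y o x
  rw [hG.symm o y] at hxo
  rw [hG.symm o x, hG.symm y x] at hyo
  obtain ⟨t, ht⟩ : ∃ t, t = (G x y + G x o - G y o) / 2 := ⟨_, rfl⟩
  obtain ⟨s, hs0, hs1, hst, hts⟩ : ∃ s, 0 ≤ s ∧ s ≤ G x y ∧ s ≤ t + K ∧ t ≤ s + K := by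
    refine ⟨max 0 (min t (G x y)), le_max_left _ _, max_le (hG.nonneg x y) (min_le_right _ _),
      max_le (by linarith) ((min_le_left _ _).trans (by linarith)), ?_⟩
    rw [← sub_le_iff_le_add]
    exact (le_min (by linarith) (by linarith)).trans (le_max_right _ _)
  obtain ⟨p, hxp, hpy⟩ := hG.exists_between x y s hs0 hs1
  have hfour := hG.four_point p o x y
  rw [hG.symm p x, hG.symm p o, hG.symm o y, hG.symm o x] at hfour
  have hop : G o p ≤ G y o + t - G x y + 3 * K := by
    rcases le_max_iff.1 (sub_le_iff_le_add.2 hfour) with h | h <;> linarith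
  rw [hG.symm y o] at hop ht
  rw [hG.symm x o] at ht
  refine ⟨p, ?_, ?_, ?_⟩ <;> rw [mem_quasiInterval]
  · linarith
  · rw [hG.symm p x]
    linarith
  · linarith

end IsHyperbolicGauge

end Gauge

section Comparison

variable {X : Type*} [PseudoMetricSpace X] {G : X → X → ℝ} {K K₁ L : ℝ}

/-- The distance is coarsely Lipschitz with respect to `G`, and points at distance at most `1` are
at bounded `G`-distance. The second bound need not hold at larger scales: `G` may a priori
grow faster than any multiple of the distance. -/
structure CoarselyControls (G : X → X → ℝ) (L : ℝ) : Prop where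
  const_nonneg : 0 ≤ L
  dist_le : ∀ x y, dist x y ≤ L * G x y + L
  le_of_dist_le_one : ∀ x y, dist x y ≤ 1 → G x y ≤ L

lemma CoarselyControls.dist_le_of_le (hL : CoarselyControls G L) {x y : X} {B : ℝ}
    (hB : G x y ≤ B) : dist x y ≤ L * B + L :=
  (hL.dist_le x y).trans (by gcongr; exact hL.const_nonneg)

lemma IsHyperbolicGauge.isSlimFamily (hG : IsHyperbolicGauge G K) (hL : CoarselyControls G L) :
    IsSlimFamily (quasiInterval G (2 * K)) (L * (5 * K + L) + L) := by
  have hK := hG.const_nonneg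
  have hL0 := hL.const_nonneg
  refine ⟨by positivity, fun x y p hp z => ?_, fun x y p hxy hp => ?_⟩
  · rcases hG.mem_quasiInterval_or hp z with h | h
    · obtain ⟨q, hq, hpq⟩ := hG.exists_mem_quasiInterval_near (by linarith) h
      exact ⟨q, Or.inl hq, hL.dist_le_of_le (by linarith)⟩
    · obtain ⟨q, hq, hpq⟩ := hG.exists_mem_quasiInterval_near (by linarith) h
      exact ⟨q, Or.inr hq, hL.dist_le_of_le (by linarith)⟩
  · refine hL.dist_le_of_le ?_
    rw [mem_quasiInterval, hG.symm x p] at hp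
    linarith [hL.le_of_dist_le_one x y hxy, hG.nonneg p y]

/-- Any two points are the ends of a discrete rough geodesic. -/
def RoughlyGeodesic (X : Type*) [PseudoMetricSpace X] : Prop :=
  ∀ x y : X, ∃ (c : ℕ → X) (N : ℕ), c 0 = x ∧ c N = y ∧ IsRoughChain c 0 N

/-- The chain consists of the points at which `L` takes integer values. -/
lemma exists_isRoughChain_of_dist_le {T : Type*} {p : T → X} {L : T → ℝ} {a b : T}
    (hdist : ∀ s t, dist (p s) (p t) ≤ dist (L s) (L t)) (hrange : Icc (L a) (L b) ⊆ range L)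
    (hab : L a ≤ L b) (hnear : L b - L a ≤ dist (p a) (p b) + 1) :
    ∃ (c : ℕ → X) (N : ℕ), c 0 = p a ∧ c N = p b ∧ IsRoughChain c 0 N := by
  set ℓ := L b - L a with hℓ
  have hℓ0 : 0 ≤ ℓ := sub_nonneg.2 hab
  set N := ⌊ℓ⌋₊ + 1 with hN
  have hNlt : ℓ < N := by exact_mod_cast Nat.lt_floor_add_one ℓ
  have hNle : (N : ℝ) ≤ ℓ + 1 := by rw [hN]; push_cast; linarith [Nat.floor_le hℓ0]
  have hparam (i : ℕ) : ∃ t, L t = L a + min (i : ℝ) ℓ ∧ (i = 0 → t = a) ∧ (i = N → t = b) := by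
    rcases eq_or_ne i 0 with rfl | hi0
    · exact ⟨a, by simp [hℓ0], fun _ => rfl, fun h => by omega⟩
    rcases eq_or_ne i N with rfl | hiN
    · exact ⟨b, by rw [min_eq_right hNlt.le, hℓ]; ring, fun h => absurd h hi0, fun _ => rfl⟩
    · obtain ⟨t, ht⟩ := hrange (a := L a + min (i : ℝ) ℓ)
        ⟨by simp [hℓ0], by linarith [min_le_right (i : ℝ) ℓ]⟩
      exact ⟨t, ht, fun h => absurd h hi0, fun h => absurd h hiN⟩
  choose τ hτ hτ0 hτN using hparam
  have hup {i j : ℕ} (hij : i ≤ j) :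
      dist (p (τ i)) (p (τ j)) ≤ min (j : ℝ) ℓ - min (i : ℝ) ℓ := by
    have hmin : min (i : ℝ) ℓ ≤ min (j : ℝ) ℓ := min_le_min_right ℓ (Nat.cast_le.2 hij)
    refine (hdist _ _).trans_eq ?_
    rw [dist_comm, Real.dist_eq, hτ, hτ, add_sub_add_left_eq_sub, abs_of_nonneg (by linarith)]
  refine ⟨fun i => p (τ i), N, congrArg p (hτ0 0 rfl), congrArg p (hτN N rfl),
    fun i j _ hij hjN => ⟨(hup hij).trans ?_, ?_⟩⟩
  · have hij' : (i : ℝ) ≤ j := Nat.cast_le.2 hij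
    rcases min_cases (i : ℝ) ℓ with hi | hi <;> rcases min_cases (j : ℝ) ℓ with hj | hj <;> linarith
  · have hfirst := hup i.zero_le
    have hlast := hup hjN
    rw [hτ0 0 rfl, Nat.cast_zero, min_eq_left hℓ0] at hfirst
    rw [hτN N rfl, min_eq_right hNlt.le] at hlast
    have htriangle := dist_triangle4 (p a) (p (τ i)) (p (τ j)) (p b)
    have hi : min (i : ℝ) ℓ ≤ i := min_le_left _ _
    have hj : (j : ℝ) - 1 ≤ min (j : ℝ) ℓ :=
      le_min (by linarith) (by linarith [(Nat.cast_le (α := ℝ)).2 hjN])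
    linarith

lemma RoughlyGeodesic.exists_dist_add_dist_le (hX : RoughlyGeodesic X)
    (hG : IsHyperbolicGauge G K) (hL : CoarselyControls G L) (hK₁ : 0 ≤ K₁) :
    ∃ C : ℝ, 0 ≤ C ∧ ∀ x y, ∀ p ∈ quasiInterval G K₁ x y, dist x p + dist p y ≤ dist x y + C := by
  obtain ⟨T, hT, hclose⟩ := (hG.isSlimFamily hL).exists_staysClose
  have hK := hG.const_nonneg
  have hL0 := hL.const_nonneg
  refine ⟨2 * T + 2 + 2 * (L * (K₁ + 2 * K) + L), by positivity, fun x y p hp => ?_⟩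
  obtain ⟨q, hq, hpq⟩ := hG.exists_mem_quasiInterval_near hK₁ hp
  obtain ⟨c, N, rfl, rfl, hc⟩ := hX x y
  obtain ⟨i, ⟨-, hiN⟩, hqi⟩ := hclose N c 0 N hc N.zero_le (by omega) q hq
  have hpi : dist p (c i) ≤ L * (K₁ + 2 * K) + L + T :=
    (dist_triangle p q (c i)).trans (add_le_add (hL.dist_le_of_le hpq) hqi)
  have hstart := (hc 0 i le_rfl i.zero_le hiN).1
  have hend := (hc i N i.zero_le hiN le_rfl).1
  have htotal := (hc 0 N le_rfl N.zero_le le_rfl).2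
  have hleft := dist_triangle_right (c 0) p (c i)
  have hright := dist_triangle p (c i) (c N)
  push_cast at hstart htotal
  linarith

/-- The Gromov product `(x|y)_o` of a pseudometric space. -/
def gromovProduct (o x y : X) : ℝ := (dist x o + dist y o - dist x y) / 2

/-- Gromov hyperbolicity of a pseudometric space. -/
def GromovHyperbolic (X : Type*) [PseudoMetricSpace X] : Prop :=
  ∃ δ : ℝ, 0 ≤ δ ∧ ∀ x y z o : X,
    min (gromovProduct o x z) (gromovProduct o y z) - δ ≤ gromovProduct o x y

/-- An approximate `G`-centre `p` of `x`, `y`, `o` lies in a quasi-interval from `z` to `x` or to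
`y`. All these quasi-intervals are almost geodesic, which gives the four-point inequality. -/
theorem RoughlyGeodesic.gromovHyperbolic (hX : RoughlyGeodesic X) (hG : IsHyperbolicGauge G K)
    (hL : CoarselyControls G L) : GromovHyperbolic X := by
  have hK := hG.const_nonneg
  obtain ⟨C, hC, hbetween⟩ :=
    hX.exists_dist_add_dist_le hG hL (K₁ := 6 * K + K) (by linarith)
  have hmono := quasiInterval_mono (G := G) (show 6 * K ≤ 6 * K + K by linarith)
  refine ⟨2 * C, by linarith, fun x y z o => ?_⟩
  obtain ⟨p, hxy, hox, hoy⟩ := hG.exists_center x y o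
  have hx := hbetween _ _ _ (hmono _ _ hox)
  have hy := hbetween _ _ _ (hmono _ _ hoy)
  have hxpy := dist_triangle x p y
  have hopz := dist_triangle o p z
  rw [dist_comm x p] at hxpy
  unfold gromovProduct
  rw [dist_comm x o, dist_comm y o, dist_comm z o, sub_le_iff_le_add, min_le_iff]
  rcases hG.mem_quasiInterval_or hxy z with hz | hz
  · have hxz := hbetween _ _ _ hz
    rw [dist_comm x p] at hxz
    left
    linarith [dist_nonneg (x := p) (y := x)]
  · have hzy := hbetween _ _ _ hz
    rw [dist_comm z p, dist_comm z y] at hzy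
    right
    linarith [dist_nonneg (x := p) (y := y)]

end Comparison

/-! ### Hyperbolic fillings -/

section Filling

lemma exists_mul_le_four_mul {X : Type*} {r : X → X → ℝ} (hr : ∀ x y, 0 < r x y)
    (hsymm : ∀ x y, r x y = r y x) (htri : ∀ x y z, r x z ≤ r x y + r y z) (x y z w : X) :
    r x y * r z w ≤ 4 * (r x z * r y w) ∨ r x y * r z w ≤ 4 * (r x w * r y z) := by
  have hmul {a b c d : ℝ} (ha : 0 < a) (hb : 0 < b) (hac : a ≤ 2 * c) (hbd : b ≤ 2 * d) :
      a * b ≤ 4 * (c * d) := by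
    calc a * b ≤ (2 * c) * (2 * d) := by gcongr; linarith
      _ = 4 * (c * d) := by ring
  have hxzy := htri x z y
  have hxwy := htri x w y
  have hzxw := htri z x w
  have hzyw := htri z y w
  rw [hsymm z y] at hxzy hzyw
  rw [hsymm w y] at hxwy
  rw [hsymm z x] at hzxw
  -- Compare the smaller factor of one product with the smaller factor of the other.
  rcases le_total (min (r x z) (r y w)) (min (r x w) (r y z)) with hmin | hmin
  · right
    rcases le_min_iff.1 hmin with ⟨hw, hz⟩
    rcases min_choice (r x z) (r y w) with h | h <;> rw [h] at hw hz
    · rw [mul_comm (r x w)]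
      exact hmul (hr x y) (hr z w) (by linarith) (by linarith)
    · exact hmul (hr x y) (hr z w) (by linarith) (by linarith)
  · left
    rcases le_min_iff.1 hmin with ⟨hz, hw⟩
    rcases min_choice (r x w) (r y z) with h | h <;> rw [h] at hw hz
    · rw [mul_comm (r x z)]
      exact hmul (hr x y) (hr z w) (by linarith) (by linarith)
    · exact hmul (hr x y) (hr z w) (by linarith) (by linarith)

lemma log_le_log_add_log_of_le_mul {a b c : ℝ} (ha : 0 < a) (hb : 0 < b) (hc : 0 < c)
    (h : a ≤ b * c) : Real.log a ≤ Real.log b + Real.log c := by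
  rw [← Real.log_mul hb.ne' hc.ne']
  exact Real.log_le_log ha h

variable {X E : Type*} [PseudoMetricSpace E] {ι : X → E} {h : X → ℝ}

/-- The quasi-distance `|x - y| + h x ∨ h y` underlying the hyperbolic filling with height `h`,
where horizontal distances are measured through a map `ι` into a pseudometric space. -/
def heightDist (ι : X → E) (h : X → ℝ) (x y : X) : ℝ :=
  dist (ι x) (ι y) + max (h x) (h y)

/-- The gauge `2 log ((|x - y| + h x ∨ h y) / √(h x * h y))` of the hyperbolic filling with
height `h`. -/
def fillingGauge (ι : X → E) (h : X → ℝ) (x y : X) : ℝ :=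
  2 * Real.log (heightDist ι h x y) - Real.log (h x) - Real.log (h y)

lemma heightDist_comm (x y : X) : heightDist ι h x y = heightDist ι h y x := by
  rw [heightDist, heightDist, dist_comm, max_comm]

lemma fillingGauge_comm (x y : X) : fillingGauge ι h x y = fillingGauge ι h y x := by
  rw [fillingGauge, fillingGauge, heightDist_comm]
  ring

lemma left_le_heightDist (x y : X) : h x ≤ heightDist ι h x y :=
  (le_max_left _ _).trans (le_add_of_nonneg_left dist_nonneg)

lemma right_le_heightDist (x y : X) : h y ≤ heightDist ι h x y :=
  (le_max_right _ _).trans (le_add_of_nonneg_left dist_nonneg)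

lemma heightDist_pos (hpos : ∀ x, 0 < h x) (x y : X) : 0 < heightDist ι h x y :=
  (hpos x).trans_le (left_le_heightDist x y)

lemma dist_le_heightDist (hpos : ∀ x, 0 < h x) (x y : X) : dist (ι x) (ι y) ≤ heightDist ι h x y :=
  le_add_of_nonneg_right ((hpos x).le.trans (le_max_left _ _))

lemma heightDist_triangle (hpos : ∀ x, 0 < h x) (x y z : X) :
    heightDist ι h x z ≤ heightDist ι h x y + heightDist ι h y z := by
  have hmax : max (h x) (h z) ≤ max (h x) (h y) + max (h y) (h z) :=
    max_le (le_add_of_le_of_nonneg (le_max_left _ _) ((hpos y).le.trans (le_max_left _ _)))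
      (le_add_of_nonneg_of_le ((hpos y).le.trans (le_max_right _ _)) (le_max_right _ _))
  unfold heightDist
  linarith [dist_triangle (ι x) (ι y) (ι z)]

lemma log_left_le_log_heightDist (hpos : ∀ x, 0 < h x) (x y : X) :
    Real.log (h x) ≤ Real.log (heightDist ι h x y) :=
  Real.log_le_log (hpos x) (left_le_heightDist x y)

lemma log_right_le_log_heightDist (hpos : ∀ x, 0 < h x) (x y : X) :
    Real.log (h y) ≤ Real.log (heightDist ι h x y) :=
  Real.log_le_log (hpos y) (right_le_heightDist x y)

lemma fillingGauge_nonneg (hpos : ∀ x, 0 < h x) (x y : X) : 0 ≤ fillingGauge ι h x y := by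
  unfold fillingGauge
  linarith [log_left_le_log_heightDist (ι := ι) hpos x y,
    log_right_le_log_heightDist (ι := ι) hpos x y]

lemma fillingGauge_self (x : X) : fillingGauge ι h x x = 0 := by
  simp only [fillingGauge, heightDist, dist_self, max_self, zero_add]
  ring

lemma fillingGauge_four_point (hpos : ∀ x, 0 < h x) (x y z w : X) :
    fillingGauge ι h x y + fillingGauge ι h z w ≤
      max (fillingGauge ι h x z + fillingGauge ι h y w)
        (fillingGauge ι h x w + fillingGauge ι h y z) + 2 * Real.log 4 := by
  have hr := heightDist_pos (ι := ι) hpos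
  have hlog {a b c d : ℝ} (ha : 0 < a) (hb : 0 < b) (hc : 0 < c) (hd : 0 < d)
      (hle : a * b ≤ 4 * (c * d)) :
      Real.log a + Real.log b ≤ Real.log 4 + (Real.log c + Real.log d) := by
    rw [← Real.log_mul ha.ne' hb.ne', ← Real.log_mul hc.ne' hd.ne']
    exact log_le_log_add_log_of_le_mul (by positivity) (by norm_num) (by positivity) hle
  rw [← sub_le_iff_le_add, le_max_iff]
  unfold fillingGauge
  rcases exists_mul_le_four_mul hr heightDist_comm (heightDist_triangle hpos) x y z w with hle | hle
  · left
    linarith [hlog (hr _ _) (hr _ _) (hr _ _) (hr _ _) hle]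
  · right
    linarith [hlog (hr _ _) (hr _ _) (hr _ _) (hr _ _) hle]

/-- The height of `x` is comparable to `s`. -/
def HasHeight (h : X → ℝ) (C s : ℝ) (x : X) : Prop :=
  s ≤ C * h x ∧ h x ≤ C * s

/-- Up to height `S`, every point lies roughly below points of every larger height `s`, at
horizontal distance of order `s`. -/
def HasLifts (ι : X → E) (h : X → ℝ) (C S : ℝ) : Prop :=
  ∀ x s, h x ≤ s → s ≤ S → ∃ p, HasHeight h C s p ∧ dist (ι x) (ι p) ≤ C * s

variable {C S : ℝ}

lemma HasLifts.exists_between_of_le (hlift : HasLifts ι h C S) (hpos : ∀ x, 0 < h x) (hC : 1 ≤ C)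
    (hS : ∀ x y, heightDist ι h x y ≤ S) {x y : X} {t : ℝ} (ht : 0 ≤ t)
    (htx : t ≤ Real.log (heightDist ι h x y) - Real.log (h x)) :
    ∃ p, fillingGauge ι h x p ≤ t + (2 * Real.log (3 * C) + Real.log C) ∧
      fillingGauge ι h p y ≤ fillingGauge ι h x y - t + (2 * Real.log (3 * C) + Real.log C) := by
  have hx := hpos x
  have hr := heightDist_pos (ι := ι) hpos
  obtain ⟨s, hs⟩ : ∃ s, s = h x * Real.exp t := ⟨_, rfl⟩
  have hs0 : 0 < s := hs ▸ by positivity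
  have hlogs : Real.log s = Real.log (h x) + t := by
    rw [hs, Real.log_mul hx.ne' (by positivity), Real.log_exp]
  have hxs : h x ≤ s := hs ▸ le_mul_of_one_le_right hx.le (Real.one_le_exp ht)
  have hsr : s ≤ heightDist ι h x y := by
    rw [← Real.log_le_log_iff hs0 (hr x y)]
    linarith
  obtain ⟨p, ⟨hsp, hps⟩, hxp⟩ := hlift x s hxs (hsr.trans (hS x y))
  have hlogp := log_le_log_add_log_of_le_mul hs0 (by linarith) (hpos p) hsp
  have hCs : s ≤ C * s := le_mul_of_one_le_left hs0.le hC
  have hCr : heightDist ι h x y ≤ C * heightDist ι h x y := le_mul_of_one_le_left (hr x y).le hC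
  have hCsr : C * s ≤ C * heightDist ι h x y := by gcongr
  have hxp' : heightDist ι h x p ≤ 3 * C * s := by
    have hmax : max (h x) (h p) ≤ C * s := max_le (hxs.trans hCs) hps
    unfold heightDist
    linarith
  have hpy' : heightDist ι h p y ≤ 3 * C * heightDist ι h x y := by
    have hmax : max (h p) (h y) ≤ C * heightDist ι h x y :=
      max_le (hps.trans hCsr) ((right_le_heightDist x y).trans hCr)
    have hdist := dist_triangle_left (ι p) (ι y) (ι x)
    rw [heightDist]
    linarith [dist_le_heightDist (ι := ι) hpos x y]
  have hlogxp := log_le_log_add_log_of_le_mul (hr x p) (by positivity) hs0 hxp'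
  have hlogpy := log_le_log_add_log_of_le_mul (hr p y) (by positivity) (hr x y) hpy'
  refine ⟨p, ?_, ?_⟩ <;> unfold fillingGauge <;> linarith

theorem HasLifts.isHyperbolicGauge (hlift : HasLifts ι h C S) (hpos : ∀ x, 0 < h x) (hC : 1 ≤ C)
    (hS : ∀ x y, heightDist ι h x y ≤ S) :
    IsHyperbolicGauge (fillingGauge ι h)
      (2 * Real.log (3 * C) + Real.log C + 2 * Real.log 4) := by
  have hlogC : 0 ≤ Real.log C := Real.log_nonneg hC
  have hlog3C : 0 ≤ Real.log (3 * C) := Real.log_nonneg (by linarith)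
  have hlog4 : 0 ≤ Real.log 4 := Real.log_nonneg (by norm_num)
  refine ⟨by positivity, fillingGauge_nonneg hpos, fillingGauge_comm, fillingGauge_self,
    fun x y z w => (fillingGauge_four_point hpos x y z w).trans (by linarith),
    fun x y t ht hty => ?_⟩
  by_cases htx : t ≤ Real.log (heightDist ι h x y) - Real.log (h x)
  · obtain ⟨p, hxp, hpy⟩ := hlift.exists_between_of_le hpos hC hS ht htx
    exact ⟨p, by linarith, by linarith⟩
  · obtain ⟨p, hyp, hpx⟩ := hlift.exists_between_of_le (x := y) (y := x)
      (t := fillingGauge ι h x y - t) hpos hC hS (by linarith)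
      (by rw [heightDist_comm y x]; unfold fillingGauge; linarith)
    rw [fillingGauge_comm y p] at hyp
    rw [fillingGauge_comm p x, fillingGauge_comm y x] at hpx
    exact ⟨p, by linarith, by linarith⟩

variable [PseudoMetricSpace X]

/-- Points whose heights and horizontal distance are of the same order `s` are at bounded
distance. -/
def BoundedAtScale (ι : X → E) (h : X → ℝ) (C B : ℝ) : Prop :=
  ∀ x y s, 0 < s → HasHeight h C s x → HasHeight h C s y → dist (ι x) (ι y) ≤ C * s →
    dist x y ≤ B

variable {B : ℝ}

lemma BoundedAtScale.dist_lift_le_of_le_two_mul (hB : BoundedAtScale ι h (4 * C) B)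
    (hpos : ∀ x, 0 < h x) (hC : 1 ≤ C) {x p : X} {s : ℝ} (hxs : h x ≤ s) (hsx : s ≤ 2 * h x)
    (hp : HasHeight h C s p) (hxp : dist (ι x) (ι p) ≤ C * s) : dist x p ≤ B := by
  have hx := hpos x
  have hCx : h x ≤ C * h x := le_mul_of_one_le_left hx.le hC
  have hCs : s ≤ C * s := le_mul_of_one_le_left (hx.le.trans hxs) hC
  have hCp : 0 < C * h p := mul_pos (by linarith) (hpos p)
  exact hB x p s (by linarith) ⟨by linarith, by linarith⟩ ⟨by linarith [hp.1], by linarith [hp.2]⟩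
    (by linarith)

/-- Climb from `x` by doubling the height, with steps of bounded length. -/
lemma HasLifts.dist_lift_le (hlift : HasLifts ι h C S) (hB : BoundedAtScale ι h (4 * C) B)
    (hpos : ∀ x, 0 < h x) (hC : 1 ≤ C) (n : ℕ) {x p : X} {s : ℝ} (hxs : h x ≤ s) (hsS : s ≤ S)
    (hsn : s ≤ 2 ^ n * h x) (hp : HasHeight h C s p) (hxp : dist (ι x) (ι p) ≤ C * s) :
    dist x p ≤ B * (n + 1) := by
  have hx := hpos x
  induction n generalizing p s with
  | zero =>
    simpa using hB.dist_lift_le_of_le_two_mul hpos hC hxs (by linarith) hp hxp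
  | succ n ih =>
    by_cases hsx : s ≤ 2 * h x
    · have hbase := hB.dist_lift_le_of_le_two_mul hpos hC hxs hsx hp hxp
      refine hbase.trans (le_mul_of_one_le_right (dist_nonneg.trans hbase) ?_)
      push_cast
      linarith [Nat.cast_nonneg (α := ℝ) n]
    · obtain ⟨q, hq, hxq⟩ := hlift x (s / 2) (by linarith) (by linarith)
      have hclimb := ih (by linarith) (by linarith) (by rw [pow_succ] at hsn; linarith) hq hxq
      have hstep : dist q p ≤ B := by
        have hs : 0 < s := hx.trans_le hxs
        have hCs : 0 < C * s := by positivity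
        have hCq : 0 < C * h q := by have := hpos q; positivity
        have hCp : 0 < C * h p := by have := hpos p; positivity
        refine hB q p s (by linarith) ⟨by linarith [hq.1], by linarith [hq.2]⟩
          ⟨by linarith [hp.1], by linarith [hp.2]⟩ ?_
        linarith [dist_triangle_left (ι q) (ι p) (ι x)]
      push_cast
      linarith [dist_triangle x q p]

lemma HasLifts.dist_lift_le_log (hlift : HasLifts ι h C S) (hB : BoundedAtScale ι h (4 * C) B)
    (hB0 : 0 ≤ B) (hpos : ∀ x, 0 < h x) (hC : 1 ≤ C) {x p : X} {s : ℝ} (hxs : h x ≤ s)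
    (hsS : s ≤ S) (hp : HasHeight h C s p) (hxp : dist (ι x) (ι p) ≤ C * s) :
    dist x p ≤ B * ((Real.log s - Real.log (h x)) / Real.log 2 + 2) := by
  have hx := hpos x
  have hs : 0 < s := hx.trans_le hxs
  have hlog2 : 0 < Real.log 2 := Real.log_pos (by norm_num)
  have hratio : 0 ≤ (Real.log s - Real.log (h x)) / Real.log 2 :=
    div_nonneg (by linarith [Real.log_le_log hx hxs]) hlog2.le
  refine (hlift.dist_lift_le hB hpos hC ⌈(Real.log s - Real.log (h x)) / Real.log 2⌉₊ hxs hsS ?_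
    hp hxp).trans ?_
  · rw [← Real.log_le_log_iff hs (by positivity), Real.log_mul (by positivity) hx.ne',
      Real.log_pow, ← sub_le_iff_le_add, ← div_le_iff₀ hlog2]
    exact Nat.le_ceil _
  · exact mul_le_mul_of_nonneg_left (by linarith [Nat.ceil_lt_add_one hratio]) hB0

lemma HasLifts.dist_le_fillingGauge (hlift : HasLifts ι h C S)
    (hB : BoundedAtScale ι h (4 * C) B) (hB0 : 0 ≤ B) (hpos : ∀ x, 0 < h x) (hC : 1 ≤ C)
    (hS : ∀ x y, heightDist ι h x y ≤ S) (x y : X) :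
    dist x y ≤ B / Real.log 2 * fillingGauge ι h x y + 5 * B := by
  obtain ⟨r, hr⟩ : ∃ r, r = heightDist ι h x y := ⟨_, rfl⟩
  have hr0 : 0 < r := hr ▸ heightDist_pos hpos x y
  have hrS : r ≤ S := hr ▸ hS x y
  have hxr : h x ≤ r := hr ▸ left_le_heightDist x y
  have hyr : h y ≤ r := hr ▸ right_le_heightDist x y
  obtain ⟨p, hp, hxp⟩ := hlift x r hxr hrS
  obtain ⟨q, hq, hyq⟩ := hlift y r hyr hrS
  have hpq : dist p q ≤ B := by
    have hCr : r ≤ C * r := le_mul_of_one_le_left hr0.le hC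
    have hCp : 0 < C * h p := by have := hpos p; positivity
    have hCq : 0 < C * h q := by have := hpos q; positivity
    have hdist := dist_comm (ι p) (ι x) ▸ dist_triangle4 (ι p) (ι x) (ι y) (ι q)
    refine hB p q r hr0 ⟨by linarith [hp.1], by linarith [hp.2]⟩
      ⟨by linarith [hq.1], by linarith [hq.2]⟩ ?_
    linarith [hr ▸ dist_le_heightDist (ι := ι) hpos x y]
  calc dist x y ≤ dist x p + dist p q + dist y q := dist_comm y q ▸ dist_triangle4 x p q y
    _ ≤ B * ((Real.log r - Real.log (h x)) / Real.log 2 + 2) + B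
        + B * ((Real.log r - Real.log (h y)) / Real.log 2 + 2) :=
      add_le_add_three (hlift.dist_lift_le_log hB hB0 hpos hC hxr hrS hp hxp) hpq
        (hlift.dist_lift_le_log hB hB0 hpos hC hyr hrS hq hyq)
    _ = B / Real.log 2 * fillingGauge ι h x y + 5 * B := by
      rw [fillingGauge, ← hr]
      ring

theorem HasLifts.gromovHyperbolic (hlift : HasLifts ι h C S)
    (hB : BoundedAtScale ι h (4 * C) B) (hB0 : 0 ≤ B) (hpos : ∀ x, 0 < h x) (hC : 1 ≤ C)
    (hS : ∀ x y, heightDist ι h x y ≤ S) (hX : RoughlyGeodesic X) {L : ℝ}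
    (hL : ∀ x y : X, dist x y ≤ 1 → fillingGauge ι h x y ≤ L) : GromovHyperbolic X := by
  have hslope : 0 ≤ B / Real.log 2 := div_nonneg hB0 (Real.log_nonneg (by norm_num))
  refine hX.gromovHyperbolic (hlift.isHyperbolicGauge hpos hC hS)
    (L := max (B / Real.log 2 + 5 * B) L) ⟨le_max_of_le_left (by positivity), fun x y => ?_,
      fun x y hxy => (hL x y hxy).trans (le_max_right _ _)⟩
  refine (hlift.dist_le_fillingGauge hB hB0 hpos hC hS x y).trans ?_
  have hmax := le_max_left (B / Real.log 2 + 5 * B) L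
  have hG := fillingGauge_nonneg (ι := ι) hpos x y
  gcongr <;> linarith

end Filling

/-! ### Conformal harmonic disks -/

section Disk

variable {d m : ℕ}

lemma isOpen_unitDisk : IsOpen unitDisk := isOpen_ball

lemma zero_mem_unitDisk : (0 : Euc 2) ∈ unitDisk := mem_ball_self one_pos

lemma mem_unitDisk_iff {z : Euc 2} : z ∈ unitDisk ↔ ‖z‖ < 1 := mem_ball_zero_iff

lemma smul_mem_unitDisk {s : ℝ} (hs : |s| ≤ 1) {z : Euc 2} (hz : z ∈ unitDisk) :
    s • z ∈ unitDisk := by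
  rw [mem_unitDisk_iff, norm_smul, Real.norm_eq_abs] at *
  exact (mul_le_of_le_one_left (norm_nonneg z) hs).trans_lt hz

lemma pd_congr {f g : Euc 2 → Euc d} {z : Euc 2} (h : f =ᶠ[nhds z] g) (i : Fin 2) :
    pd i f z = pd i g z := by
  rw [pd, pd, h.fderiv_eq]

lemma pd_similarity_comp {f : Euc 2 → Euc d} (A : Euc d →L[ℝ] Euc m) (b : Euc m) (c : Euc d)
    {s : ℝ} {z : Euc 2} (hf : DifferentiableAt ℝ f (s • z)) (i : Fin 2) :
    pd i (fun z => b + A (f (s • z) - c)) z = s • A (pd i f (s • z)) := by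
  have hsmul : HasFDerivAt (fun z : Euc 2 => s • z) (s • ContinuousLinearMap.id ℝ (Euc 2)) z :=
    (hasFDerivAt_id z).const_smul s
  have hcomp : HasFDerivAt (fun z => b + A (f (s • z) - c))
      (A ∘L fderiv ℝ f (s • z) ∘L (s • ContinuousLinearMap.id ℝ (Euc 2))) z :=
    (A.hasFDerivAt.comp z ((hf.hasFDerivAt.comp z hsmul).sub_const c)).const_add b
  rw [pd, hcomp.fderiv]
  simp [pd]

namespace ConformalHarmonicOnDisk

variable {f : Euc 2 → Euc d} {z : Euc 2}

lemma contDiffAt (hf : ConformalHarmonicOnDisk f) (hz : z ∈ unitDisk) : ContDiffAt ℝ 2 f z :=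
  hf.1.contDiffAt (isOpen_unitDisk.mem_nhds hz)

lemma differentiableAt (hf : ConformalHarmonicOnDisk f) (hz : z ∈ unitDisk) :
    DifferentiableAt ℝ f z :=
  (hf.contDiffAt hz).differentiableAt (by norm_num)

lemma differentiableAt_pd (hf : ConformalHarmonicOnDisk f) (i : Fin 2) (hz : z ∈ unitDisk) :
    DifferentiableAt ℝ (pd i f) z :=
  (((hf.contDiffAt hz).fderiv_right (m := 1) (by norm_num)).differentiableAt
    (by norm_num)).clm_apply (differentiableAt_const _)

lemma pd_pd_add (hf : ConformalHarmonicOnDisk f) (hz : z ∈ unitDisk) :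
    pd 0 (pd 0 f) z + pd 1 (pd 1 f) z = 0 :=
  hf.2.1 z hz

lemma norm_pd_eq (hf : ConformalHarmonicOnDisk f) (hz : z ∈ unitDisk) :
    ‖pd 0 f z‖ = ‖pd 1 f z‖ :=
  (hf.2.2 z hz).1

lemma inner_pd (hf : ConformalHarmonicOnDisk f) (hz : z ∈ unitDisk) :
    ⟪pd 0 f z, pd 1 f z⟫ = 0 :=
  (hf.2.2 z hz).2

lemma similarity_comp (hf : ConformalHarmonicOnDisk f) {s : ℝ} (hs : |s| ≤ 1)
    (A : Euc d →L[ℝ] Euc m) {l : ℝ} (hA : ∀ v w, ⟪A v, A w⟫ = l * ⟪v, w⟫) (b : Euc m)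
    (c : Euc d) : ConformalHarmonicOnDisk (fun z => b + A (f (s • z) - c)) := by
  have hpd (i : Fin 2) {z : Euc 2} (hz : z ∈ unitDisk) :
      pd i (fun z => b + A (f (s • z) - c)) z = s • A (pd i f (s • z)) :=
    pd_similarity_comp A b c (hf.differentiableAt (smul_mem_unitDisk hs hz)) i
  have hpd_pd (i : Fin 2) {z : Euc 2} (hz : z ∈ unitDisk) :
      pd i (pd i fun z => b + A (f (s • z) - c)) z = s • s • A (pd i (pd i f) (s • z)) := by
    have hnhds : pd i (fun z => b + A (f (s • z) - c)) =ᶠ[nhds z]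
        fun z => 0 + (s • A) (pd i f (s • z) - 0) := by
      filter_upwards [isOpen_unitDisk.mem_nhds hz] with w hw
      rw [hpd i hw, zero_add, sub_zero, smul_apply]
    rw [pd_congr hnhds, pd_similarity_comp _ _ _
      (hf.differentiableAt_pd i (smul_mem_unitDisk hs hz)), smul_apply]
  refine ⟨contDiffOn_const.add (A.contDiff.comp_contDiffOn ((hf.1.comp
    (contDiff_const_smul s).contDiffOn fun z hz => smul_mem_unitDisk hs hz).sub
    contDiffOn_const)), fun z hz => ?_, fun z hz => ?_⟩
  · change pd 0 (pd 0 _) z + pd 1 (pd 1 _) z = 0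
    rw [hpd_pd 0 hz, hpd_pd 1 hz, ← smul_add, ← smul_add, ← map_add,
      hf.pd_pd_add (smul_mem_unitDisk hs hz), map_zero, smul_zero, smul_zero]
  · rw [hpd 0 hz, hpd 1 hz, norm_smul, norm_smul, real_inner_smul_left, real_inner_smul_right, hA,
      hf.inner_pd (smul_mem_unitDisk hs hz), norm_eq_sqrt_real_inner (A _),
      norm_eq_sqrt_real_inner (A _), hA, hA, real_inner_self_eq_norm_sq,
      real_inner_self_eq_norm_sq, hf.norm_pd_eq (smul_mem_unitDisk hs hz)]
    simp

end ConformalHarmonicOnDisk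

/-- The affine disk `ζ ↦ x + ζ₀ a + ζ₁ b`. -/
def flatDisk (x a b : Euc d) (z : Euc 2) : Euc d := x + (z 0 • a + z 1 • b)

lemma pd_flatDisk (x a b : Euc d) (i : Fin 2) (z : Euc 2) :
    pd i (flatDisk x a b) z = ![a, b] i := by
  have hderiv : HasFDerivAt (flatDisk x a b) ((EuclideanSpace.proj (𝕜 := ℝ) 0).smulRight a +
      (EuclideanSpace.proj (𝕜 := ℝ) 1).smulRight b) z :=
    ((((EuclideanSpace.proj (𝕜 := ℝ) (0 : Fin 2)).hasFDerivAt.smul_const a).add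
      ((EuclideanSpace.proj (𝕜 := ℝ) (1 : Fin 2)).hasFDerivAt.smul_const b))).const_add x
  rw [pd, hderiv.fderiv]
  fin_cases i <;> simp

lemma conformalHarmonicOnDisk_flatDisk (x : Euc d) {a b : Euc d} (hnorm : ‖a‖ = ‖b‖)
    (hinner : ⟪a, b⟫ = 0) : ConformalHarmonicOnDisk (flatDisk x a b) := by
  refine ⟨by unfold flatDisk; fun_prop, fun z _ => ?_, fun z _ => by simp [pd_flatDisk, *]⟩
  rw [funext (pd_flatDisk x a b 0), funext (pd_flatDisk x a b 1)]
  simp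

lemma norm_smul_add_smul_of_conformal {a b : Euc d} (hnorm : ‖a‖ = ‖b‖) (hinner : ⟪a, b⟫ = 0)
    (z : Euc 2) : ‖z 0 • a + z 1 • b‖ = ‖z‖ * ‖a‖ := by
  rw [← sq_eq_sq₀ (norm_nonneg _) (by positivity), norm_add_sq_real, real_inner_smul_left,
    real_inner_smul_right, hinner, norm_smul, norm_smul, ← hnorm, mul_pow, mul_pow, mul_pow,
    EuclideanSpace.real_norm_sq_eq z, Fin.sum_univ_two, Real.norm_eq_abs, Real.norm_eq_abs,
    sq_abs, sq_abs]
  ring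

end Disk

lemma exists_norm_eq_one_forall_inner_eq_zero {E : Type*} [NormedAddCommGroup E]
    [InnerProductSpace ℝ E] [FiniteDimensional ℝ E] (s : Finset E)
    (hs : s.card < Module.finrank ℝ E) : ∃ n : E, ‖n‖ = 1 ∧ ∀ v ∈ s, ⟪v, n⟫ = 0 := by
  have hspan : Module.finrank ℝ (Submodule.span ℝ (s : Set E)) ≤ s.card :=
    finrank_span_finset_le_card s
  have hsum := Submodule.finrank_add_finrank_orthogonal (Submodule.span ℝ (s : Set E))
  have hne : (Submodule.span ℝ (s : Set E))ᗮ ≠ ⊥ := by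
    intro hbot
    rw [hbot, finrank_bot] at hsum
    omega
  obtain ⟨n, hn, hn0⟩ := Submodule.exists_mem_ne_zero_of_ne_bot hne
  refine ⟨‖n‖⁻¹ • n, norm_smul_inv_norm hn0, fun v hv => ?_⟩
  rw [real_inner_smul_right, (Submodule.mem_orthogonal _ n).1 hn v (Submodule.subset_span hv),
    mul_zero]

/-! ### The minimal metric -/

section MinMetric

variable {d : ℕ} {D : Set (Euc d)} {x v : Euc d} {f : Euc 2 → Euc d} {r R : ℝ}

/-- `f` is a competitor in the definition of the minimal metric: a conformal harmonic disk in `D`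
centred at `x`. -/
structure IsCenteredDisk (D : Set (Euc d)) (x : Euc d) (f : Euc 2 → Euc d) : Prop where
  conformalHarmonic : ConformalHarmonicOnDisk f
  mapsTo : MapsTo f unitDisk D
  map_zero : f 0 = x

lemma minMetric_nonneg (D : Set (Euc d)) (x v : Euc d) : 0 ≤ minMetric D x v := by
  refine Real.sInf_nonneg ?_
  rintro _ ⟨r, hr, rfl, -⟩
  positivity

lemma IsCenteredDisk.minMetric_le (hf : IsCenteredDisk D x f) (hr : 0 < r)
    (hfv : pd 0 f 0 = r • v) : minMetric D x v ≤ 1 / r := by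
  refine csInf_le ⟨0, ?_⟩ ⟨r, hr, rfl, f, hf.1, hf.2, hf.3, hfv⟩
  rintro _ ⟨r, hr, rfl, -⟩
  positivity

lemma isCenteredDisk_const (hx : x ∈ D) : IsCenteredDisk D x (flatDisk x 0 0) :=
  ⟨conformalHarmonicOnDisk_flatDisk x rfl (inner_zero_left 0), fun z _ => by simpa [flatDisk],
    by simp [flatDisk]⟩

lemma minMetric_zero (hx : x ∈ D) : minMetric D x 0 = 0 := by
  refine le_antisymm (le_of_forall_pos_le_add fun ε hε => ?_) (minMetric_nonneg _ _ _)
  simpa using (isCenteredDisk_const hx).minMetric_le (r := 1 / ε) (v := 0) (by positivity)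
    (by simp [pd_flatDisk])

lemma isCenteredDisk_flatDisk {a b : Euc d} (hR : 0 < R) (ha : ‖a‖ = R) (hb : ‖b‖ = R)
    (hab : ⟪a, b⟫ = 0) (hD : ∀ p ∈ Submodule.span ℝ {a, b}, ‖p‖ < R → x + p ∈ D) :
    IsCenteredDisk D x (flatDisk x a b) := by
  refine ⟨conformalHarmonicOnDisk_flatDisk x (ha.trans hb.symm) hab, fun z hz => hD _ ?_ ?_,
    by simp [flatDisk]⟩
  · exact Submodule.mem_span_pair.2 ⟨z 0, z 1, rfl⟩
  · rw [norm_smul_add_smul_of_conformal (ha.trans hb.symm) hab, ha]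
    exact mul_lt_of_lt_one_left hR (mem_unitDisk_iff.1 hz)

lemma exists_isCenteredDisk_of_flat {w : Euc d} (hR : 0 < R) (hv : v ≠ 0) (hw : ‖w‖ = 1)
    (hvw : ⟪v, w⟫ = 0) (hD : ∀ p ∈ Submodule.span ℝ {v, w}, ‖p‖ < R → x + p ∈ D) :
    ∃ f, IsCenteredDisk D x f ∧ pd 0 f 0 = (R / ‖v‖) • v := by
  have hv0 : ‖v‖ ≠ 0 := norm_ne_zero_iff.2 hv
  refine ⟨_, isCenteredDisk_flatDisk (a := (R / ‖v‖) • v) (b := R • w) hR ?_ ?_ ?_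
    fun p hp => hD p ?_, pd_flatDisk _ _ _ _ _⟩
  · rw [norm_smul, norm_div, norm_norm, div_mul_cancel₀ _ hv0, Real.norm_of_nonneg hR.le]
  · rw [norm_smul, hw, mul_one, Real.norm_of_nonneg hR.le]
  · rw [real_inner_smul_left, real_inner_smul_right, hvw, mul_zero, mul_zero]
  · refine Submodule.span_le.2 ?_ hp
    rintro _ (rfl | rfl) <;>
      exact Submodule.smul_mem _ _ (Submodule.subset_span (by simp))

lemma minMetric_le_of_flat {w : Euc d} (hR : 0 < R) (hw : ‖w‖ = 1) (hvw : ⟪v, w⟫ = 0)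
    (hD : ∀ p ∈ Submodule.span ℝ {v, w}, ‖p‖ < R → x + p ∈ D) :
    minMetric D x v ≤ ‖v‖ / R := by
  rcases eq_or_ne v 0 with rfl | hv
  · have hx : x ∈ D := by simpa [hR] using hD 0 (Submodule.zero_mem _)
    simp [minMetric_zero hx]
  · obtain ⟨f, hf, hfv⟩ := exists_isCenteredDisk_of_flat hR hv hw hvw hD
    exact (hf.minMetric_le (div_pos hR (norm_pos_iff.2 hv)) hfv).trans_eq (one_div_div _ _)

lemma exists_orthogonal_unit (hd : 2 ≤ d) (v : Euc d) : ∃ w : Euc d, ‖w‖ = 1 ∧ ⟪v, w⟫ = 0 := by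
  simpa using exists_norm_eq_one_forall_inner_eq_zero {v}
    (by rw [finrank_euclideanSpace_fin, Finset.card_singleton]; omega)

lemma minMetric_le_of_ball_subset (hd : 2 ≤ d) (hR : 0 < R) (hD : ball x R ⊆ D) :
    minMetric D x v ≤ ‖v‖ / R := by
  obtain ⟨w, hw, hvw⟩ := exists_orthogonal_unit hd v
  exact minMetric_le_of_flat hR hw hvw fun p _ hp => hD (by simpa using hp)

lemma exists_isCenteredDisk (hd : 2 ≤ d) (hD : IsOpen D) (hx : x ∈ D) (v : Euc d) :
    ∃ r : ℝ, 0 < r ∧ ∃ f, IsCenteredDisk D x f ∧ pd 0 f 0 = r • v := by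
  rcases eq_or_ne v 0 with rfl | hv
  · exact ⟨1, one_pos, _, isCenteredDisk_const hx, by simp [pd_flatDisk]⟩
  · obtain ⟨R, hR, hball⟩ := Metric.isOpen_iff.1 hD x hx
    obtain ⟨w, hw, hvw⟩ := exists_orthogonal_unit hd v
    exact ⟨R / ‖v‖, div_pos hR (norm_pos_iff.2 hv), exists_isCenteredDisk_of_flat hR hv hw hvw
      fun p _ hp => hball (by simpa using hp)⟩

lemma le_minMetric (hd : 2 ≤ d) (hD : IsOpen D) (hx : x ∈ D) {c : ℝ}
    (hc : ∀ r : ℝ, 0 < r → ∀ f, IsCenteredDisk D x f → pd 0 f 0 = r • v → c ≤ 1 / r) :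
    c ≤ minMetric D x v := by
  obtain ⟨r, hr, f, hf, hfv⟩ := exists_isCenteredDisk hd hD hx v
  refine le_csInf ⟨_, r, hr, rfl, f, hf.1, hf.2, hf.3, hfv⟩ ?_
  rintro _ ⟨r, hr, rfl, f, hf, hfD, hfx, hfv⟩
  exact hc r hr f ⟨hf, hfD, hfx⟩ hfv

lemma exists_isCenteredDisk_of_minMetric_lt (hd : 2 ≤ d) (hD : IsOpen D) (hx : x ∈ D) {c : ℝ}
    (hc : minMetric D x v < c) :
    ∃ r : ℝ, 0 < r ∧ 1 / r < c ∧ ∃ f, IsCenteredDisk D x f ∧ pd 0 f 0 = r • v := by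
  by_contra! hle
  exact hc.not_ge (le_minMetric hd hD hx fun r hr f hf hfv =>
    le_of_not_gt fun hrc => hle r hr hrc f hf hfv)

lemma minMetric_smul (D : Set (Euc d)) (x v : Euc d) {c : ℝ} (hc : 0 < c) :
    minMetric D x (c • v) = c * minMetric D x v := by
  rw [minMetric, minMetric, ← smul_eq_mul, ← Real.sInf_smul_of_nonneg hc.le]
  congr 1
  ext a
  rw [Set.mem_smul_set]
  constructor
  · rintro ⟨r, hr, rfl, f, hf, hfD, hfx, hfv⟩
    exact ⟨1 / (r * c), ⟨r * c, by positivity, rfl, f, hf, hfD, hfx, by rw [hfv, mul_smul]⟩,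
      by rw [smul_eq_mul]; field_simp⟩
  · rintro ⟨_, ⟨r, hr, rfl, f, hf, hfD, hfx, hfv⟩, rfl⟩
    exact ⟨r / c, by positivity, by rw [smul_eq_mul]; field_simp, f, hf, hfD, hfx,
      by rw [hfv, smul_smul, div_mul_cancel₀ _ hc.ne']⟩

lemma minMetric_neg (hd : 2 ≤ d) (hD : IsOpen D) (hx : x ∈ D) (v : Euc d) :
    minMetric D x (-v) = minMetric D x v := by
  suffices hle : ∀ v, minMetric D x (-v) ≤ minMetric D x v from
    (hle v).antisymm (by simpa using hle (-v))
  refine fun v => le_minMetric hd hD hx fun r hr f hf hfv => ?_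
  have hone : |(-1 : ℝ)| ≤ 1 := by simp
  refine IsCenteredDisk.minMetric_le (f := fun z => x + ContinuousLinearMap.id ℝ _
    (f ((-1 : ℝ) • z) - x)) ⟨?_, fun z hz => ?_, by simp [hf.map_zero]⟩ hr ?_
  · exact hf.conformalHarmonic.similarity_comp hone _ (l := 1) (by simp) x x
  · simpa using hf.mapsTo (smul_mem_unitDisk hone hz)
  · rw [pd_similarity_comp _ _ _ (by
      simpa using hf.conformalHarmonic.differentiableAt zero_mem_unitDisk)]
    simp [hfv]

lemma norm_le_mul_minMetric (hd : 2 ≤ d) (hD : IsOpen D) (hx : x ∈ D) {F : Type*}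
    [SeminormedAddCommGroup F] [NormedSpace ℝ F] (T : Euc d →L[ℝ] F) {K : ℝ} (hK : 0 ≤ K)
    (hT : ∀ f, IsCenteredDisk D x f → ‖T (pd 0 f 0)‖ ≤ K) (v : Euc d) :
    ‖T v‖ ≤ K * minMetric D x v := by
  refine le_mul_of_forall_lt₀ fun K' hKK' c hc => ?_
  obtain ⟨r, hr, hrc, f, hf, hfv⟩ := exists_isCenteredDisk_of_minMetric_lt hd hD hx hc
  have hTf := hT f hf
  rw [hfv, map_smul, norm_smul, Real.norm_of_nonneg hr.le] at hTf
  calc ‖T v‖ ≤ K * (1 / r) := by rwa [mul_one_div, le_div_iff₀' hr]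
    _ ≤ K' * c := mul_le_mul hKK'.le hrc.le (by positivity) (hK.trans hKK'.le)

end MinMetric

/-! ### Upper semicontinuity of the minimal metric -/

section Similarity

variable {E : Type*} [NormedAddCommGroup E] [InnerProductSpace ℝ E]

lemma reflection_orthogonal_singleton_apply (u y : E) :
    (ℝ ∙ u)ᗮ.reflection y = y - (2 * (⟪u, y⟫ / ‖u‖ ^ 2)) • u := by
  rw [Submodule.reflection_orthogonal_apply, Submodule.reflection_singleton_apply]
  simp [mul_smul, two_smul]

/-- The rescaled product of two reflections which takes `v` to `v'`. It depends continuously on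
`v'` and is the identity for `v' = v`. -/
def similarityTo (v v' : E) : E →L[ℝ] E :=
  (‖v'‖ / ‖v‖) • (((ℝ ∙ (-v - (‖v‖ / ‖v'‖) • v'))ᗮ.reflection : E →L[ℝ] E) ∘L
    ((ℝ ∙ v)ᗮ.reflection : E →L[ℝ] E))

lemma similarityTo_apply (v v' y : E) :
    similarityTo v v' y = (‖v'‖ / ‖v‖) •
      (ℝ ∙ (-v - (‖v‖ / ‖v'‖) • v'))ᗮ.reflection ((ℝ ∙ v)ᗮ.reflection y) := rfl

lemma inner_similarityTo (v v' a b : E) :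
    ⟪similarityTo v v' a, similarityTo v v' b⟫ = (‖v'‖ / ‖v‖) ^ 2 * ⟪a, b⟫ := by
  simp only [similarityTo_apply, real_inner_smul_left, real_inner_smul_right,
    LinearIsometryEquiv.inner_map_map]
  ring

lemma similarityTo_apply_self {v v' : E} (hv : v ≠ 0) (hv' : v' ≠ 0) :
    similarityTo v v' v = v' := by
  have hnorm : ‖-v‖ = ‖(‖v‖ / ‖v'‖) • v'‖ := by
    rw [norm_neg, norm_smul, norm_div, norm_norm, norm_norm,
      div_mul_cancel₀ _ (norm_ne_zero_iff.2 hv')]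
  rw [similarityTo_apply, Submodule.reflection_orthogonalComplement_singleton_eq_neg,
    Submodule.reflection_sub hnorm, smul_smul, div_mul_div_cancel₀ (norm_ne_zero_iff.2 hv),
    div_self (norm_ne_zero_iff.2 hv'), one_smul]

lemma similarityTo_self {v : E} (hv : v ≠ 0) (y : E) : similarityTo v v y = y := by
  have hspan : (ℝ ∙ (-v - v)) = ℝ ∙ v := by
    rw [show -v - v = (-2 : ℝ) • v by module]
    exact Submodule.span_singleton_smul_eq (IsUnit.mk0 _ (by norm_num)) v
  have hnorm : ‖v‖ / ‖v‖ = 1 := div_self (norm_ne_zero_iff.2 hv)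
  have hreflection (w : E) : (ℝ ∙ (-v - v))ᗮ.reflection w = (ℝ ∙ v)ᗮ.reflection w := by
    simp only [hspan]
  rw [similarityTo_apply, hnorm, one_smul, one_smul, hreflection, Submodule.reflection_reflection]

lemma continuousAt_similarityTo {v : E} (hv : v ≠ 0) (y : E) :
    ContinuousAt (fun p : E × E => similarityTo v p.1 p.2) (v, y) := by
  have hv0 : ‖v‖ ≠ 0 := norm_ne_zero_iff.2 hv
  simp only [similarityTo_apply, reflection_orthogonal_singleton_apply]
  have hne : ‖-v - (‖v‖ / ‖v‖) • v‖ ^ 2 ≠ 0 := by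
    rw [div_self hv0, one_smul, show -v - v = (-2 : ℝ) • v by module, norm_smul]
    simp [hv]
  fun_prop (disch := assumption)

lemma continuousAt_add_similarityTo {v : E} (hv : v ≠ 0) (x y : E) :
    ContinuousAt (fun q : (E × E) × E => q.1.1 + similarityTo v q.1.2 (q.2 - x)) ((x, v), y) :=
  continuousAt_fst.fst.add <| ContinuousAt.comp (x := ((x, v), y))
    (g := fun p : E × E => similarityTo v p.1 p.2)
    (f := fun q : (E × E) × E => (q.1.2, q.2 - x)) (continuousAt_similarityTo hv (y - x))
    (continuousAt_fst.snd.prodMk (continuousAt_snd.sub continuousAt_const))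

end Similarity

section Semicontinuity

variable {d : ℕ} {D : Set (Euc d)} {x v : Euc d} {c : ℝ}

lemma eventually_minMetric_lt_of_eq_zero (hd : 2 ≤ d) (hD : IsOpen D) (hx : x ∈ D) (hc : 0 < c) :
    ∀ᶠ p : Euc d × Euc d in nhds (x, 0), minMetric D p.1 p.2 < c := by
  obtain ⟨R, hR, hball⟩ := Metric.isOpen_iff.1 hD x hx
  have hpoint : ∀ᶠ p : Euc d × Euc d in nhds (x, 0), p.1 ∈ ball x (R / 2) :=
    continuousAt_fst.eventually (ball_mem_nhds x (half_pos hR))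
  have hvector : ∀ᶠ p : Euc d × Euc d in nhds (x, 0), p.2 ∈ ball 0 (c * (R / 2)) :=
    continuousAt_snd.eventually (ball_mem_nhds (0 : Euc d) (by positivity))
  filter_upwards [hpoint, hvector] with p hpx hp0
  refine (minMetric_le_of_ball_subset hd (half_pos hR)
    ((ball_subset_ball' ?_).trans hball)).trans_lt ?_
  · linarith [mem_ball.1 hpx]
  · rwa [div_lt_iff₀ (half_pos hR), ← mem_ball_zero_iff]

lemma exists_shrink_of_one_div_lt {r : ℝ} (hr : 0 < r) (hrc : 1 / r < c) :
    ∃ s : ℝ, 0 < s ∧ s < 1 ∧ 1 / (s * r) < c := by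
  have hc : 0 < c := (one_div_pos.2 hr).trans hrc
  obtain ⟨s, hs, hs1⟩ := exists_between
    ((div_lt_one (by positivity)).2 ((div_lt_iff₀ hr).1 hrc) : 1 / (c * r) < 1)
  have hs0 : 0 < s := lt_trans (by positivity) hs
  refine ⟨s, hs0, hs1, ?_⟩
  rw [div_lt_iff₀ (by positivity)] at hs ⊢
  linarith

/-- Disks centred at `x` in the direction `v`, slightly shrunk, are moved by similarities to
disks at nearby points in nearby directions. -/
lemma eventually_minMetric_lt_of_ne_zero (hd : 2 ≤ d) (hD : IsOpen D) (hx : x ∈ D) (hv : v ≠ 0)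
    (hc : minMetric D x v < c) :
    ∀ᶠ p : Euc d × Euc d in nhds (x, v), minMetric D p.1 p.2 < c := by
  obtain ⟨r, hr, hrc, f, hf, hfv⟩ := exists_isCenteredDisk_of_minMetric_lt hd hD hx hc
  obtain ⟨s, hs0, hs1, hsc⟩ := exists_shrink_of_one_div_lt hr hrc
  have hcompact : IsCompact (f '' closedBall 0 s) :=
    (isCompact_closedBall _ _).image_of_continuousOn
      (hf.conformalHarmonic.1.continuousOn.mono (closedBall_subset_ball hs1))
  have hmoved : ∀ᶠ p : Euc d × Euc d in nhds (x, v), ∀ y ∈ f '' closedBall 0 s,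
      p.1 + similarityTo v p.2 (y - x) ∈ D := by
    refine hcompact.eventually_forall_of_forall_eventually ?_
    rintro _ ⟨z, hz, rfl⟩
    refine (continuousAt_add_similarityTo hv x (f z)).eventually_mem (hD.mem_nhds ?_)
    rw [similarityTo_self hv, add_sub_cancel]
    exact hf.mapsTo (closedBall_subset_ball hs1 hz)
  have hne : ∀ᶠ p : Euc d × Euc d in nhds (x, v), p.2 ≠ 0 := continuousAt_snd.eventually_ne hv
  have habs : |s| ≤ 1 := (abs_of_pos hs0).trans_le hs1.le
  filter_upwards [hmoved, hne] with p hp hp0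
  refine (IsCenteredDisk.minMetric_le ⟨hf.conformalHarmonic.similarity_comp habs
    (similarityTo v p.2) (inner_similarityTo v p.2) p.1 x, fun z hz => hp _ ⟨_, ?_, rfl⟩,
    by simp [hf.map_zero]⟩ (mul_pos hs0 hr) ?_).trans_lt hsc
  · rw [mem_closedBall_zero_iff, norm_smul, Real.norm_of_nonneg hs0.le]
    exact mul_le_of_le_one_right hs0.le (mem_unitDisk_iff.1 hz).le
  · rw [pd_similarity_comp _ _ _ (by
      simpa using hf.conformalHarmonic.differentiableAt zero_mem_unitDisk), smul_zero, hfv,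
      map_smul, similarityTo_apply_self hv hp0, smul_smul]

theorem eventually_minMetric_lt (hd : 2 ≤ d) (hD : IsOpen D) (hx : x ∈ D)
    (hc : minMetric D x v < c) :
    ∀ᶠ p : Euc d × Euc d in nhds (x, v), minMetric D p.1 p.2 < c := by
  rcases eq_or_ne v 0 with rfl | hv
  · exact eventually_minMetric_lt_of_eq_zero hd hD hx ((minMetric_nonneg _ _ _).trans_lt hc)
  · exact eventually_minMetric_lt_of_ne_zero hd hD hx hv hc

end Semicontinuity

/-! ### Curves and their minimal length -/

section PiecewiseC1

variable {F : Type*} [NormedAddCommGroup F] [NormedSpace ℝ F] {γ γ' : ℝ → F} {a b c : ℝ}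

/-- Piecewise `C¹` curves on `[a, b]`, generated from the `C¹` curves by appending `C¹` pieces.
This is the form of `PiecewiseC1On` which is suited to induction. -/
inductive IsPiecewiseC1 (γ : ℝ → F) (a : ℝ) : ℝ → Prop
  | base {b : ℝ} : a ≤ b → ContDiffOn ℝ 1 γ (Icc a b) → IsPiecewiseC1 γ a b
  | step {b c : ℝ} :
      IsPiecewiseC1 γ a b → b ≤ c → ContDiffOn ℝ 1 γ (Icc b c) → IsPiecewiseC1 γ a c

namespace IsPiecewiseC1

lemma le (h : IsPiecewiseC1 γ a b) : a ≤ b := by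
  induction h with
  | base hab _ => exact hab
  | step _ hbc _ ih => exact ih.trans hbc

lemma continuousOn (h : IsPiecewiseC1 γ a b) : ContinuousOn γ (Icc a b) := by
  induction h with
  | base _ hγ => exact hγ.continuousOn
  | step h hbc hγ ih =>
    rw [← Icc_union_Icc_eq_Icc h.le hbc]
    exact ih.union_of_isClosed hγ.continuousOn isClosed_Icc isClosed_Icc

lemma trans (h : IsPiecewiseC1 γ a b) (h' : IsPiecewiseC1 γ b c) : IsPiecewiseC1 γ a c := by
  induction h' with
  | base hbc hγ => exact h.step hbc hγ
  | step _ hbc hγ ih => exact ih.step hbc hγ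

lemma congr (h : IsPiecewiseC1 γ a b) (heq : EqOn γ' γ (Icc a b)) : IsPiecewiseC1 γ' a b := by
  induction h with
  | base hab hγ => exact .base hab (hγ.congr heq)
  | step h hbc hγ ih =>
    exact .step (ih (heq.mono (Icc_subset_Icc_right hbc))) hbc
      (hγ.congr (heq.mono (Icc_subset_Icc_left h.le)))

lemma mono (h : IsPiecewiseC1 γ a b) {a' b' : ℝ} (ha : a ≤ a') (hab : a' ≤ b') (hb : b' ≤ b) :
    IsPiecewiseC1 γ a' b' := by
  induction h generalizing a' b' with
  | base _ hγ => exact .base hab (hγ.mono (Icc_subset_Icc ha hb))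
  | @step m c _ _ hγ ih =>
    rcases le_total b' m with hb'm | hmb'
    · exact ih ha hab hb'm
    rcases le_total m a' with hma' | ha'm
    · exact .base hab (hγ.mono (Icc_subset_Icc hma' hb))
    · exact .step (ih ha ha'm le_rfl) hmb' (hγ.mono (Icc_subset_Icc_right hb))

lemma comp_affine (h : IsPiecewiseC1 γ a b) {k l a' b' : ℝ} (hk : 0 < k) (ha : k * a' + l = a)
    (hb : k * b' + l = b) : IsPiecewiseC1 (fun t => γ (k * t + l)) a' b' := by
  have piece {p q p' q' : ℝ} (hp : k * p' + l = p) (hq : k * q' + l = q)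
      (hγ : ContDiffOn ℝ 1 γ (Icc p q)) :
      ContDiffOn ℝ 1 (fun t => γ (k * t + l)) (Icc p' q') :=
    hγ.comp (t := Icc p q) (by fun_prop) fun t ht => by
      rw [← hp, ← hq]
      exact ⟨by gcongr; exact ht.1, by gcongr; exact ht.2⟩
  induction h generalizing b' with
  | base hab hγ => exact .base (by nlinarith) (piece ha hb hγ)
  | @step m c _ hmc hγ ih =>
    have hm : k * ((m - l) / k) + l = m := by field_simp; ring
    exact .step (ih hm) (by nlinarith) (piece hm hb hγ)

lemma comp_neg (h : IsPiecewiseC1 γ a b) : IsPiecewiseC1 (fun t => γ (-t)) (-b) (-a) := by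
  have piece {p q : ℝ} (hpq : p ≤ q) (hγ : ContDiffOn ℝ 1 γ (Icc p q)) :
      IsPiecewiseC1 (fun t => γ (-t)) (-q) (-p) :=
    .base (neg_le_neg hpq) (hγ.comp (t := Icc p q) (by fun_prop) fun t ht =>
      ⟨le_neg_of_le_neg ht.2, neg_le_of_neg_le ht.1⟩)
  induction h with
  | base hab hγ => exact piece hab hγ
  | step _ hbc hγ ih => exact (piece hbc hγ).trans ih

end IsPiecewiseC1

lemma isPiecewiseC1_iff_piecewiseC1On {d : ℕ} {γ : ℝ → Euc d} :
    IsPiecewiseC1 γ a b ↔ PiecewiseC1On γ a b := by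
  refine ⟨fun h => ⟨h.continuousOn, ?_⟩, ?_⟩
  · induction h with
    | @base b hab hγ =>
      exact ⟨0, ![a, b], by simpa [Fin.monotone_iff_le_succ] using hab, rfl, rfl, by simpa using hγ⟩
    | @step b c _ hbc hγ ih =>
      obtain ⟨n, t, ht, rfl, rfl, htγ⟩ := ih
      refine ⟨n + 1, Fin.snoc t c, Fin.monotone_iff_le_succ.2 ?_, ?_, Fin.snoc_last .., ?_⟩
      · refine Fin.lastCases ?_ fun i => ?_
        · simpa using hbc
        · simpa only [Fin.succ_castSucc, Fin.snoc_castSucc] using ht (Fin.castSucc_le_succ i)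
      · exact Fin.snoc_castSucc (i := 0) ..
      · refine Fin.lastCases ?_ fun i => ?_
        · simpa using hγ
        · simpa only [Fin.succ_castSucc, Fin.snoc_castSucc] using htγ i
  · rintro ⟨-, n, t, ht, rfl, rfl, htγ⟩
    have hinit (i : Fin (n + 1)) : IsPiecewiseC1 γ (t 0) (t i.succ) := by
      induction i using Fin.induction with
      | zero => exact .base (ht (Fin.zero_le _)) (htγ 0)
      | succ i ih => exact .step ih (ht (Fin.succ_le_succ_iff.2 i.castSucc_le_succ)) (htγ i.succ)
    exact hinit (Fin.last n)

end PiecewiseC1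

section MinLength

variable {d : ℕ} {D : Set (Euc d)} {γ γ' : ℝ → Euc d} {a b c : ℝ}

/-- The minimal length of the restriction of `γ` to `[a, b]`. -/
def minLength (D : Set (Euc d)) (γ : ℝ → Euc d) (a b : ℝ) : ℝ :=
  ∫ t in a..b, minMetric D (γ t) (deriv γ t)

/-- `γ` is a piecewise `C¹` curve in `D` on `[a, b]`. -/
structure IsCurveIn (D : Set (Euc d)) (γ : ℝ → Euc d) (a b : ℝ) : Prop where
  isPiecewiseC1 : IsPiecewiseC1 γ a b
  mapsTo : MapsTo γ (Icc a b) D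

lemma IsCurveIn.mono (h : IsCurveIn D γ a b) {a' b' : ℝ} (ha : a ≤ a') (hab : a' ≤ b')
    (hb : b' ≤ b) : IsCurveIn D γ a' b' :=
  ⟨h.1.mono ha hab hb, h.2.mono_left (Icc_subset_Icc ha hb)⟩

lemma IsCurveIn.congr (h : IsCurveIn D γ a b) (heq : EqOn γ' γ (Icc a b)) :
    IsCurveIn D γ' a b :=
  ⟨h.1.congr heq, h.2.congr heq.symm⟩

lemma IsCurveIn.trans (h : IsCurveIn D γ a b) (h' : IsCurveIn D γ b c) : IsCurveIn D γ a c :=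
  ⟨h.1.trans h'.1, by
    rw [← Icc_union_Icc_eq_Icc h.1.le h'.1.le]
    exact h.2.union h'.2⟩

lemma IsCurveIn.comp_affine (h : IsCurveIn D γ a b) {k l a' b' : ℝ} (hk : 0 < k)
    (ha : k * a' + l = a) (hb : k * b' + l = b) : IsCurveIn D (fun t => γ (k * t + l)) a' b' := by
  refine ⟨h.1.comp_affine hk ha hb, fun t ht => h.2 ?_⟩
  rw [← ha, ← hb]
  exact ⟨by gcongr; exact ht.1, by gcongr; exact ht.2⟩

lemma IsCurveIn.comp_neg (h : IsCurveIn D γ a b) : IsCurveIn D (fun t => γ (-t)) (-b) (-a) :=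
  ⟨h.1.comp_neg, fun _ ht => h.2 ⟨le_neg_of_le_neg ht.2, neg_le_of_neg_le ht.1⟩⟩

lemma isCurveIn_const {x : Euc d} (hx : x ∈ D) (hab : a ≤ b) : IsCurveIn D (fun _ => x) a b :=
  ⟨.base hab contDiffOn_const, fun _ _ => hx⟩

lemma minLength_const {x : Euc d} (hx : x ∈ D) : minLength D (fun _ => x) a b = 0 := by
  simp [minLength, minMetric_zero hx]

lemma minLength_congr (hab : a ≤ b) (heq : EqOn γ' γ (Icc a b)) :
    minLength D γ' a b = minLength D γ a b :=
  intervalIntegral.integral_congr_Ioo_of_le hab fun t ht => by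
    have hderiv : deriv γ' t = deriv γ t :=
      EventuallyEq.deriv_eq <| mem_of_superset (Icc_mem_nhds ht.1 ht.2) heq
    simp only [heq (Ioo_subset_Icc_self ht), hderiv]

lemma minLength_nonneg (hab : a ≤ b) : 0 ≤ minLength D γ a b :=
  intervalIntegral.integral_nonneg hab fun _ _ => minMetric_nonneg _ _ _

lemma exists_forall_minMetric_le (hd : 2 ≤ d) (hD : IsOpen D) {T : Type*} [TopologicalSpace T]
    [CompactSpace T] {p w : T → Euc d} (hp : Continuous p) (hw : Continuous w)
    (hpD : ∀ t, p t ∈ D) : ∃ C, ∀ t, minMetric D (p t) (w t) ≤ C := by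
  obtain ⟨R, hR, hRD⟩ := (isCompact_range hp).exists_thickening_subset_open hD
    (range_subset_iff.2 hpD)
  obtain ⟨B, hB⟩ := (isCompact_range hw).isBounded.exists_norm_le
  refine ⟨B / R, fun t => (minMetric_le_of_ball_subset hd hR
    ((ball_subset_thickening (mem_range_self t) R).trans hRD)).trans ?_⟩
  gcongr
  exact hB _ (mem_range_self t)

lemma measurable_minMetric_comp (hd : 2 ≤ d) (hD : IsOpen D) {T : Type*} [TopologicalSpace T]
    [MeasurableSpace T] [OpensMeasurableSpace T] {p w : T → Euc d} (hp : Continuous p)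
    (hw : Continuous w) (hpD : ∀ t, p t ∈ D) : Measurable fun t => minMetric D (p t) (w t) :=
  measurable_of_Iio fun _ => IsOpen.measurableSet <| isOpen_iff_mem_nhds.2 fun t ht =>
    (hp.prodMk hw).continuousAt.eventually (eventually_minMetric_lt hd hD (hpD t) ht)

lemma intervalIntegrable_minMetric_of_contDiffOn (hd : 2 ≤ d) (hD : IsOpen D) (hab : a ≤ b)
    (hγ : ContDiffOn ℝ 1 γ (Icc a b)) (hm : MapsTo γ (Icc a b) D) :
    IntervalIntegrable (fun t => minMetric D (γ t) (deriv γ t)) MeasureTheory.volume a b := by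
  rcases hab.eq_or_lt with rfl | hlt
  · simp
  have hp : Continuous ((Icc a b).domRestrict γ) :=
    continuousOn_iff_continuous_domRestrict.1 hγ.continuousOn
  have hw : Continuous ((Icc a b).domRestrict (derivWithin γ (Icc a b))) :=
    continuousOn_iff_continuous_domRestrict.1
      (hγ.continuousOn_derivWithin (uniqueDiffOn_Icc hlt) le_rfl)
  obtain ⟨C, hC⟩ := exists_forall_minMetric_le hd hD hp hw fun t => hm t.2
  have hmeas := (measurable_minMetric_comp hd hD hp hw fun t => hm t.2).comp
    (continuous_projIcc (h := hab)).measurable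
  have hint : IntervalIntegrable (fun t => minMetric D (γ (projIcc a b hab t))
      (derivWithin γ (Icc a b) (projIcc a b hab t))) MeasureTheory.volume a b := by
    rw [intervalIntegrable_iff]
    refine MeasureTheory.Measure.integrableOn_of_bounded (M := C) (by simp)
      hmeas.aestronglyMeasurable (Eventually.of_forall fun t => ?_)
    rw [Real.norm_of_nonneg (minMetric_nonneg _ _ _)]
    exact hC _
  refine hint.congr_ae ?_
  rw [uIoc_of_le hab, ← MeasureTheory.restrict_Ioo_eq_restrict_Ioc]
  filter_upwards [MeasureTheory.self_mem_ae_restrict measurableSet_Ioo] with t ht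
  rw [projIcc_of_mem hab (Ioo_subset_Icc_self ht),
    derivWithin_of_mem_nhds (Icc_mem_nhds ht.1 ht.2)]

lemma IsCurveIn.intervalIntegrable (hd : 2 ≤ d) (hD : IsOpen D) (h : IsCurveIn D γ a b) :
    IntervalIntegrable (fun t => minMetric D (γ t) (deriv γ t)) MeasureTheory.volume a b := by
  obtain ⟨hγ, hm⟩ := h
  induction hγ with
  | base hab hγ => exact intervalIntegrable_minMetric_of_contDiffOn hd hD hab hγ hm
  | step h hbc hγ ih =>
    exact (ih (hm.mono_left (Icc_subset_Icc_right hbc))).trans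
      (intervalIntegrable_minMetric_of_contDiffOn hd hD hbc hγ
        (hm.mono_left (Icc_subset_Icc_left h.le)))

lemma IsCurveIn.minLength_add (hd : 2 ≤ d) (hD : IsOpen D) (h : IsCurveIn D γ a b)
    (h' : IsCurveIn D γ b c) : minLength D γ a b + minLength D γ b c = minLength D γ a c :=
  intervalIntegral.integral_add_adjacent_intervals (h.intervalIntegrable hd hD)
    (h'.intervalIntegrable hd hD)

lemma minLength_comp_affine {k l : ℝ} (hk : 0 < k) :
    minLength D (fun t => γ (k * t + l)) a b = minLength D γ (k * a + l) (k * b + l) := by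
  have hderiv (t : ℝ) : deriv (fun t => γ (k * t + l)) t = k • deriv γ (k * t + l) := by
    rw [deriv_comp_mul_left k (fun s => γ (s + l)) t, deriv_comp_add_const]
  simp only [minLength, hderiv, minMetric_smul _ _ _ hk, intervalIntegral.integral_const_mul]
  rw [intervalIntegral.integral_comp_mul_add (fun s => minMetric D (γ s) (deriv γ s)) hk.ne',
    smul_eq_mul, mul_inv_cancel_left₀ hk.ne']

lemma IsCurveIn.minLength_comp_neg (hd : 2 ≤ d) (hD : IsOpen D) (h : IsCurveIn D γ a b) :
    minLength D (fun t => γ (-t)) (-b) (-a) = minLength D γ a b := by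
  have hneg : minLength D (fun t => γ (-t)) (-b) (-a) =
      ∫ t in -b..-a, minMetric D (γ (-t)) (deriv γ (-t)) := by
    refine intervalIntegral.integral_congr fun t ht => ?_
    rw [uIcc_of_le (neg_le_neg h.1.le)] at ht
    simp only [deriv_comp_neg]
    exact minMetric_neg hd hD (h.comp_neg.2 ht) _
  rw [hneg, intervalIntegral.integral_comp_neg (fun s => minMetric D (γ s) (deriv γ s)), neg_neg,
    neg_neg, minLength]

lemma norm_sub_le_minLength_of_contDiffOn (hd : 2 ≤ d) (hD : IsOpen D) {F : Type*}
    [NormedAddCommGroup F] [NormedSpace ℝ F] [CompleteSpace F] {Φ : Euc d → F}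
    (hΦ : ContDiffOn ℝ 1 Φ D) {K : ℝ} (hab : a ≤ b) (hγ : ContDiffOn ℝ 1 γ (Icc a b))
    (hm : MapsTo γ (Icc a b) D)
    (hK : ∀ t ∈ Icc a b, ∀ v, ‖fderiv ℝ Φ (γ t) v‖ ≤ K * minMetric D (γ t) v) :
    ‖Φ (γ b) - Φ (γ a)‖ ≤ K * minLength D γ a b := by
  have hftc : ∫ t in a..b, deriv (Φ ∘ γ) t = Φ (γ b) - Φ (γ a) :=
    intervalIntegral.integral_deriv_of_contDiffOn_Icc (hΦ.comp hγ hm) hab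
  rw [← hftc, minLength, ← intervalIntegral.integral_const_mul]
  refine intervalIntegral.norm_integral_le_of_norm_le hab ?_
    ((intervalIntegrable_minMetric_of_contDiffOn hd hD hab hγ hm).const_mul K)
  filter_upwards [MeasureTheory.Measure.ae_ne MeasureTheory.volume b] with t htb ht
  have ht' : t ∈ Icc a b := Ioc_subset_Icc_self ht
  have hγt : DifferentiableAt ℝ γ t := (hγ.differentiableOn one_ne_zero t ht').differentiableAt
    (Icc_mem_nhds ht.1 (ht.2.lt_of_ne htb))
  have hΦt : DifferentiableAt ℝ Φ (γ t) :=
    (hΦ.differentiableOn one_ne_zero).differentiableAt (hD.mem_nhds (hm ht'))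
  rw [fderiv_comp_deriv t hΦt hγt]
  exact hK t ht' _

lemma IsCurveIn.norm_sub_le_minLength (hd : 2 ≤ d) (hD : IsOpen D) {F : Type*}
    [NormedAddCommGroup F] [NormedSpace ℝ F] [CompleteSpace F] {Φ : Euc d → F}
    (hΦ : ContDiffOn ℝ 1 Φ D) {K : ℝ} (h : IsCurveIn D γ a b)
    (hK : ∀ t ∈ Icc a b, ∀ v, ‖fderiv ℝ Φ (γ t) v‖ ≤ K * minMetric D (γ t) v) :
    ‖Φ (γ b) - Φ (γ a)‖ ≤ K * minLength D γ a b := by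
  obtain ⟨hγ, hm⟩ := h
  induction hγ with
  | base hab hγ => exact norm_sub_le_minLength_of_contDiffOn hd hD hΦ hab hγ hm hK
  | @step b c h hbc hγ ih =>
    have hmb := hm.mono_left (Icc_subset_Icc_right hbc)
    have hmc := hm.mono_left (Icc_subset_Icc_left h.le)
    calc ‖Φ (γ c) - Φ (γ a)‖ ≤ ‖Φ (γ c) - Φ (γ b)‖ + ‖Φ (γ b) - Φ (γ a)‖ :=
          norm_sub_le_norm_sub_add_norm_sub _ _ _
      _ ≤ K * minLength D γ b c + K * minLength D γ a b := add_le_add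
          (norm_sub_le_minLength_of_contDiffOn hd hD hΦ hbc hγ hmc
            fun t ht => hK t ⟨h.le.trans ht.1, ht.2⟩)
          (ih (fun t ht => hK t ⟨ht.1, ht.2.trans hbc⟩) hmb)
      _ = K * minLength D γ a c := by
          rw [← IsCurveIn.minLength_add hd hD ⟨h, hmb⟩ ⟨.base hbc hγ, hmc⟩]
          ring

end MinLength

/-! ### The minimal pseudodistance -/

section MinDist

variable {d : ℕ} {D : Set (Euc d)} {x y z : Euc d} {ℓ ℓ' : ℝ}

/-- `x` and `y` are joined in `D` by a piecewise `C¹` curve of minimal length `ℓ`. -/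
def JoinedWithLength (D : Set (Euc d)) (x y : Euc d) (ℓ : ℝ) : Prop :=
  ∃ (γ : ℝ → Euc d) (a b : ℝ), IsCurveIn D γ a b ∧ γ a = x ∧ γ b = y ∧ minLength D γ a b = ℓ

lemma IsCurveIn.joinedWithLength {γ : ℝ → Euc d} {a b : ℝ} (h : IsCurveIn D γ a b) :
    JoinedWithLength D (γ a) (γ b) (minLength D γ a b) :=
  ⟨γ, a, b, h, rfl, rfl, rfl⟩

namespace JoinedWithLength

lemma nonneg (h : JoinedWithLength D x y ℓ) : 0 ≤ ℓ := by
  obtain ⟨γ, a, b, hγ, -, -, rfl⟩ := h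
  exact minLength_nonneg hγ.1.le

lemma refl (hx : x ∈ D) : JoinedWithLength D x x 0 :=
  ⟨fun _ => x, 0, 1, isCurveIn_const hx zero_le_one, rfl, rfl, minLength_const hx⟩

lemma symm (hd : 2 ≤ d) (hD : IsOpen D) (h : JoinedWithLength D x y ℓ) :
    JoinedWithLength D y x ℓ := by
  obtain ⟨γ, a, b, hγ, rfl, rfl, rfl⟩ := h
  exact ⟨_, _, _, hγ.comp_neg, by simp, by simp, hγ.minLength_comp_neg hd hD⟩

lemma trans (hd : 2 ≤ d) (hD : IsOpen D) (h : JoinedWithLength D x y ℓ)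
    (h' : JoinedWithLength D y z ℓ') : JoinedWithLength D x z (ℓ + ℓ') := by
  obtain ⟨γ, a, b, hγ, rfl, rfl, rfl⟩ := h
  obtain ⟨β, a', b', hβ, hend, rfl, rfl⟩ := h'
  have hleft : 1 * b + (a' - b) = a' := by ring
  have hright : 1 * (b' - a' + b) + (a' - b) = b' := by ring
  have hβ' := hβ.comp_affine one_pos hleft hright
  have hlen := minLength_comp_affine (D := D) (γ := β) (a := b) (b := b' - a' + b) (l := a' - b)
    one_pos
  rw [hleft, hright] at hlen
  set σ : ℝ → Euc d := fun t => if t ≤ b then γ t else β (1 * t + (a' - b)) with hσ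
  have heqγ : EqOn σ γ (Icc a b) := fun t ht => if_pos ht.2
  have heqβ : EqOn σ (fun t => β (1 * t + (a' - b))) (Icc b (b' - a' + b)) := by
    intro t ht
    rcases ht.1.eq_or_lt with rfl | hlt
    · simp only [hσ, le_refl, if_true, hleft, hend]
    · exact if_neg hlt.not_ge
  have hσγ := hγ.congr heqγ
  have hσβ := hβ'.congr heqβ
  refine ⟨σ, a, b' - a' + b, hσγ.trans hσβ, heqγ ⟨le_rfl, hγ.1.le⟩, ?_, ?_⟩
  · exact (heqβ ⟨hσβ.1.le, le_rfl⟩).trans (congrArg β hright)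
  · rw [← hσγ.minLength_add hd hD hσβ, minLength_congr hγ.1.le heqγ,
      minLength_congr hσβ.1.le heqβ, hlen]

lemma exists_curve_on_unitInterval (h : JoinedWithLength D x y ℓ) :
    ∃ γ, IsCurveIn D γ 0 1 ∧ γ 0 = x ∧ γ 1 = y ∧ minLength D γ 0 1 = ℓ := by
  obtain ⟨γ, a, b, hγ, rfl, rfl, rfl⟩ := h
  rcases hγ.1.le.eq_or_lt with rfl | hab
  · have ha : γ a ∈ D := hγ.2 ⟨le_rfl, le_rfl⟩
    exact ⟨fun _ => γ a, isCurveIn_const ha zero_le_one, rfl, rfl,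
      by rw [minLength_const ha, minLength, intervalIntegral.integral_same]⟩
  · have hzero : (b - a) * 0 + a = a := by ring
    have hone : (b - a) * 1 + a = b := by ring
    refine ⟨_, hγ.comp_affine (sub_pos.2 hab) hzero hone, by rw [hzero], by rw [hone], ?_⟩
    rw [minLength_comp_affine (sub_pos.2 hab), hzero, hone]

end JoinedWithLength

lemma minDist_eq_sInf (D : Set (Euc d)) (x y : Euc d) :
    minDist D x y = sInf {ℓ | JoinedWithLength D x y ℓ} := by
  refine congrArg sInf (Set.ext fun ℓ => ⟨?_, fun h => ?_⟩)
  · rintro ⟨γ, hγ, hm, hx, hy, rfl⟩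
    exact ⟨γ, 0, 1, ⟨isPiecewiseC1_iff_piecewiseC1On.2 hγ, hm⟩, hx, hy, rfl⟩
  · obtain ⟨γ, hγ, hx, hy, rfl⟩ := h.exists_curve_on_unitInterval
    exact ⟨γ, isPiecewiseC1_iff_piecewiseC1On.1 hγ.1, hγ.2, hx, hy, rfl⟩

lemma exists_joinedWithLength_segment (hd : 2 ≤ d) (hD : IsOpen D) {B : ℝ}
    (hm : ∀ t ∈ Icc (0 : ℝ) 1, x + t • (y - x) ∈ D)
    (hB : ∀ t ∈ Icc (0 : ℝ) 1, minMetric D (x + t • (y - x)) (y - x) ≤ B) :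
    ∃ ℓ ≤ B, JoinedWithLength D x y ℓ := by
  have hcurve : IsCurveIn D (fun t : ℝ => x + t • (y - x)) 0 1 :=
    ⟨.base zero_le_one (by fun_prop), hm⟩
  refine ⟨_, ?_, _, 0, 1, hcurve, by simp, by simp, rfl⟩
  have hderiv (t : ℝ) : deriv (fun t : ℝ => x + t • (y - x)) t = y - x := by
    simpa using (((hasDerivAt_id t).smul_const (y - x)).const_add x).deriv
  calc minLength D (fun t : ℝ => x + t • (y - x)) 0 1 ≤ ∫ _ in (0 : ℝ)..1, B :=
        intervalIntegral.integral_mono_on zero_le_one (hcurve.intervalIntegrable hd hD) (by simp)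
          fun t ht => by rw [hderiv]; exact hB t ht
    _ = B := by simp

lemma minDist_le (h : JoinedWithLength D x y ℓ) : minDist D x y ≤ ℓ := by
  rw [minDist_eq_sInf]
  exact csInf_le ⟨0, fun _ h' => h'.nonneg⟩ h

lemma minDist_le_of_segment (hd : 2 ≤ d) (hD : IsOpen D) {B : ℝ}
    (hm : ∀ t ∈ Icc (0 : ℝ) 1, x + t • (y - x) ∈ D)
    (hB : ∀ t ∈ Icc (0 : ℝ) 1, minMetric D (x + t • (y - x)) (y - x) ≤ B) :
    minDist D x y ≤ B := by
  obtain ⟨ℓ, hℓB, hℓ⟩ := exists_joinedWithLength_segment hd hD hm hB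
  exact (minDist_le hℓ).trans hℓB

lemma eventually_joinedWithLength (hd : 2 ≤ d) (hD : IsOpen D) (hx : x ∈ D) :
    ∀ᶠ y in nhds x, ∃ ℓ ≤ 1, JoinedWithLength D x y ℓ := by
  obtain ⟨R, hR, hball⟩ := Metric.isOpen_iff.1 hD x hx
  filter_upwards [ball_mem_nhds x (half_pos hR)] with y hy
  rw [mem_ball, dist_eq_norm] at hy
  have hsegment (t : ℝ) (ht : t ∈ Icc (0 : ℝ) 1) : ball (x + t • (y - x)) (R / 2) ⊆ D := by
    refine (ball_subset_ball' ?_).trans hball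
    rw [dist_eq_norm, add_sub_cancel_left, norm_smul, Real.norm_of_nonneg ht.1]
    nlinarith [ht.2, norm_nonneg (y - x)]
  refine exists_joinedWithLength_segment hd hD
    (fun t ht => hsegment t ht (mem_ball_self (half_pos hR))) fun t ht =>
      (minMetric_le_of_ball_subset hd (half_pos hR) (hsegment t ht)).trans ?_
  exact (div_le_one (half_pos hR)).2 hy.le

lemma exists_joinedWithLength (hd : 2 ≤ d) (hD : IsOpen D) (hc : IsConnected D) (hx : x ∈ D)
    (hy : y ∈ D) : ∃ ℓ, JoinedWithLength D x y ℓ := by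
  refine hc.isPreconnected.induction₂ (fun x y => ∃ ℓ, JoinedWithLength D x y ℓ) ?_ ?_ ?_ hx hy
  · intro x hx
    filter_upwards [nhdsWithin_le_nhds (eventually_joinedWithLength hd hD hx)] with y ⟨ℓ, _, h⟩
    exact ⟨ℓ, h⟩
  · rintro x y z - - - ⟨ℓ, h⟩ ⟨ℓ', h'⟩
    exact ⟨_, h.trans hd hD h'⟩
  · rintro x y - - ⟨ℓ, h⟩
    exact ⟨_, h.symm hd hD⟩

lemma exists_joinedWithLength_of_minDist_lt (hd : 2 ≤ d) (hD : IsOpen D) (hc : IsConnected D)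
    (hx : x ∈ D) (hy : y ∈ D) {r : ℝ} (hr : minDist D x y < r) :
    ∃ ℓ < r, JoinedWithLength D x y ℓ := by
  rw [minDist_eq_sInf] at hr
  obtain ⟨ℓ, hℓ, hℓr⟩ := exists_lt_of_csInf_lt (exists_joinedWithLength hd hD hc hx hy) hr
  exact ⟨ℓ, hℓr, hℓ⟩

lemma minDist_nonneg (D : Set (Euc d)) (x y : Euc d) : 0 ≤ minDist D x y := by
  rw [minDist_eq_sInf]
  exact Real.sInf_nonneg fun _ h => h.nonneg

lemma minDist_self (hx : x ∈ D) : minDist D x x = 0 :=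
  (minDist_le (.refl hx)).antisymm (minDist_nonneg _ _ _)

lemma minDist_comm (hd : 2 ≤ d) (hD : IsOpen D) (x y : Euc d) :
    minDist D x y = minDist D y x := by
  rw [minDist_eq_sInf, minDist_eq_sInf]
  exact congrArg sInf (Set.ext fun ℓ => ⟨fun h => h.symm hd hD, fun h => h.symm hd hD⟩)

lemma minDist_triangle (hd : 2 ≤ d) (hD : IsOpen D) (hc : IsConnected D) (hx : x ∈ D)
    (hy : y ∈ D) (hz : z ∈ D) : minDist D x z ≤ minDist D x y + minDist D y z := by
  refine le_of_forall_pos_lt_add fun ε hε => ?_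
  obtain ⟨ℓ, hℓ, h⟩ := exists_joinedWithLength_of_minDist_lt hd hD hc hx hy
    (lt_add_of_pos_right (minDist D x y) (half_pos hε))
  obtain ⟨ℓ', hℓ', h'⟩ := exists_joinedWithLength_of_minDist_lt hd hD hc hy hz
    (lt_add_of_pos_right (minDist D y z) (half_pos hε))
  linarith [minDist_le (h.trans hd hD h')]

lemma exists_minDist_le_of_isCompact (hd : 2 ≤ d) (hD : IsOpen D) (hc : IsConnected D) {o : Euc d}
    (ho : o ∈ D) {K : Set (Euc d)} (hK : IsCompact K) (hKD : K ⊆ D) :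
    ∃ C, ∀ x ∈ K, minDist D o x ≤ C := by
  refine hK.induction_on (p := fun K => ∃ C, ∀ x ∈ K, minDist D o x ≤ C) ⟨0, by simp⟩
    (fun s t hst ⟨C, hC⟩ => ⟨C, fun x hx => hC x (hst hx)⟩) ?_ fun x hx => ?_
  · rintro s t ⟨C, hC⟩ ⟨C', hC'⟩
    exact ⟨max C C', fun x => Or.rec (fun hx => le_max_of_le_left (hC x hx))
      fun hx => le_max_of_le_right (hC' x hx)⟩
  · obtain ⟨ℓ, hℓ⟩ := exists_joinedWithLength hd hD hc ho (hKD hx)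
    refine ⟨_, mem_nhdsWithin_of_mem_nhds (eventually_joinedWithLength hd hD (hKD hx)), ℓ + 1, ?_⟩
    rintro y ⟨ℓ', hℓ', hxy⟩
    linarith [minDist_le (hℓ.trans hd hD hxy)]

/-- The points of `D`, to be equipped with the minimal pseudodistance. A separate type is needed
because the subtype `D` already carries the Euclidean distance. -/
structure MinSpace (D : Set (Euc d)) where
  point : Euc d
  mem : point ∈ D

/-- The minimal pseudodistance of a domain, as a pseudometric. -/
abbrev MinSpace.pseudoMetricSpace (hd : 2 ≤ d) (hD : IsOpen D) (hc : IsConnected D) :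
    PseudoMetricSpace (MinSpace D) where
  dist x y := minDist D x.point y.point
  dist_self x := minDist_self x.mem
  dist_comm _ _ := minDist_comm hd hD _ _
  dist_triangle x y z := minDist_triangle hd hD hc x.mem y.mem z.mem

lemma IsCurveIn.minDist_le_dist_minLength (hd : 2 ≤ d) (hD : IsOpen D) {γ : ℝ → Euc d} {a b : ℝ}
    (hγ : IsCurveIn D γ a b) {s t : ℝ} (hs : s ∈ Icc a b) (ht : t ∈ Icc a b) :
    minDist D (γ s) (γ t) ≤ dist (minLength D γ a s) (minLength D γ a t) := by
  wlog hst : s ≤ t generalizing s t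
  · rw [minDist_comm hd hD, dist_comm]
    exact this ht hs (le_of_not_ge hst)
  have hγst := hγ.mono hs.1 hst ht.2
  have hadd := (hγ.mono le_rfl hs.1 hs.2).minLength_add hd hD hγst
  rw [dist_comm, Real.dist_eq, ← hadd, add_sub_cancel_left]
  exact (minDist_le hγst.joinedWithLength).trans (le_abs_self _)

lemma IsCurveIn.continuousOn_minLength (hd : 2 ≤ d) (hD : IsOpen D) {γ : ℝ → Euc d} {a b : ℝ}
    (hγ : IsCurveIn D γ a b) : ContinuousOn (minLength D γ a) (Icc a b) := by
  have hint := hγ.intervalIntegrable hd hD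
  rw [intervalIntegrable_iff_integrableOn_Icc_of_le hγ.1.le, ← uIcc_of_le hγ.1.le] at hint
  rw [← uIcc_of_le hγ.1.le]
  exact intervalIntegral.continuousOn_primitive_interval hint

/-- Near-minimizing curves, cut at unit steps, are rough chains. -/
theorem MinSpace.roughlyGeodesic (hd : 2 ≤ d) (hD : IsOpen D) (hc : IsConnected D) :
    @RoughlyGeodesic (MinSpace D) (MinSpace.pseudoMetricSpace hd hD hc) := by
  let _ := MinSpace.pseudoMetricSpace hd hD hc
  rintro ⟨x, hx⟩ ⟨y, hy⟩
  obtain ⟨ℓ, hℓ, γ, a, b, hγ, rfl, rfl, rfl⟩ :=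
    exists_joinedWithLength_of_minDist_lt hd hD hc hx hy (lt_add_one _)
  have hab := hγ.1.le
  have hzero : minLength D γ a a = 0 := intervalIntegral.integral_same
  refine exists_isRoughChain_of_dist_le (p := fun t : Icc a b => (⟨γ t, hγ.2 t.2⟩ : MinSpace D))
    (L := fun t => minLength D γ a t) (a := ⟨a, left_mem_Icc.2 hab⟩)
    (b := ⟨b, right_mem_Icc.2 hab⟩)
    (fun s t => hγ.minDist_le_dist_minLength hd hD s.2 t.2) ?_ ?_ ?_
  · intro r hr
    obtain ⟨t, ht, rfl⟩ := intermediate_value_Icc hab (hγ.continuousOn_minLength hd hD) hr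
    exact ⟨⟨t, ht⟩, rfl⟩
  · exact hzero.trans_le (minLength_nonneg hab)
  · rw [hzero, sub_zero]
    exact hℓ.le

end MinDist

/-! ### The maximum principle and the sub-mean value property -/

section SubMeanValue

open Complex

/-- `σ` is a lower test function for `W` at `z`, in the sense of viscosity solutions: it lies below
`W` near `z` and agrees with `W` at `z`. -/
structure TouchesFromBelow {X : Type*} [TopologicalSpace X] (σ W : X → ℝ) (z : X) : Prop where
  eventually_le : ∀ᶠ w in nhds z, σ w ≤ W w
  eq : σ z = W z

lemma TouchesFromBelow.add_right {X : Type*} [TopologicalSpace X] {σ W : X → ℝ} {z : X}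
    (h : TouchesFromBelow σ W z) (g : X → ℝ) :
    TouchesFromBelow (fun w => σ w + g w) (fun w => W w + g w) z :=
  ⟨h.eventually_le.mono fun w hw => by gcongr, by rw [h.eq]⟩

lemma TouchesFromBelow.comp {X Y : Type*} [TopologicalSpace X] [TopologicalSpace Y] {σ W : X → ℝ}
    {k : Y → X} {z : Y} (h : TouchesFromBelow σ W (k z)) (hk : ContinuousAt k z) :
    TouchesFromBelow (σ ∘ k) (W ∘ k) z :=
  ⟨hk.eventually h.eventually_le, h.eq⟩

/-- `k` is differentiable near `0` and its derivative has derivative `a` at `0`. -/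
def HasSecondDerivAtZero (k : ℝ → ℝ) (a : ℝ) : Prop :=
  ∃ k' : ℝ → ℝ, (∀ᶠ t in nhds 0, HasDerivAt k (k' t) t) ∧ HasDerivAt k' a 0

namespace HasSecondDerivAtZero

variable {k l : ℝ → ℝ} {a b : ℝ}

lemma add (hk : HasSecondDerivAtZero k a) (hl : HasSecondDerivAtZero l b) :
    HasSecondDerivAtZero (fun t => k t + l t) (a + b) := by
  obtain ⟨k', hk', hka⟩ := hk
  obtain ⟨l', hl', hlb⟩ := hl
  exact ⟨fun t => k' t + l' t, (hk'.and hl').mono fun t ht => ht.1.add ht.2, hka.add hlb⟩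

lemma const_mul (hk : HasSecondDerivAtZero k a) (c : ℝ) :
    HasSecondDerivAtZero (fun t => c * k t) (c * a) := by
  obtain ⟨k', hk', hka⟩ := hk
  exact ⟨fun t => c * k' t, hk'.mono fun t ht => ht.const_mul c, hka.const_mul c⟩

lemma const (c : ℝ) : HasSecondDerivAtZero (fun _ => c) 0 :=
  ⟨fun _ => 0, Eventually.of_forall fun t => hasDerivAt_const t c, hasDerivAt_const 0 0⟩

lemma nonpos_of_isLocalMax (hk : HasSecondDerivAtZero k a) (hm : IsLocalMax k 0) : a ≤ 0 := by
  obtain ⟨k', hk', hka⟩ := hk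
  have hderiv : deriv k =ᶠ[nhds 0] k' := hk'.mono fun t ht => ht.deriv
  have hsecond : deriv (deriv k) 0 = a := by rw [hderiv.deriv_eq, hka.deriv]
  by_contra! ha
  have hmin : IsLocalMin k 0 :=
    isLocalMin_of_deriv_deriv_pos (hsecond ▸ ha) hm.deriv_eq_zero hk'.self_of_nhds.continuousAt
  have hconst : k =ᶠ[nhds 0] fun _ => k 0 := by
    filter_upwards [hm, hmin] with t hle hge using le_antisymm hle hge
  rw [hconst.deriv.deriv_eq] at hsecond
  simp only [deriv_const', deriv_const] at hsecond
  exact ha.ne hsecond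

end HasSecondDerivAtZero

/-- The two unmixed second partial derivatives of `σ` exist at `z` and add up to `l`. -/
def HasLaplacianAt (σ : ℂ → ℝ) (z : ℂ) (l : ℝ) : Prop :=
  ∃ a b : ℝ, HasSecondDerivAtZero (fun t : ℝ => σ (z + t * 1)) a ∧
    HasSecondDerivAtZero (fun t : ℝ => σ (z + t * I)) b ∧ a + b = l

namespace HasLaplacianAt

variable {σ τ : ℂ → ℝ} {z : ℂ} {l m : ℝ}

lemma add (hσ : HasLaplacianAt σ z l) (hτ : HasLaplacianAt τ z m) :
    HasLaplacianAt (fun w => σ w + τ w) z (l + m) := by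
  obtain ⟨a, b, ha, hb, rfl⟩ := hσ
  obtain ⟨a', b', ha', hb', rfl⟩ := hτ
  exact ⟨_, _, ha.add ha', hb.add hb', by ring⟩

lemma const_mul (hσ : HasLaplacianAt σ z l) (c : ℝ) :
    HasLaplacianAt (fun w => c * σ w) z (c * l) := by
  obtain ⟨a, b, ha, hb, rfl⟩ := hσ
  exact ⟨_, _, ha.const_mul c, hb.const_mul c, by ring⟩

lemma const (z : ℂ) (c : ℝ) : HasLaplacianAt (fun _ => c) z 0 :=
  ⟨0, 0, .const c, .const c, add_zero 0⟩

lemma nonpos_of_isLocalMax (hσ : HasLaplacianAt σ z l) (hm : IsLocalMax σ z) : l ≤ 0 := by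
  obtain ⟨a, b, ha, hb, rfl⟩ := hσ
  have hline (e : ℂ) : IsLocalMax (fun t : ℝ => σ (z + t * e)) 0 := by
    have htends : Tendsto (fun t : ℝ => z + t * e) (nhds 0) (nhds z) := by
      have hcont : Continuous fun t : ℝ => z + t * e := by fun_prop
      simpa using hcont.tendsto 0
    simpa [IsLocalMax, IsMaxFilter] using htends.eventually hm
  exact add_nonpos (ha.nonpos_of_isLocalMax (hline 1)) (hb.nonpos_of_isLocalMax (hline I))

end HasLaplacianAt

lemma nonpos_of_laplacian_pos {W : ℂ → ℝ} {r : ℝ} (hr : 0 ≤ r)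
    (hW : ContinuousOn W (closedBall 0 r)) (hsphere : ∀ z ∈ sphere (0 : ℂ) r, W z ≤ 0)
    (htest : ∀ z ∈ ball (0 : ℂ) r, ∃ σ l, TouchesFromBelow σ W z ∧ 0 < l ∧ HasLaplacianAt σ z l)
    {z : ℂ} (hz : z ∈ closedBall 0 r) : W z ≤ 0 := by
  obtain ⟨z₀, hz₀, hmax⟩ := (isCompact_closedBall (0 : ℂ) r).exists_isMaxOn
    ⟨0, mem_closedBall_self hr⟩ hW
  refine (hmax hz).trans ?_
  rw [← ball_union_sphere] at hz₀
  refine hz₀.elim (fun hball => ?_) (hsphere z₀)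
  obtain ⟨σ, l, hσ, hl, hlap⟩ := htest z₀ hball
  refine absurd (hlap.nonpos_of_isLocalMax ?_) hl.not_ge
  filter_upwards [hσ.eventually_le, isOpen_ball.mem_nhds hball] with w hw hwr
  exact hσ.eq ▸ hw.trans (hmax (ball_subset_closedBall hwr))

lemma exists_polynomial_of_mem_span_fourier {r : ℝ} (hr : r ≠ 0)
    {k : C(AddCircle (2 * Real.pi), ℂ)}
    (hk : k ∈ Submodule.span ℂ (range (@fourier (2 * Real.pi)))) :
    ∃ p q : Polynomial ℂ, ∀ θ, k θ = p.eval ((r : ℂ) * AddCircle.toCircle θ) +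
      starRingEnd ℂ (q.eval ((r : ℂ) * AddCircle.toCircle θ)) := by
  have hr' : (r : ℂ) ≠ 0 := by exact_mod_cast hr
  induction hk using Submodule.span_induction with
  | mem x hx =>
    obtain ⟨n, rfl⟩ := hx
    obtain ⟨m, rfl | rfl⟩ := n.eq_nat_or_neg
    · refine ⟨.C ((r : ℂ) ^ m)⁻¹ * .X ^ m, 0, fun θ => ?_⟩
      simp only [fourier_apply, AddCircle.toCircle_zsmul]
      simp [mul_pow, hr']
    · refine ⟨0, .C ((r : ℂ) ^ m)⁻¹ * .X ^ m, fun θ => ?_⟩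
      simp only [fourier_apply, AddCircle.toCircle_zsmul]
      simp [mul_pow, hr', ← Circle.coe_inv_eq_conj]
  | zero => exact ⟨0, 0, by simp⟩
  | add x y _ _ hx hy =>
    obtain ⟨p, q, hpq⟩ := hx
    obtain ⟨p', q', hpq'⟩ := hy
    refine ⟨p + p', q + q', fun θ => ?_⟩
    simp only [ContinuousMap.add_apply, hpq, hpq', Polynomial.eval_add, map_add]
    ring
  | smul c x _ hx =>
    obtain ⟨p, q, hpq⟩ := hx
    refine ⟨.C c * p, .C (starRingEnd ℂ c) * q, fun θ => ?_⟩
    simp [hpq, mul_add]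

lemma exists_mul_toCircle_eq {r : ℝ} {z : ℂ} (hz : z ∈ sphere (0 : ℂ) r) :
    ∃ θ : AddCircle (2 * Real.pi), (r : ℂ) * AddCircle.toCircle θ = z := by
  refine ⟨(arg z : ℝ), ?_⟩
  rw [AddCircle.toCircle_apply_mk, div_self (by positivity), one_mul, Circle.coe_exp]
  have hpolar := norm_mul_exp_arg_mul_I z
  rwa [mem_sphere_zero_iff_norm.1 hz] at hpolar

/-- Trigonometric polynomials are dense, and `p + conj q` has the same real part as `p + q`. -/
lemma exists_polynomial_near_on_sphere {g : ℂ → ℝ} {r : ℝ} (hr : 0 < r)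
    (hg : ContinuousOn g (sphere 0 r)) {ε : ℝ} (hε : 0 < ε) :
    ∃ p : Polynomial ℂ, ∀ z ∈ sphere (0 : ℂ) r, |g z - (p.eval z).re| ≤ ε := by
  have : Fact (0 < 2 * Real.pi) := ⟨Real.two_pi_pos⟩
  have hmem (θ : AddCircle (2 * Real.pi)) : (r : ℂ) * AddCircle.toCircle θ ∈ sphere (0 : ℂ) r := by
    simp [abs_of_pos hr, Circle.norm_coe]
  let G : C(AddCircle (2 * Real.pi), ℂ) :=
    ⟨fun θ => (g (r * AddCircle.toCircle θ) : ℂ),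
      continuous_ofReal.comp (hg.comp_continuous (continuous_const.mul
        (continuous_subtype_val.comp AddCircle.continuous_toCircle)) hmem)⟩
  have hG : G ∈ (Submodule.span ℂ (range (@fourier (2 * Real.pi)))).topologicalClosure :=
    by
    rw [span_fourier_closure_eq_top]
    exact Submodule.mem_top
  obtain ⟨k, hk, hdist⟩ := Metric.mem_closure_iff.1 hG ε hε
  obtain ⟨p, q, hpq⟩ := exists_polynomial_of_mem_span_fourier hr.ne' hk
  refine ⟨p + q, fun z hz => ?_⟩
  obtain ⟨θ, rfl⟩ := exists_mul_toCircle_eq hz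
  have hre : g (r * AddCircle.toCircle θ) - ((p + q).eval ((r : ℂ) * AddCircle.toCircle θ)).re =
      ((G - k) θ).re := by
    rw [ContinuousMap.sub_apply, hpq θ]
    simp [G]
  calc _ = |((G - k) θ).re| := by rw [hre]
    _ ≤ ‖(G - k) θ‖ := abs_re_le_norm _
    _ ≤ ‖G - k‖ := (G - k).norm_coe_le_norm θ
    _ ≤ ε := dist_eq_norm G k ▸ hdist.le

lemma hasDerivAt_polynomial_line (p : Polynomial ℂ) (z e : ℂ) (t : ℝ) :
    HasDerivAt (fun t : ℝ => p.eval (z + t * e)) (e * p.derivative.eval (z + t * e)) t := by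
  have hline : HasDerivAt (fun s : ℂ => z + s * e) e (t : ℂ) := by
    simpa using ((hasDerivAt_id (t : ℂ)).mul_const e).const_add z
  rw [mul_comm]
  exact ((p.hasDerivAt _).comp (t : ℂ) hline).comp_ofReal

lemma hasLaplacianAt_re_polynomial (p : Polynomial ℂ) (z : ℂ) :
    HasLaplacianAt (fun w => (p.eval w).re) z 0 := by
  have hre {k : ℝ → ℂ} {k' : ℂ} {t : ℝ} (hk : HasDerivAt k k' t) :
      HasDerivAt (fun t => (k t).re) k'.re t := reCLM.hasFDerivAt.comp_hasDerivAt t hk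
  have hline (e : ℂ) : HasSecondDerivAtZero (fun t : ℝ => (p.eval (z + t * e)).re)
      (e * (e * p.derivative.derivative.eval z)).re := by
    refine ⟨_, Eventually.of_forall fun t => hre (hasDerivAt_polynomial_line p z e t), ?_⟩
    simpa using hre ((hasDerivAt_polynomial_line p.derivative z e 0).const_mul e)
  refine ⟨_, _, hline 1, hline I, ?_⟩
  rw [← mul_assoc I I, I_mul_I]
  simp

lemma hasSecondDerivAtZero_add_sq (x c : ℝ) :
    HasSecondDerivAtZero (fun t => (x + t) ^ 2 + c) 2 := by
  have hline (t : ℝ) : HasDerivAt (fun t => x + t) 1 t := (hasDerivAt_id t).const_add x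
  refine ⟨fun t => 2 * (x + t), Eventually.of_forall fun t => ?_, ?_⟩
  · simpa using ((hline t).pow 2).add_const c
  · simpa using (hline 0).const_mul 2

lemma hasLaplacianAt_normSq (z : ℂ) : HasLaplacianAt (fun w => normSq w) z 4 := by
  refine ⟨2, 2, ?_, ?_, by norm_num⟩
  · convert hasSecondDerivAtZero_add_sq z.re (z.im ^ 2) using 2
    simp [normSq_apply, sq]
  · convert hasSecondDerivAtZero_add_sq z.im (z.re ^ 2) using 2
    simp [normSq_apply, sq, add_comm]

lemma circleAverage_re_polynomial (p : Polynomial ℂ) (r : ℝ) :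
    Real.circleAverage (fun z => (p.eval z).re) 0 r = (p.eval 0).re :=
  InnerProductSpace.HarmonicOnNhd.circleAverage_eq fun z _ =>
    AnalyticAt.harmonicAt_re (p.differentiable.analyticAt z)

section

variable {G : ℂ → ℝ} {r : ℝ}

/-- The maximum principle is applied to `G - Re p + ε|z|²`, normalized to be nonpositive on the
circle, where `p` approximates `G` on the circle within `ε`. -/
lemma le_re_polynomial_add_of_laplacian_nonneg (hr : 0 ≤ r) (hG : ContinuousOn G (closedBall 0 r))
    (htest : ∀ z ∈ ball (0 : ℂ) r, ∃ σ l, TouchesFromBelow σ G z ∧ 0 ≤ l ∧ HasLaplacianAt σ z l)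
    {p : Polynomial ℂ} {ε : ℝ} (hε : 0 < ε)
    (hp : ∀ z ∈ sphere (0 : ℂ) r, |G z - (p.eval z).re| ≤ ε) :
    G 0 ≤ (p.eval 0).re + (1 + r ^ 2) * ε := by
  let τ : ℂ → ℝ := fun z => (-1) * (p.eval z).re + (ε * normSq z + (-ε - ε * r ^ 2))
  have hτ (z : ℂ) : HasLaplacianAt τ z ((-1) * 0 + (ε * 4 + 0)) :=
    ((hasLaplacianAt_re_polynomial p z).const_mul (-1)).add
      (((hasLaplacianAt_normSq z).const_mul ε).add (.const z _))
  have hτcont : Continuous τ := by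
    have := continuous_normSq
    fun_prop
  have hcenter : G 0 + τ 0 ≤ 0 := by
    refine nonpos_of_laplacian_pos (W := fun z => G z + τ z) hr (hG.add hτcont.continuousOn)
      (fun z hz => ?_) (fun z hz => ?_) (mem_closedBall_self hr)
    · have hnorm : normSq z = r ^ 2 := by
        rw [normSq_eq_norm_sq, mem_sphere_zero_iff_norm.1 hz]
      simp only [τ, hnorm]
      linarith [(abs_le.1 (hp z hz)).2]
    · obtain ⟨σ, l, hσ, hl, hlap⟩ := htest z hz
      exact ⟨_, _, hσ.add_right τ, by linarith, hlap.add (hτ z)⟩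
  simp only [τ, map_zero] at hcenter
  linarith

lemma le_circleAverage_of_laplacian_nonneg (hr : 0 < r) (hG : ContinuousOn G (closedBall 0 r))
    (htest : ∀ z ∈ ball (0 : ℂ) r, ∃ σ l, TouchesFromBelow σ G z ∧ 0 ≤ l ∧ HasLaplacianAt σ z l) :
    G 0 ≤ Real.circleAverage G 0 r := by
  have hGs : ContinuousOn G (sphere 0 r) := hG.mono sphere_subset_closedBall
  have happrox (ε : ℝ) (hε : 0 < ε) : G 0 ≤ Real.circleAverage G 0 r + (2 + r ^ 2) * ε := by
    obtain ⟨p, hp⟩ := exists_polynomial_near_on_sphere hr hGs hε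
    have hpcont : Continuous fun z : ℂ => (p.eval z).re := continuous_re.comp p.continuous
    have hmean : (p.eval 0).re ≤ Real.circleAverage G 0 r + ε := by
      rw [← circleAverage_re_polynomial p r, ← Real.circleAverage_const ε 0 r,
        ← Real.circleAverage_fun_add (hGs.circleIntegrable hr.le)
          (continuousOn_const.circleIntegrable hr.le)]
      refine Real.circleAverage_mono (hpcont.continuousOn.circleIntegrable hr.le)
        ((hGs.add continuousOn_const).circleIntegrable hr.le) fun z hz => ?_
      rw [abs_of_pos hr] at hz
      linarith [(abs_le.1 (hp z hz)).1]
    linarith [le_re_polynomial_add_of_laplacian_nonneg hr.le hG htest hε hp]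
  refine le_of_forall_pos_le_add fun η hη => ?_
  have hη' := happrox (η / (2 + r ^ 2)) (by positivity)
  rwa [mul_div_cancel₀ η (by positivity)] at hη'

end

section

variable {r : ℝ}

lemma abs_re_herglotzRieszKernel_sub_one_le {w z : ℂ} (hw : ‖w‖ < r / 2)
    (hz : z ∈ sphere (0 : ℂ) r) : |(herglotzRieszKernel 0 w z).re - 1| ≤ 4 / r * ‖w‖ := by
  have hw0 := norm_nonneg w
  have hr : 0 < r := by linarith
  have hwr : w ∈ ball (0 : ℂ) r := mem_ball_zero_iff.2 (by linarith)
  have hupper := re_herglotzRieszKernel_le hz hwr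
  have hlower := le_re_herglotzRieszKernel hz hwr
  rw [← herglotzRieszKernel_def, sub_zero] at hupper hlower
  have hcancel : 4 / r * ‖w‖ * r = 4 * ‖w‖ := by field_simp
  have hnonneg : 0 ≤ 4 / r * ‖w‖ := by positivity
  refine abs_le.2 ⟨le_trans ?_ (sub_le_sub_right hlower 1),
    (sub_le_sub_right hupper 1).trans ?_⟩
  · rw [le_sub_iff_add_le, le_div_iff₀ (by linarith)]
    nlinarith
  · rw [sub_le_iff_le_add, div_le_iff₀ (by linarith)]
    nlinarith

/-- Subtract the mean value formula from the Poisson formula. -/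
lemma abs_sub_le_circleAverage {L : ℂ → ℝ}
    (hL : InnerProductSpace.HarmonicOnNhd L (closedBall 0 r)) {w : ℂ} (hw : ‖w‖ < r / 2) :
    |L w - L 0| ≤ 4 / r * Real.circleAverage (fun z => |L z|) 0 r * ‖w‖ := by
  have hr : 0 < r := by linarith [norm_nonneg w]
  have hwr : w ∈ ball (0 : ℂ) r := mem_ball_zero_iff.2 (by linarith)
  have hLs : ContinuousOn L (sphere 0 r) := hL.continuousOn.mono sphere_subset_closedBall
  let P : ℂ → ℝ := re ∘ herglotzRieszKernel 0 w
  have hP : ContinuousOn P (sphere 0 r) := by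
    have hker := continuousOn_herglotzRieszKernel_sphere hwr
    rw [abs_of_pos hr] at hker
    exact continuous_re.comp_continuousOn hker
  have hPL : ContinuousOn (P • L) (sphere 0 r) := hP.smul hLs
  have hcenter : Real.circleAverage L 0 r = L 0 :=
    InnerProductSpace.HarmonicOnNhd.circleAverage_eq (by rwa [abs_of_pos hr])
  calc |L w - L 0| = |Real.circleAverage (P • L - L) 0 r| := by
        rw [Real.circleAverage_sub (hPL.circleIntegrable hr.le) (hLs.circleIntegrable hr.le),
          hL.circleAverage_re_herglotzRieszKernel_smul hwr, hcenter]
    _ ≤ Real.circleAverage (|P • L - L|) 0 r := Real.abs_circleAverage_le_circleAverage_abs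
    _ ≤ Real.circleAverage (fun z => (4 / r * ‖w‖) • |L z|) 0 r := by
        refine Real.circleAverage_mono ((hPL.sub hLs).abs.circleIntegrable hr.le)
          ((hLs.abs.fun_const_smul _).circleIntegrable hr.le) fun z hz => ?_
        rw [abs_of_pos hr] at hz
        have hfactor : (P • L - L) z = (P z - 1) * L z := by
          simp only [Pi.sub_apply, smul_eq_mul, Pi.mul_apply]
          ring
        rw [Pi.abs_apply, hfactor, abs_mul, smul_eq_mul]
        exact mul_le_mul_of_nonneg_right (abs_re_herglotzRieszKernel_sub_one_le hw hz)
          (abs_nonneg _)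
    _ = 4 / r * Real.circleAverage (fun z => |L z|) 0 r * ‖w‖ := by
        rw [Real.circleAverage_fun_smul, smul_eq_mul]
        ring

lemma abs_deriv_le_circleAverage {L : ℂ → ℝ} (hr : 0 < r)
    (hL : InnerProductSpace.HarmonicOnNhd L (closedBall 0 r)) {a : ℝ}
    (ha : HasDerivAt (fun t : ℝ => L t) a 0) :
    |a| ≤ 4 / r * Real.circleAverage (fun z => |L z|) 0 r := by
  have hA : 0 ≤ Real.circleAverage (fun z => |L z|) 0 r :=
    Real.circleAverage_nonneg_of_nonneg fun z _ => abs_nonneg _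
  refine ha.le_of_lip' (by positivity) ?_
  filter_upwards [ball_mem_nhds (0 : ℝ) (half_pos hr)] with t ht
  rw [mem_ball_zero_iff, ← norm_real] at ht
  simpa using abs_sub_le_circleAverage hL ht

end

end SubMeanValue

/-! ### Mean value estimates along conformal harmonic disks -/

section Laplacian

variable {E E' F : Type*} [NormedAddCommGroup E] [InnerProductSpace ℝ E] [FiniteDimensional ℝ E]
  [NormedAddCommGroup E'] [InnerProductSpace ℝ E'] [FiniteDimensional ℝ E']
  [NormedAddCommGroup F] [NormedSpace ℝ F]

open InnerProductSpace

lemma laplacian_comp_linearIsometryEquiv (f : E' → F) (e : E ≃ₗᵢ[ℝ] E') :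
    Laplacian.laplacian (f ∘ e) = Laplacian.laplacian f ∘ e := by
  rw [laplacian_eq_iteratedFDeriv_orthonormalBasis (f ∘ e) (stdOrthonormalBasis ℝ E),
    laplacian_eq_iteratedFDeriv_orthonormalBasis f ((stdOrthonormalBasis ℝ E).map e)]
  ext x
  refine Finset.sum_congr rfl fun i _ => ?_
  have hcomp := e.toContinuousLinearEquiv.iteratedFDerivWithin_comp_right f uniqueDiffOn_univ
    (mem_univ (e x)) 2
  rw [preimage_univ, iteratedFDerivWithin_univ, iteratedFDerivWithin_univ] at hcomp
  change iteratedFDeriv ℝ 2 (f ∘ e) x = _ at hcomp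
  rw [hcomp, ContinuousMultilinearMap.compContinuousLinearMap_apply]
  congr 1
  ext j
  fin_cases j <;> rfl

lemma harmonicOnNhd_comp_linearIsometryEquiv {f : E' → F} {s : Set E'} (hf : HarmonicOnNhd f s)
    (e : E ≃ₗᵢ[ℝ] E') : HarmonicOnNhd (f ∘ e) (e ⁻¹' s) := by
  intro x hx
  refine ⟨(hf (e x) hx).1.comp x e.contDiff.contDiffAt, ?_⟩
  rw [laplacian_comp_linearIsometryEquiv]
  exact e.continuous.continuousAt.eventually (hf (e x) hx).2

end Laplacian

lemma hasSecondDerivAtZero_comp {E : Type*} [NormedAddCommGroup E] [NormedSpace ℝ E] {Q : E → ℝ}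
    {k k' : ℝ → E} {a : E} (hk : ∀ᶠ t in nhds 0, HasDerivAt k (k' t) t) (hk' : HasDerivAt k' a 0)
    (hQ : ContDiffAt ℝ 2 Q (k 0)) :
    HasSecondDerivAtZero (Q ∘ k) (fderiv ℝ (fderiv ℝ Q) (k 0) (k' 0) (k' 0) +
      fderiv ℝ Q (k 0) a) := by
  have hk0 := hk.self_of_nhds
  refine ⟨fun t => fderiv ℝ Q (k t) (k' t), ?_, ?_⟩
  · filter_upwards [hk, hk0.continuousAt.eventually (hQ.eventually (by simp))] with t hkt hQt
    exact (hQt.differentiableAt (by norm_num)).hasFDerivAt.comp_hasDerivAt t hkt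
  · have hdQ : DifferentiableAt ℝ (fderiv ℝ Q) (k 0) :=
      (hQ.fderiv_right (m := 1) (by norm_num)).differentiableAt (by norm_num)
    exact (hdQ.hasFDerivAt.comp_hasDerivAt 0 hk0).clm_apply hk'

lemma sq_circleAverage_le {g : ℂ → ℝ} {c : ℂ} {r : ℝ} (hg : ContinuousOn g (sphere c |r|)) :
    Real.circleAverage g c r ^ 2 ≤ Real.circleAverage (fun z => g z ^ 2) c r := by
  set μ := Real.circleAverage g c r with hμ
  have hint {k : ℂ → ℝ} (hk : ContinuousOn k (sphere c |r|)) : CircleIntegrable k c r :=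
    hk.circleIntegrable'
  have hmono : Real.circleAverage (fun z => (2 * μ) • g z - μ ^ 2) c r ≤
      Real.circleAverage (fun z => g z ^ 2) c r := by
    refine Real.circleAverage_mono (hint (by fun_prop)) (hint (by fun_prop)) fun z _ => ?_
    rw [smul_eq_mul]
    linarith [sq_nonneg (g z - μ)]
  rw [Real.circleAverage_fun_sub (hint (by fun_prop)) (hint (by fun_prop)),
    Real.circleAverage_fun_smul, Real.circleAverage_const, ← hμ, smul_eq_mul] at hmono
  linarith

section Hessian

variable {d : ℕ} {Q R : Euc d → ℝ} {y : Euc d}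

lemma hessQ_eq_fderiv_fderiv (hQ : ContDiffAt ℝ 2 Q y) (v : Euc d) :
    hessQ Q y v = fderiv ℝ (fderiv ℝ Q) y v v := by
  have hdQ : DifferentiableAt ℝ (fderiv ℝ Q) y :=
    (hQ.fderiv_right (m := 1) (by norm_num)).differentiableAt (by norm_num)
  rw [hessQ, fderiv_clm_apply hdQ (differentiableAt_const v)]
  simp

lemma hessQ_add (hQ : ContDiffAt ℝ 2 Q y) (hR : ContDiffAt ℝ 2 R y) (v : Euc d) :
    hessQ (fun y => Q y + R y) y v = hessQ Q y v + hessQ R y v := by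
  have hdiff {S : Euc d → ℝ} (hS : ContDiffAt ℝ 2 S y) :
      DifferentiableAt ℝ (fun y => fderiv ℝ S y v) y :=
    ((hS.fderiv_right (m := 1) (by norm_num)).differentiableAt (by norm_num)).clm_apply
      (differentiableAt_const v)
  have hfderiv : (fun z => fderiv ℝ (fun y => Q y + R y) z v) =ᶠ[nhds y]
      fun z => fderiv ℝ Q z v + fderiv ℝ R z v := by
    filter_upwards [hQ.eventually (by simp), hR.eventually (by simp)] with z hQz hRz
    rw [fderiv_fun_add (hQz.differentiableAt (by norm_num)) (hRz.differentiableAt (by norm_num)),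
      add_apply]
  rw [hessQ, hfderiv.fderiv_eq, fderiv_fun_add (hdiff hQ) (hdiff hR)]
  rfl

lemma contDiff_norm_sq_sub (x : Euc d) (a b : ℝ) :
    ContDiff ℝ 2 (fun y : Euc d => a * (‖y - x‖ ^ 2 - b)) :=
  contDiff_const.mul
    (((contDiff_norm_sq ℝ).comp (contDiff_id.sub contDiff_const)).sub contDiff_const)

lemma hessQ_norm_sq_sub (x y v : Euc d) (a b : ℝ) :
    hessQ (fun y => a * (‖y - x‖ ^ 2 - b)) y v = 2 * a * ‖v‖ ^ 2 := by
  have hfderiv (y : Euc d) : HasFDerivAt (fun y : Euc d => a * (‖y - x‖ ^ 2 - b))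
      (a • 2 • (innerSL ℝ (y - x) ∘L .id ℝ (Euc d))) y :=
    ((((hasFDerivAt_id y).sub_const x).norm_sq).sub_const b).const_mul a
  have hgrad : (fun y => fderiv ℝ (fun y : Euc d => a * (‖y - x‖ ^ 2 - b)) y v) =
      fun y => (2 * a) * innerSL ℝ v (y - x) := by
    ext y
    rw [(hfderiv y).fderiv]
    simp only [ContinuousLinearMap.comp_id, smul_apply, innerSL_apply_apply, smul_eq_mul,
      nsmul_eq_mul, Nat.cast_ofNat, real_inner_comm v]
    ring
  have hlin : HasFDerivAt (fun y : Euc d => (2 * a) * innerSL ℝ v (y - x))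
      ((2 * a) • innerSL ℝ v) y :=
    ((innerSL ℝ v).hasFDerivAt.comp y ((hasFDerivAt_id y).sub_const x)).const_mul (2 * a)
  rw [hessQ, hgrad, hlin.fderiv]
  simp

end Hessian

/-- The isometry `ℂ ≃ ℝ²` along which complex analysis is applied to conformal harmonic disks. -/
def planeIsometry : ℂ ≃ₗᵢ[ℝ] Euc 2 := Complex.orthonormalBasisOneI.repr

lemma planeIsometry_one : planeIsometry 1 = EuclideanSpace.single 0 1 := by
  simpa [planeIsometry] using Complex.orthonormalBasisOneI.repr_self 0

lemma planeIsometry_I : planeIsometry Complex.I = EuclideanSpace.single 1 1 := by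
  simpa [planeIsometry] using Complex.orthonormalBasisOneI.repr_self 1

lemma planeIsometry_mem_unitDisk {z : ℂ} (hz : z ∈ ball (0 : ℂ) 1) :
    planeIsometry z ∈ unitDisk := by
  rwa [mem_unitDisk_iff, LinearIsometryEquiv.norm_map, ← mem_ball_zero_iff]

section Disk

variable {d : ℕ} {f : Euc 2 → Euc d} {D : Set (Euc d)} {x : Euc d}

namespace ConformalHarmonicOnDisk

open InnerProductSpace

lemma continuousOn_comp_planeIsometry (hf : ConformalHarmonicOnDisk f) :
    ContinuousOn (f ∘ planeIsometry) (ball 0 1) :=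
  hf.1.continuousOn.comp planeIsometry.continuous.continuousOn fun _ => planeIsometry_mem_unitDisk

lemma hasSecondDerivAtZero_comp (hf : ConformalHarmonicOnDisk f) {Q : Euc d → ℝ} {ζ : Euc 2}
    (hζ : ζ ∈ unitDisk) (hQ : ContDiffAt ℝ 2 Q (f ζ)) (i : Fin 2) :
    HasSecondDerivAtZero (fun t : ℝ => Q (f (ζ + t • EuclideanSpace.single i 1)))
      (hessQ Q (f ζ) (pd i f ζ) + fderiv ℝ Q (f ζ) (pd i (pd i f) ζ)) := by
  set e : Euc 2 := EuclideanSpace.single i 1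
  have hline (t : ℝ) : HasDerivAt (fun t : ℝ => ζ + t • e) e t := by
    simpa using ((hasDerivAt_id t).smul_const e).const_add ζ
  have hzero : ζ + (0 : ℝ) • e = ζ := by simp
  have hfline : ∀ᶠ t in nhds (0 : ℝ),
      HasDerivAt (fun t : ℝ => f (ζ + t • e)) (pd i f (ζ + t • e)) t := by
    filter_upwards [(hline 0).continuousAt.eventually
      (isOpen_unitDisk.mem_nhds (by simpa using hζ))] with t ht
    exact (hf.differentiableAt ht).hasFDerivAt.comp_hasDerivAt t (hline t)
  have hpd : HasDerivAt (fun t : ℝ => pd i f (ζ + t • e)) (pd i (pd i f) ζ) 0 :=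
    (hf.differentiableAt_pd i hζ).hasFDerivAt.comp_hasDerivAt_of_eq 0 (hline 0) hzero.symm
  have hsecond := _root_.hasSecondDerivAtZero_comp (Q := Q) hfline hpd (by rwa [hzero])
  rw [hzero] at hsecond
  rwa [hessQ_eq_fderiv_fderiv hQ]

lemma hasLaplacianAt_comp (hf : ConformalHarmonicOnDisk f) {Q : Euc d → ℝ} {z : ℂ}
    (hz : z ∈ ball (0 : ℂ) 1) (hQ : ContDiffAt ℝ 2 Q (f (planeIsometry z))) :
    HasLaplacianAt (fun w => Q (f (planeIsometry w))) z
      (hessQ Q (f (planeIsometry z)) (pd 0 f (planeIsometry z)) +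
        hessQ Q (f (planeIsometry z)) (pd 1 f (planeIsometry z))) := by
  have hζ := planeIsometry_mem_unitDisk hz
  have hline (e : ℂ) (t : ℝ) :
      planeIsometry (z + t * e) = planeIsometry z + t • planeIsometry e := by
    rw [map_add, ← map_smul, Complex.real_smul]
  have hx := hf.hasSecondDerivAtZero_comp hζ hQ 0
  have hy := hf.hasSecondDerivAtZero_comp hζ hQ 1
  simp only [← planeIsometry_one, ← hline] at hx
  simp only [← planeIsometry_I, ← hline] at hy
  refine ⟨_, _, hx, hy, ?_⟩
  rw [add_add_add_comm, ← map_add]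
  simp [hf.pd_pd_add hζ]

lemma harmonicOnNhd (hf : ConformalHarmonicOnDisk f) : HarmonicOnNhd f unitDisk := by
  intro z hz
  refine ⟨hf.contDiffAt hz, ?_⟩
  filter_upwards [isOpen_unitDisk.mem_nhds hz] with w hw
  have hsecond (i : Fin 2) : fderiv ℝ (fderiv ℝ f) w (EuclideanSpace.single i 1)
      (EuclideanSpace.single i 1) = pd i (pd i f) w := by
    have hdf : DifferentiableAt ℝ (fderiv ℝ f) w :=
      ((hf.contDiffAt hw).fderiv_right (m := 1) (by norm_num)).differentiableAt (by norm_num)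
    unfold pd
    rw [fderiv_clm_apply hdf (differentiableAt_const _)]
    simp
  rw [laplacian_eq_iteratedFDeriv_orthonormalBasis f (EuclideanSpace.basisFun (Fin 2) ℝ)]
  simp [iteratedFDeriv_two_apply, hsecond, hf.pd_pd_add hw]

lemma harmonicOnNhd_clm_comp (hf : ConformalHarmonicOnDisk f) (T : Euc d →L[ℝ] ℝ) (x : Euc d) :
    HarmonicOnNhd (fun z : ℂ => T (f (planeIsometry z) - x)) (ball 0 1) := by
  have hcomp := (harmonicOnNhd_comp_linearIsometryEquiv hf.harmonicOnNhd planeIsometry).mono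
    fun z (hz : z ∈ ball (0 : ℂ) 1) => planeIsometry_mem_unitDisk hz
  exact (hcomp.sub (harmonicOnNhd_const x)).comp_CLM T

end ConformalHarmonicOnDisk

lemma IsCenteredDisk.continuousOn_sub (hf : IsCenteredDisk D x f) {s : Set ℂ}
    (hs : s ⊆ ball 0 1) : ContinuousOn (fun z => f (planeIsometry z) - x) s :=
  (hf.conformalHarmonic.continuousOn_comp_planeIsometry.mono hs).sub continuousOn_const

lemma IsCenteredDisk.abs_clm_pd_le (hf : IsCenteredDisk D x f) (T : Euc d →L[ℝ] ℝ) :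
    |T (pd 0 f 0)| ≤
      8 * Real.circleAverage (fun z => |T (f (planeIsometry z) - x)|) 0 (1 / 2) := by
  have hline : HasDerivAt (fun t : ℝ => planeIsometry (t : ℂ)) (EuclideanSpace.single 0 1) 0 := by
    rw [← planeIsometry_one]
    exact planeIsometry.toContinuousLinearEquiv.hasFDerivAt.comp_hasDerivAt (0 : ℝ)
      Complex.ofRealCLM.hasDerivAt
  have hfline : HasDerivAt (fun t : ℝ => f (planeIsometry (t : ℂ))) (pd 0 f 0) 0 :=
    (hf.conformalHarmonic.differentiableAt zero_mem_unitDisk).hasFDerivAt.comp_hasDerivAt_of_eq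
      (0 : ℝ) hline (by simp)
  have hbound := abs_deriv_le_circleAverage one_half_pos
    ((hf.conformalHarmonic.harmonicOnNhd_clm_comp T x).mono
      (closedBall_subset_ball one_half_lt_one))
    (T.hasFDerivAt.comp_hasDerivAt (0 : ℝ) (hfline.sub_const x))
  norm_num at hbound ⊢
  exact hbound

end Disk

section Barrier

variable {d : ℕ} {D : Set (Euc d)} {φ : Euc d → ℝ} {c : ℝ} {f : Euc 2 → Euc d} {x : Euc d}

/-- Lower bound for the trace of the Hessian of `Q` at `y` on planes. The pair `v, w` is orthogonal
and of equal length rather than orthonormal, which avoids normalizing the partial derivatives of a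
conformal map; `‖v‖ ^ 2` is then the corresponding weight. -/
def PlanarHessianTraceGE (Q : Euc d → ℝ) (y : Euc d) (k : ℝ) : Prop :=
  ∀ v w : Euc d, ‖v‖ = ‖w‖ → ⟪v, w⟫ = 0 → k * ‖v‖ ^ 2 ≤ hessQ Q y v + hessQ Q y w

/-- `φ` is a negative continuous function on `D` which is strongly minimally plurisubharmonic in
the viscosity sense: `φ - c ‖·‖²` has lower test functions whose Hessian has nonnegative trace on
every plane. Such a barrier bounds the conformal harmonic disks in `D`. -/
structure IsMinimalBarrier (D : Set (Euc d)) (φ : Euc d → ℝ) (c : ℝ) : Prop where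
  pos : 0 < c
  continuousOn : ContinuousOn φ D
  neg : ∀ y ∈ D, φ y < 0
  exists_test : ∀ y ∈ D, ∃ Q : Euc d → ℝ, ContDiffAt ℝ 2 Q y ∧ TouchesFromBelow Q φ y ∧
    PlanarHessianTraceGE Q y (4 * c)

namespace IsMinimalBarrier

lemma exists_test_comp_disk (hφ : IsMinimalBarrier D φ c) (hf : ConformalHarmonicOnDisk f)
    (hfD : MapsTo f unitDisk D) (x : Euc d) {z : ℂ} (hz : z ∈ ball (0 : ℂ) 1) :
    ∃ σ l, TouchesFromBelow σ (fun z => φ (f (planeIsometry z)) +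
      -c * (‖f (planeIsometry z) - x‖ ^ 2 - 0)) z ∧ 0 ≤ l ∧ HasLaplacianAt σ z l := by
  have hζ := planeIsometry_mem_unitDisk hz
  obtain ⟨Q, hQ, htouch, htrace⟩ := hφ.exists_test _ (hfD hζ)
  have hcont : ContinuousAt (f ∘ planeIsometry) z :=
    hf.continuousOn_comp_planeIsometry.continuousAt (isOpen_ball.mem_nhds hz)
  have hsq := (contDiff_norm_sq_sub x (-c) 0).contDiffAt (x := f (planeIsometry z))
  refine ⟨_, _, (htouch.add_right fun y => -c * (‖y - x‖ ^ 2 - 0)).comp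
    (k := f ∘ planeIsometry) hcont, ?_, hf.hasLaplacianAt_comp hz (hQ.add hsq)⟩
  rw [hessQ_add hQ hsq, hessQ_add hQ hsq, hessQ_norm_sq_sub, hessQ_norm_sq_sub,
    ← hf.norm_pd_eq hζ]
  linarith [htrace _ _ (hf.norm_pd_eq hζ) (hf.inner_pd hζ)]

lemma circleAverage_norm_sq_le (hφ : IsMinimalBarrier D φ c) (hf : IsCenteredDisk D x f) {r : ℝ}
    (hr0 : 0 < r) (hr1 : r < 1) :
    Real.circleAverage (fun z => ‖f (planeIsometry z) - x‖ ^ 2) 0 r ≤ -φ x / c := by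
  have hball : closedBall (0 : ℂ) r ⊆ ball 0 1 := closedBall_subset_ball hr1
  have hmem (z : ℂ) (hz : z ∈ closedBall (0 : ℂ) r) : f (planeIsometry z) ∈ D :=
    hf.mapsTo (planeIsometry_mem_unitDisk (hball hz))
  have hφcont : ContinuousOn (fun z => φ (f (planeIsometry z))) (closedBall 0 r) :=
    hφ.continuousOn.comp (hf.conformalHarmonic.continuousOn_comp_planeIsometry.mono hball)
      hmem
  have hsq : ContinuousOn (fun z => ‖f (planeIsometry z) - x‖ ^ 2) (closedBall 0 r) :=
    (hf.continuousOn_sub hball).norm.pow 2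
  have hG : ContinuousOn (fun z => φ (f (planeIsometry z)) +
      -c * (‖f (planeIsometry z) - x‖ ^ 2 - 0)) (closedBall 0 r) :=
    hφcont.add (continuousOn_const.mul (hsq.sub continuousOn_const))
  have hsub := le_circleAverage_of_laplacian_nonneg hr0 hG fun z hz =>
    hφ.exists_test_comp_disk hf.conformalHarmonic hf.mapsTo x (hball (ball_subset_closedBall hz))
  have hneg : φ x ≤ -c * Real.circleAverage (fun z => ‖f (planeIsometry z) - x‖ ^ 2) 0 r := by
    calc φ x = φ (f (planeIsometry 0)) + -c * (‖f (planeIsometry 0) - x‖ ^ 2 - 0) := by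
          simp [hf.map_zero]
      _ ≤ _ := hsub
      _ ≤ Real.circleAverage (fun z => (-c) • ‖f (planeIsometry z) - x‖ ^ 2) 0 r := by
        refine Real.circleAverage_mono
          ((hG.mono sphere_subset_closedBall).circleIntegrable hr0.le)
          (((hsq.const_smul (-c)).mono sphere_subset_closedBall).circleIntegrable hr0.le)
          fun z hz => ?_
        rw [abs_of_pos hr0] at hz
        rw [smul_eq_mul]
        linarith [hφ.neg _ (hmem z (sphere_subset_closedBall hz))]
      _ = _ := by rw [Real.circleAverage_fun_smul, smul_eq_mul]
  rw [le_div_iff₀ hφ.pos]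
  linarith

lemma norm_pd_le (hφ : IsMinimalBarrier D φ c) (hf : IsCenteredDisk D x f) :
    ‖pd 0 f 0‖ ≤ 8 * √(-φ x / c) := by
  set a := pd 0 f 0
  rcases eq_or_ne a 0 with ha | ha
  · rw [ha, norm_zero]
    positivity
  have hsub : sphere (0 : ℂ) |1 / 2| ⊆ ball 0 1 := by
    rw [abs_of_pos one_half_pos]
    exact sphere_subset_closedBall.trans (closedBall_subset_ball one_half_lt_one)
  have hfcont := hf.continuousOn_sub hsub
  have hmean : Real.circleAverage (fun z => ‖f (planeIsometry z) - x‖) 0 (1 / 2) ≤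
      √(-φ x / c) :=
    Real.le_sqrt_of_sq_le ((sq_circleAverage_le hfcont.norm).trans
      (hφ.circleAverage_norm_sq_le hf one_half_pos one_half_lt_one))
  refine le_of_mul_le_mul_left ?_ (norm_pos_iff.2 ha)
  calc ‖a‖ * ‖a‖ = |innerSL ℝ a a| := by
        rw [innerSL_apply_apply, real_inner_self_eq_norm_mul_norm, abs_of_nonneg (by positivity)]
    _ ≤ 8 * Real.circleAverage (fun z => |innerSL ℝ a (f (planeIsometry z) - x)|) 0 (1 / 2) :=
        hf.abs_clm_pd_le _
    _ ≤ 8 * Real.circleAverage (fun z => ‖a‖ • ‖f (planeIsometry z) - x‖) 0 (1 / 2) := by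
        refine mul_le_mul_of_nonneg_left (Real.circleAverage_mono ?_ ?_ ?_) (by norm_num)
        · exact ((innerSL ℝ a).continuous.comp_continuousOn' hfcont).abs.circleIntegrable'
        · exact (hfcont.norm.fun_const_smul ‖a‖).circleIntegrable'
        · exact fun z _ => abs_real_inner_le_norm a (f (planeIsometry z) - x)
    _ = ‖a‖ * (8 * Real.circleAverage (fun z => ‖f (planeIsometry z) - x‖) 0 (1 / 2)) := by
        rw [Real.circleAverage_fun_smul, smul_eq_mul]
        ring
    _ ≤ ‖a‖ * (8 * √(-φ x / c)) := by gcongr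

/-- Since `T (f - x)` has mean zero, the mean of its modulus is controlled by its upper bound. -/
lemma abs_clm_pd_le_of_quadratic (hφ : IsMinimalBarrier D φ c) (hf : IsCenteredDisk D x f)
    (T : Euc d →L[ℝ] ℝ) {N K : ℝ} (hN : 0 ≤ N) (hK : 0 ≤ K)
    (hT : ∀ y ∈ D, T (y - x) ≤ N + K * ‖y - x‖ ^ 2) :
    |T (pd 0 f 0)| ≤ 16 * (N + K * (-φ x / c)) := by
  have hsub : sphere (0 : ℂ) |1 / 2| ⊆ ball 0 1 := by
    rw [abs_of_pos one_half_pos]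
    exact sphere_subset_closedBall.trans (closedBall_subset_ball one_half_lt_one)
  have hfcont := hf.continuousOn_sub hsub
  have hTcont : ContinuousOn (fun z => T (f (planeIsometry z) - x)) (sphere 0 |1 / 2|) :=
    T.continuous.comp_continuousOn hfcont
  have hsq : ContinuousOn (fun z => (2 * K) • ‖f (planeIsometry z) - x‖ ^ 2) (sphere 0 |1 / 2|) :=
    (hfcont.norm.fun_pow 2).fun_const_smul (2 * K)
  have hupper := (continuousOn_const (c := 2 * N)).fun_add hsq
  have hzero : Real.circleAverage (fun z => T (f (planeIsometry z) - x)) 0 (1 / 2) = 0 := by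
    rw [InnerProductSpace.HarmonicOnNhd.circleAverage_eq]
    · simp [hf.map_zero]
    · rw [abs_of_pos one_half_pos]
      exact (hf.conformalHarmonic.harmonicOnNhd_clm_comp T x).mono
        (closedBall_subset_ball one_half_lt_one)
  have hmean : Real.circleAverage (fun z => |T (f (planeIsometry z) - x)|) 0 (1 / 2) ≤
      2 * N + 2 * K * (-φ x / c) := by
    calc _ ≤ Real.circleAverage (fun z => (2 * N + (2 * K) • ‖f (planeIsometry z) - x‖ ^ 2) -
          T (f (planeIsometry z) - x)) 0 (1 / 2) := by
          refine Real.circleAverage_mono hTcont.abs.circleIntegrable'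
            (hupper.sub hTcont).circleIntegrable' fun z hz => ?_
          have hbound := hT _ (hf.mapsTo (planeIsometry_mem_unitDisk (hsub hz)))
          have hnonneg : 0 ≤ N + K * ‖f (planeIsometry z) - x‖ ^ 2 := by positivity
          rw [smul_eq_mul]
          exact abs_le'.2 ⟨by linarith, by linarith⟩
      _ = 2 * N + 2 * K *
          Real.circleAverage (fun z => ‖f (planeIsometry z) - x‖ ^ 2) 0 (1 / 2) := by
          rw [Real.circleAverage_fun_sub hupper.circleIntegrable' hTcont.circleIntegrable',
            Real.circleAverage_fun_add continuousOn_const.circleIntegrable' hsq.circleIntegrable',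
            Real.circleAverage_fun_smul, Real.circleAverage_const, hzero, smul_eq_mul, sub_zero]
      _ ≤ 2 * N + 2 * K * (-φ x / c) := by
          gcongr
          exact hφ.circleAverage_norm_sq_le hf one_half_pos one_half_lt_one
  linarith [hf.abs_clm_pd_le T]

lemma div_nonneg (hφ : IsMinimalBarrier D φ c) (hx : x ∈ D) : 0 ≤ -φ x / c :=
  _root_.div_nonneg (neg_nonneg.2 (hφ.neg x hx).le) hφ.pos.le

lemma norm_le_minMetric (hd : 2 ≤ d) (hD : IsOpen D) (hφ : IsMinimalBarrier D φ c) (hx : x ∈ D)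
    (v : Euc d) : ‖v‖ ≤ 8 * √(-φ x / c) * minMetric D x v :=
  norm_le_mul_minMetric hd hD hx (.id ℝ _) (by positivity) (fun _ => hφ.norm_pd_le) v

lemma abs_clm_le_minMetric (hd : 2 ≤ d) (hD : IsOpen D) (hφ : IsMinimalBarrier D φ c) (hx : x ∈ D)
    (T : Euc d →L[ℝ] ℝ) {N K : ℝ} (hN : 0 ≤ N) (hK : 0 ≤ K)
    (hT : ∀ y ∈ D, T (y - x) ≤ N + K * ‖y - x‖ ^ 2) (v : Euc d) :
    |T v| ≤ 16 * (N + K * (-φ x / c)) * minMetric D x v := by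
  have hdiv := hφ.div_nonneg hx
  exact norm_le_mul_minMetric hd hD hx T (by positivity)
    (fun _ hf => hφ.abs_clm_pd_le_of_quadratic hf T hN hK hT) v

end IsMinimalBarrier

end Barrier

/-! ### The defining function near the boundary -/

section General

variable {E F : Type*} [NormedAddCommGroup E] [NormedSpace ℝ E] [NormedAddCommGroup F]
  [NormedSpace ℝ F]

lemma norm_sub_sub_fderiv_le_of_convex {s : Set E} (hs : Convex ℝ s) {f : E → F} {M : ℝ}
    (hf : ∀ x ∈ s, ContDiffAt ℝ 2 f x) (hM : ∀ x ∈ s, ‖fderiv ℝ (fderiv ℝ f) x‖ ≤ M) {a b : E}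
    (ha : a ∈ s) (hb : b ∈ s) : ‖f b - f a - fderiv ℝ f a (b - a)‖ ≤ M * ‖b - a‖ ^ 2 := by
  have hM0 : 0 ≤ M := (ContinuousLinearMap.opNorm_nonneg _).trans (hM a ha)
  have hlip (x : E) (hx : x ∈ segment ℝ a b) :
      ‖fderiv ℝ f x - fderiv ℝ f a‖ ≤ M * ‖b - a‖ := by
    refine (hs.norm_image_sub_le_of_norm_fderiv_le (𝕜 := ℝ) (fun y hy => ?_) hM ha
      (hs.segment_subset ha hb hx)).trans ?_
    · exact ((hf y hy).fderiv_right (m := 1) (by norm_num)).differentiableAt (by norm_num)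
    · exact mul_le_mul_of_nonneg_left (norm_sub_le_of_mem_segment hx) hM0
  have hmean := (convex_segment a b).norm_image_sub_le_of_norm_hasFDerivWithin_le' (𝕜 := ℝ)
    (fun x hx => ((hf x (hs.segment_subset ha hb hx)).differentiableAt
      (by norm_num)).hasFDerivAt.hasFDerivWithinAt)
    hlip (left_mem_segment ℝ a b) (right_mem_segment ℝ a b)
  rwa [mul_assoc, ← pow_two] at hmean

lemma exists_fderiv_bounds_of_isCompact [ProperSpace E] {K U : Set E} {f : E → F}
    (hK : IsCompact K) (hU : IsOpen U) (hKU : K ⊆ U) (hf : ContDiffOn ℝ 2 f U)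
    (hgrad : ∀ x ∈ K, fderiv ℝ f x ≠ 0) :
    ∃ ε m M : ℝ, 0 < ε ∧ 0 < m ∧ 0 < M ∧ ∀ x ∈ cthickening ε K,
      x ∈ U ∧ m ≤ ‖fderiv ℝ f x‖ ∧ ‖fderiv ℝ f x‖ ≤ M ∧ ‖fderiv ℝ (fderiv ℝ f) x‖ ≤ M := by
  have hC1 : ContDiffOn ℝ 1 (fderiv ℝ f) U := hf.fderiv_of_isOpen hU (by norm_num)
  obtain ⟨ε, hε, hN⟩ := hK.exists_cthickening_subset_open
    (hC1.continuousOn.isOpen_inter_preimage hU isOpen_ne) fun x hx => ⟨hKU hx, hgrad x hx⟩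
  have hNU : cthickening ε K ⊆ U := fun x hx => (hN hx).1
  have hNc : IsCompact (cthickening ε K) := hK.cthickening
  obtain ⟨m, hm, hmN⟩ := hNc.exists_forall_le' (hC1.continuousOn.mono hNU).norm (a := 0)
    fun x hx => norm_pos_iff.2 (hN hx).2
  obtain ⟨M₁, hM₁⟩ := hNc.exists_bound_of_continuousOn (hC1.continuousOn.mono hNU)
  obtain ⟨M₂, hM₂⟩ := hNc.exists_bound_of_continuousOn
    ((hC1.continuousOn_fderiv_of_isOpen hU (by norm_num)).mono hNU)
  exact ⟨ε, m, max 1 (max M₁ M₂), hε, hm, by positivity, fun x hx => ⟨hNU hx, hmN x hx,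
    (hM₁ x hx).trans ((le_max_left _ _).trans (le_max_right _ _)),
    (hM₂ x hx).trans ((le_max_right _ _).trans (le_max_right _ _))⟩⟩

lemma nonempty_compl_of_isBounded [Nontrivial E] {s : Set E} (hs : Bornology.IsBounded s) :
    sᶜ.Nonempty := by
  rw [nonempty_compl]
  rintro rfl
  exact NormedSpace.unbounded_univ ℝ E hs

end General

lemma isCompact_frontier_of_isBounded {X : Type*} [PseudoMetricSpace X] [ProperSpace X] {s : Set X}
    (hs : Bornology.IsBounded s) : IsCompact (frontier s) :=
  hs.isCompact_closure.of_isClosed_subset isClosed_frontier frontier_subset_closure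

section Hessian

variable {d : ℕ} {u Q : Euc d → ℝ} {y : Euc d}

lemma planarHessianTraceGE_of_unit (hQ : ContDiffAt ℝ 2 Q y) {k : ℝ}
    (h : ∀ v w : Euc d, ‖v‖ = 1 → ‖w‖ = 1 → ⟪v, w⟫ = 0 → k ≤ hessQ Q y v + hessQ Q y w) :
    PlanarHessianTraceGE Q y k := by
  intro v w hvw horth
  rcases eq_or_ne v 0 with rfl | hv
  · obtain rfl : w = 0 := by rw [← norm_eq_zero, ← hvw, norm_zero]
    simp [hessQ_eq_fderiv_fderiv hQ]
  · have hv0 : ‖v‖ ≠ 0 := norm_ne_zero_iff.2 hv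
    have hunit := h (‖v‖⁻¹ • v) (‖v‖⁻¹ • w)
      (by rw [norm_smul, norm_inv, norm_norm, inv_mul_cancel₀ hv0])
      (by rw [norm_smul, norm_inv, norm_norm, ← hvw, inv_mul_cancel₀ hv0])
      (by rw [real_inner_smul_left, real_inner_smul_right, horth, mul_zero, mul_zero])
    rw [hessQ_eq_fderiv_fderiv hQ, hessQ_eq_fderiv_fderiv hQ] at hunit ⊢
    simp only [map_smul, smul_apply, smul_eq_mul] at hunit
    calc k * ‖v‖ ^ 2 ≤ _ := mul_le_mul_of_nonneg_right hunit (sq_nonneg ‖v‖)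
      _ = _ := by field_simp

lemma PlanarHessianTraceGE.mono {k l : ℝ} (h : PlanarHessianTraceGE Q y l) (hkl : k ≤ l) :
    PlanarHessianTraceGE Q y k := fun v w hvw horth =>
  (mul_le_mul_of_nonneg_right hkl (sq_nonneg _)).trans (h v w hvw horth)

lemma planarHessianTraceGE_norm_sq_sub (x y : Euc d) (a b : ℝ) :
    PlanarHessianTraceGE (fun y => a * (‖y - x‖ ^ 2 - b)) y (4 * a) := by
  intro v w hvw _
  rw [hessQ_norm_sq_sub, hessQ_norm_sq_sub, ← hvw]
  linarith

lemma continuousAt_hessQ (hu : ContDiffAt ℝ 2 u y) (v : Euc d) :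
    ContinuousAt (fun p : Euc d × Euc d => fderiv ℝ (fderiv ℝ u) p.1 p.2 p.2) (y, v) := by
  have hfst : ContinuousAt (fun p : Euc d × Euc d => fderiv ℝ (fderiv ℝ u) p.1) (y, v) :=
    ((hu.fderiv_right (m := 1) (by norm_num)).continuousAt_fderiv (by norm_num)).comp
      (f := Prod.fst) continuousAt_fst
  exact (hfst.clm_apply continuousAt_snd).clm_apply continuousAt_snd

lemma exists_planarHessianTraceGE_of_isCompact {N : Set (Euc d)} (hN : IsCompact N)
    (hu : ∀ x ∈ N, ContDiffAt ℝ 2 u x)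
    (hpos : ∀ x ∈ N, ∀ v w : Euc d, ‖v‖ = 1 → ‖w‖ = 1 → ⟪v, w⟫ = 0 →
      0 < hessQ u x v + hessQ u x w) :
    ∃ k > 0, ∀ x ∈ N, PlanarHessianTraceGE u x k := by
  let S := (N ×ˢ (sphere (0 : Euc d) 1 ×ˢ sphere (0 : Euc d) 1)) ∩
    {q | ⟪q.2.1, q.2.2⟫ = 0}
  have hScompact : IsCompact S :=
    (hN.prod ((isCompact_sphere 0 1).prod (isCompact_sphere 0 1))).inter_right
      (isClosed_eq (by fun_prop) continuous_const)
  obtain ⟨k, hk, hle⟩ := hScompact.exists_forall_le' (a := 0)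
    (f := fun q => fderiv ℝ (fderiv ℝ u) q.1 q.2.1 q.2.1 + fderiv ℝ (fderiv ℝ u) q.1 q.2.2 q.2.2)
    (fun q hq => by
      have hcont := continuousAt_hessQ (hu q.1 hq.1.1)
      exact (((hcont q.2.1).comp (f := fun q : Euc d × Euc d × Euc d => (q.1, q.2.1))
        (by fun_prop)).add ((hcont q.2.2).comp (f := fun q : Euc d × Euc d × Euc d =>
          (q.1, q.2.2)) (by fun_prop))).continuousWithinAt)
    (fun q ⟨⟨hx, hv, hw⟩, horth⟩ => by
      have := hpos q.1 hx q.2.1 q.2.2 (by simpa using hv) (by simpa using hw) horth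
      rwa [hessQ_eq_fderiv_fderiv (hu _ hx), hessQ_eq_fderiv_fderiv (hu _ hx)] at this)
  refine ⟨k, hk, fun x hx => planarHessianTraceGE_of_unit (hu x hx) fun v w hv hw horth => ?_⟩
  rw [hessQ_eq_fderiv_fderiv (hu x hx), hessQ_eq_fderiv_fderiv (hu x hx)]
  exact hle (x, v, w) ⟨⟨hx, by simpa using hv, by simpa using hw⟩, horth⟩

end Hessian

section Boundary

/-- The distance `δ_D(x)` from `x` to the boundary of `D`, defined as the distance to `Dᶜ` so that
it vanishes outside `D`. -/
def boundaryDist {X : Type*} [PseudoMetricSpace X] (D : Set X) (x : X) : ℝ := infDist x Dᶜ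

section BoundaryDist

variable {X : Type*} [PseudoMetricSpace X] {D : Set X} {x y : X}

lemma boundaryDist_nonneg : 0 ≤ boundaryDist D x := infDist_nonneg

lemma continuous_boundaryDist : Continuous (boundaryDist D) := continuous_infDist_pt _

lemma boundaryDist_le_add_dist : boundaryDist D y ≤ boundaryDist D x + dist y x :=
  infDist_le_infDist_add_dist

lemma boundaryDist_le_dist (hy : y ∉ D) : boundaryDist D x ≤ dist x y := infDist_le_dist_of_mem hy

lemma ball_boundaryDist_subset : ball x (boundaryDist D x) ⊆ D := by
  intro y hy
  by_contra hyD
  rw [mem_ball, dist_comm] at hy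
  exact hy.not_ge (boundaryDist_le_dist hyD)

end BoundaryDist

variable {d : ℕ} {D : Set (Euc d)} {u : Euc d → ℝ} {ε m M k : ℝ}

/-- `u` is a defining function of the bounded domain `D`, controlled on the `ε`-neighbourhood of
`∂D`: its gradient has norm between `m` and `M`, its second-order Taylor remainder has constant
`M`, and its Hessian has trace at least `k` on planes. The condition `M * ε ≤ m / 2` makes the
linear part of `u` dominate at scale `ε`. -/
structure UniformDefiningFunction (D : Set (Euc d)) (u : Euc d → ℝ) (ε m M k : ℝ) : Prop where
  isOpen : IsOpen D
  isConnected : IsConnected D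
  isBounded : Bornology.IsBounded D
  compl_nonempty : Dᶜ.Nonempty
  eps_pos : 0 < ε
  eps_le_one : ε ≤ 1
  gradLower_pos : 0 < m
  gradUpper_pos : 0 < M
  gradUpper_mul_eps_le : M * ε ≤ m / 2
  trace_pos : 0 < k
  contDiffAt_of_mem_ball : ∀ p ∈ frontier D, ∀ a ∈ ball p ε, ContDiffAt ℝ 2 u a
  mem_iff : ∀ p ∈ frontier D, ∀ a ∈ ball p ε, a ∈ D ↔ u a < 0
  eq_zero : ∀ p ∈ frontier D, u p = 0
  le_norm_fderiv : ∀ p ∈ frontier D, ∀ a ∈ ball p ε, m ≤ ‖fderiv ℝ u a‖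
  norm_fderiv_le : ∀ p ∈ frontier D, ∀ a ∈ ball p ε, ‖fderiv ℝ u a‖ ≤ M
  taylor : ∀ p ∈ frontier D, ∀ a ∈ ball p ε, ∀ b ∈ ball p ε,
    |u b - u a - fderiv ℝ u a (b - a)| ≤ M * ‖b - a‖ ^ 2
  trace_hess : ∀ p ∈ frontier D, ∀ a ∈ ball p ε, PlanarHessianTraceGE u a k

lemma IsStronglyMinimallyConvex.exists_uniformDefiningFunction [Nontrivial (Euc d)]
    (hD : IsStronglyMinimallyConvex D) : ∃ u ε m M k, UniformDefiningFunction D u ε m M k := by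
  obtain ⟨hopen, hconn, hbdd, U, u, hU, hfrU, hu, hsign, hfr, hgrad, htrace⟩ := hD
  have hcd : ∀ x ∈ U, ContDiffAt ℝ 2 u x := fun x hx => hu.contDiffAt (hU.mem_nhds hx)
  have hK : IsCompact (frontier D) := isCompact_frontier_of_isBounded hbdd
  obtain ⟨ε₀, m, M, hε₀, hm, hM, hN⟩ := exists_fderiv_bounds_of_isCompact hK hU hfrU hu hgrad
  have hNU : cthickening ε₀ (frontier D) ⊆ U := fun x hx => (hN x hx).1
  obtain ⟨k, hk, hkN⟩ := exists_planarHessianTraceGE_of_isCompact hK.cthickening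
    (fun x hx => hcd x (hNU hx)) fun x hx => htrace x (hNU hx)
  set ε := min ε₀ (min 1 (m / 2 / M))
  have hball : ∀ p ∈ frontier D, ball p ε ⊆ cthickening ε₀ (frontier D) := fun p hp x hx =>
    mem_cthickening_of_dist_le x p ε₀ _ hp ((mem_ball.1 hx).le.trans (min_le_left _ _))
  exact ⟨u, ε, m, M, k, {
    isOpen := hopen
    isConnected := hconn
    isBounded := hbdd
    compl_nonempty := nonempty_compl_of_isBounded hbdd
    eps_pos := by positivity
    eps_le_one := (min_le_right _ _).trans (min_le_left _ _)
    gradLower_pos := hm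
    gradUpper_pos := hM
    gradUpper_mul_eps_le := (le_div_iff₀' hM).1 ((min_le_right _ _).trans (min_le_right _ _))
    trace_pos := hk
    contDiffAt_of_mem_ball := fun p hp a ha => hcd a (hNU (hball p hp ha))
    mem_iff := fun p hp a ha => by
      simpa [hNU (hball p hp ha)] using Set.ext_iff.1 hsign a
    eq_zero := fun p hp => (hfr ▸ hp).2
    le_norm_fderiv := fun p hp a ha => (hN a (hball p hp ha)).2.1
    norm_fderiv_le := fun p hp a ha => (hN a (hball p hp ha)).2.2.1
    taylor := fun p hp a ha b hb => norm_sub_sub_fderiv_le_of_convex (convex_ball p ε)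
      (fun x hx => hcd x (hNU (hball p hp hx)))
      (fun x hx => (hN x (hball p hp hx)).2.2.2) ha hb
    trace_hess := fun p hp a ha => hkN a (hball p hp ha) }⟩

namespace UniformDefiningFunction

variable {x p n : Euc d}

lemma boundaryDist_pos (h : UniformDefiningFunction D u ε m M k) (hx : x ∈ D) :
    0 < boundaryDist D x :=
  (h.isOpen.isClosed_compl.notMem_iff_infDist_pos h.compl_nonempty).1 (not_not.2 hx)

lemma exists_dist_eq_boundaryDist (h : UniformDefiningFunction D u ε m M k) (hx : x ∈ D) :
    ∃ p ∈ frontier D, dist x p = boundaryDist D x := by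
  obtain ⟨p, hp, hxp⟩ := h.isOpen.isClosed_compl.exists_infDist_eq_dist h.compl_nonempty x
  refine ⟨p, ?_, hxp.symm⟩
  rw [h.isOpen.frontier_eq]
  refine ⟨closure_mono (ball_boundaryDist_subset (x := x)) ?_, hp⟩
  rw [closure_ball x (h.boundaryDist_pos hx).ne', mem_closedBall, dist_comm]
  exact hxp.ge

lemma exists_ball_subset (h : UniformDefiningFunction D u ε m M k) (hx : x ∈ D) :
    ∃ p ∈ frontier D, ball x (ε - boundaryDist D x) ⊆ ball p ε := by
  obtain ⟨p, hp, hxp⟩ := h.exists_dist_eq_boundaryDist hx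
  exact ⟨p, hp, ball_subset_ball' (by rw [hxp, sub_add_cancel])⟩

lemma exists_mem_ball (h : UniformDefiningFunction D u ε m M k) (hx : x ∈ D)
    (hxε : boundaryDist D x < ε) : ∃ p ∈ frontier D, x ∈ ball p ε := by
  obtain ⟨p, hp, hsub⟩ := h.exists_ball_subset hx
  exact ⟨p, hp, hsub (mem_ball_self (sub_pos.2 hxε))⟩

lemma contDiffAt (h : UniformDefiningFunction D u ε m M k) (hx : x ∈ D)
    (hxε : boundaryDist D x < ε) : ContDiffAt ℝ 2 u x := by
  obtain ⟨p, hp, hxp⟩ := h.exists_mem_ball hx hxε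
  exact h.contDiffAt_of_mem_ball p hp x hxp

lemma neg (h : UniformDefiningFunction D u ε m M k) (hx : x ∈ D) (hxε : boundaryDist D x < ε) :
    u x < 0 := by
  obtain ⟨p, hp, hxp⟩ := h.exists_mem_ball hx hxε
  exact (h.mem_iff p hp x hxp).1 hx

lemma planarHessianTraceGE (h : UniformDefiningFunction D u ε m M k) (hx : x ∈ D)
    (hxε : boundaryDist D x < ε) : PlanarHessianTraceGE u x k := by
  obtain ⟨p, hp, hxp⟩ := h.exists_mem_ball hx hxε
  exact h.trace_hess p hp x hxp

lemma exists_normal (h : UniformDefiningFunction D u ε m M k) (hp : p ∈ frontier D)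
    (hx : x ∈ ball p ε) : ∃ n : Euc d, ‖n‖ = 1 ∧ m ≤ fderiv ℝ u x n := by
  set g := (InnerProductSpace.toDual ℝ (Euc d)).symm (fderiv ℝ u x) with hg
  have hmg : m ≤ ‖g‖ := by
    rw [hg, LinearIsometryEquiv.norm_map]
    exact h.le_norm_fderiv p hp x hx
  have hg0 : ‖g‖ ≠ 0 := (h.gradLower_pos.trans_le hmg).ne'
  refine ⟨‖g‖⁻¹ • g, by rw [norm_smul, norm_inv, norm_norm, inv_mul_cancel₀ hg0], ?_⟩
  calc m ≤ ‖g‖ := hmg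
    _ = ‖g‖⁻¹ * ⟪g, g⟫ := by rw [real_inner_self_eq_norm_mul_norm, inv_mul_cancel_left₀ hg0]
    _ = fderiv ℝ u x (‖g‖⁻¹ • g) := by
        rw [map_smul, smul_eq_mul, hg, InnerProductSpace.toDual_symm_apply]

lemma abs_sub_fderiv_le (h : UniformDefiningFunction D u ε m M k) (hp : p ∈ frontier D)
    (hx : x ∈ ball p ε) (hn : ‖n‖ = 1) {t : ℝ} (ht : |t| ≤ ε) (hxt : x + t • n ∈ ball p ε) :
    |u (x + t • n) - u x - t * fderiv ℝ u x n| ≤ m / 2 * |t| := by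
  have htaylor := h.taylor p hp x hx _ hxt
  rw [add_sub_cancel_left, map_smul, smul_eq_mul, norm_smul, hn, mul_one, Real.norm_eq_abs]
    at htaylor
  calc _ ≤ M * |t| * |t| := by rwa [mul_assoc, ← pow_two]
    _ ≤ M * ε * |t| :=
        mul_le_mul_of_nonneg_right (mul_le_mul_of_nonneg_left ht h.gradUpper_pos.le) (abs_nonneg t)
    _ ≤ m / 2 * |t| := mul_le_mul_of_nonneg_right h.gradUpper_mul_eps_le (abs_nonneg t)

lemma add_le_of_le_fderiv (h : UniformDefiningFunction D u ε m M k) (hp : p ∈ frontier D)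
    (hx : x ∈ ball p ε) (hn : ‖n‖ = 1) (hmn : m ≤ fderiv ℝ u x n) {t : ℝ} (ht : 0 ≤ t)
    (htε : t ≤ ε) (hxt : x + t • n ∈ ball p ε) : u x + m / 2 * t ≤ u (x + t • n) := by
  have habs := h.abs_sub_fderiv_le hp hx hn ((abs_of_nonneg ht).trans_le htε) hxt
  rw [abs_of_nonneg ht] at habs
  linarith [(abs_le.1 habs).1, mul_le_mul_of_nonneg_left hmn ht]

lemma le_sub_of_le_fderiv (h : UniformDefiningFunction D u ε m M k) (hp : p ∈ frontier D)
    (hx : x ∈ ball p ε) (hn : ‖n‖ = 1) (hmn : m ≤ fderiv ℝ u x n) {t : ℝ} (ht : 0 ≤ t)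
    (htε : t ≤ ε) (hxt : x - t • n ∈ ball p ε) : u (x - t • n) ≤ u x - m / 2 * t := by
  rw [sub_eq_add_neg, ← neg_smul] at hxt ⊢
  have habs := h.abs_sub_fderiv_le hp hx hn (by rwa [abs_neg, abs_of_nonneg ht]) hxt
  rw [abs_neg, abs_of_nonneg ht] at habs
  linarith [(abs_le.1 habs).2, mul_le_mul_of_nonneg_left hmn ht]

lemma neg_le_mul_boundaryDist (h : UniformDefiningFunction D u ε m M k) (hx : x ∈ D)
    (hxε : boundaryDist D x < ε) : -u x ≤ 2 * M * boundaryDist D x := by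
  obtain ⟨p, hp, hxp⟩ := h.exists_dist_eq_boundaryDist hx
  have hpp : p ∈ ball p ε := mem_ball_self h.eps_pos
  have htaylor := h.taylor p hp p hpp x (by rwa [mem_ball, hxp])
  rw [h.eq_zero p hp, ← dist_eq_norm, hxp] at htaylor
  have hlin : |fderiv ℝ u p (x - p)| ≤ M * boundaryDist D x := by
    rw [← hxp, dist_eq_norm]
    exact (fderiv ℝ u p).le_of_opNorm_le (h.norm_fderiv_le p hp p hpp) (x - p)
  have hsq : M * boundaryDist D x ^ 2 ≤ M * boundaryDist D x := by
    refine mul_le_mul_of_nonneg_left ?_ h.gradUpper_pos.le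
    exact pow_le_of_le_one boundaryDist_nonneg (hxε.le.trans h.eps_le_one) two_ne_zero
  linarith [(abs_le.1 htaylor).1, (abs_le.1 hlin).1]

/-- Moving from `x` towards the boundary by half the available distance increases `u` while keeping
it negative. -/
lemma mul_boundaryDist_le_neg (h : UniformDefiningFunction D u ε m M k) (hx : x ∈ D)
    (hxε : boundaryDist D x < ε / 2) : m / 4 * boundaryDist D x ≤ -u x := by
  obtain ⟨p, hp, hsub⟩ := h.exists_ball_subset hx
  have hpos := h.boundaryDist_pos hx
  have hxp : x ∈ ball p ε := hsub (mem_ball_self (by linarith))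
  obtain ⟨n, hn, hmn⟩ := h.exists_normal hp hxp
  set t := boundaryDist D x / 2 with ht
  have hdist : dist (x + t • n) x = t := by
    rw [dist_eq_norm, add_sub_cancel_left, norm_smul, hn, mul_one,
      Real.norm_of_nonneg (half_pos hpos).le]
  have hmem : x + t • n ∈ ball p ε := hsub (by rw [mem_ball, hdist]; linarith)
  have hmemD : x + t • n ∈ D :=
    ball_boundaryDist_subset (by rw [mem_ball, hdist]; exact half_lt_self hpos)
  linarith [h.add_le_of_le_fderiv hp hxp hn hmn (half_pos hpos).le (by linarith) hmem,
    (h.mem_iff p hp _ hmem).1 hmemD]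

end UniformDefiningFunction

end Boundary

/-! ### A barrier and the lower bounds on the minimal metric -/

section GluedBarrier

variable {d : ℕ} {D : Set (Euc d)} {u q : Euc d → ℝ} {e c : ℝ} {y : Euc d}

/-- The maximum of `u` and `q` within distance `e` of `∂D`, and `q` further inside. -/
def gluedBarrier (D : Set (Euc d)) (u q : Euc d → ℝ) (e : ℝ) (y : Euc d) : ℝ :=
  if boundaryDist D y < e then max (u y) (q y) else q y

lemma gluedBarrier_of_lt (hy : boundaryDist D y < e) :
    gluedBarrier D u q e y = max (u y) (q y) := if_pos hy

lemma gluedBarrier_of_le (huq : ∀ y ∈ D, e / 2 ≤ boundaryDist D y → boundaryDist D y < e →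
    u y ≤ q y) (hyD : y ∈ D) (hy : e / 2 ≤ boundaryDist D y) : gluedBarrier D u q e y = q y := by
  by_cases hlt : boundaryDist D y < e
  · rw [gluedBarrier_of_lt hlt, max_eq_right (huq y hyD hy hlt)]
  · exact if_neg hlt

lemma le_gluedBarrier (y : Euc d) : q y ≤ gluedBarrier D u q e y := by
  unfold gluedBarrier
  split_ifs
  exacts [le_max_right _ _, le_rfl]

lemma eventually_gluedBarrier_eq_max (hy : boundaryDist D y < e) :
    ∀ᶠ z in nhds y, gluedBarrier D u q e z = max (u z) (q z) := by
  filter_upwards [continuous_boundaryDist.continuousAt.eventually_lt_const hy] with z hz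
  exact gluedBarrier_of_lt hz

lemma continuousOn_gluedBarrier (hD : IsOpen D) (he : 0 < e)
    (hu : ∀ y ∈ D, boundaryDist D y < e → ContinuousAt u y) (hq : Continuous q)
    (huq : ∀ y ∈ D, e / 2 ≤ boundaryDist D y → boundaryDist D y < e → u y ≤ q y) :
    ContinuousOn (gluedBarrier D u q e) D := by
  refine fun y hy => ContinuousAt.continuousWithinAt ?_
  by_cases hlt : boundaryDist D y < e
  · exact ContinuousAt.congr ((hu y hy hlt).max hq.continuousAt)
      ((eventually_gluedBarrier_eq_max hlt).mono fun z hz => hz.symm)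
  · refine hq.continuousAt.congr ?_
    filter_upwards [continuous_boundaryDist.continuousAt.eventually_const_lt
      ((half_lt_self he).trans_le (not_lt.1 hlt)), hD.mem_nhds hy] with z hz hzD
    exact (gluedBarrier_of_le huq hzD hz.le).symm

lemma isMinimalBarrier_gluedBarrier (hD : IsOpen D) (he : 0 < e) (hc : 0 < c)
    (hu : ∀ y ∈ D, boundaryDist D y < e →
      ContDiffAt ℝ 2 u y ∧ u y < 0 ∧ PlanarHessianTraceGE u y (4 * c))
    (hq : ContDiff ℝ 2 q) (hqneg : ∀ y ∈ D, q y < 0)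
    (hqtrace : ∀ y ∈ D, PlanarHessianTraceGE q y (4 * c))
    (huq : ∀ y ∈ D, e / 2 ≤ boundaryDist D y → boundaryDist D y < e → u y ≤ q y) :
    IsMinimalBarrier D (gluedBarrier D u q e) c where
  pos := hc
  continuousOn := continuousOn_gluedBarrier hD he
    (fun y hy hlt => (hu y hy hlt).1.continuousAt) hq.continuous huq
  neg y hy := by
    unfold gluedBarrier
    split_ifs with hlt
    exacts [max_lt (hu y hy hlt).2.1 (hqneg y hy), hqneg y hy]
  exists_test y hy := by
    by_cases hcase : boundaryDist D y < e ∧ q y ≤ u y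
    · refine ⟨u, (hu y hy hcase.1).1, ⟨?_, ?_⟩, (hu y hy hcase.1).2.2⟩
      · filter_upwards [eventually_gluedBarrier_eq_max hcase.1] with z hz
        exact hz ▸ le_max_left _ _
      · rw [gluedBarrier_of_lt hcase.1, max_eq_left hcase.2]
    · refine ⟨q, hq.contDiffAt, ⟨.of_forall le_gluedBarrier, ?_⟩, hqtrace y hy⟩
      unfold gluedBarrier
      split_ifs with hlt
      · exact (max_eq_right (not_le.1 fun hle => hcase ⟨hlt, hle⟩).le).symm
      · rfl

end GluedBarrier

namespace UniformDefiningFunction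

variable {d : ℕ} {D : Set (Euc d)} {u : Euc d → ℝ} {ε m M k : ℝ} {x : Euc d}

/-- The barrier is `u` near the boundary, glued to a small multiple of `‖y‖ ^ 2 - B` inside, where
`B` is chosen so large that the latter is negative on `D`. -/
lemma exists_isMinimalBarrier (h : UniformDefiningFunction D u ε m M k) :
    ∃ φ c, IsMinimalBarrier D φ c ∧ ∀ x ∈ D, -φ x ≤ (2 * M + m) * boundaryDist D x := by
  obtain ⟨R, hR⟩ := h.isBounded.exists_norm_le
  have hm := h.gradLower_pos
  have hε := h.eps_pos
  have hM := h.gradUpper_pos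
  have hk := h.trace_pos
  set B := R ^ 2 + 1
  set η := m * ε / 32 / B
  have hη0 : 0 < η := by positivity
  have hηB : η * B = m * ε / 32 := div_mul_cancel₀ _ (by positivity)
  set q : Euc d → ℝ := fun y => η * (‖y - 0‖ ^ 2 - B) with hq
  have hqneg : ∀ y ∈ D, q y < 0 := fun y hy => by
    refine mul_neg_of_pos_of_neg hη0 (sub_neg.2 (lt_add_of_le_of_pos ?_ one_pos))
    exact pow_le_pow_left₀ (norm_nonneg _) (by simpa using hR y hy) 2
  have hqlow (y : Euc d) : -(m * ε / 32) ≤ q y := by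
    rw [hq]
    linarith [mul_nonneg hη0.le (sq_nonneg ‖y - 0‖)]
  have huq : ∀ y ∈ D, ε / 4 / 2 ≤ boundaryDist D y → boundaryDist D y < ε / 4 → u y ≤ q y := by
    intro y hy hlow hup
    linarith [hqlow y, h.mul_boundaryDist_le_neg hy (by linarith),
      mul_le_mul_of_nonneg_left hlow hm.le]
  refine ⟨gluedBarrier D u q (ε / 4), min (k / 4) η,
    isMinimalBarrier_gluedBarrier h.isOpen (by positivity) (by positivity) (fun y hy hlt => ?_)
      (contDiff_norm_sq_sub 0 η B) hqneg (fun y _ => ?_) huq, fun y hy => ?_⟩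
  · have hlt' : boundaryDist D y < ε := by linarith
    exact ⟨h.contDiffAt hy hlt', h.neg hy hlt',
      (h.planarHessianTraceGE hy hlt').mono (by linarith [min_le_left (k / 4) η])⟩
  · exact (planarHessianTraceGE_norm_sq_sub 0 y η B).mono (by linarith [min_le_right (k / 4) η])
  · have hδ : 0 ≤ boundaryDist D y := boundaryDist_nonneg
    by_cases hlt : boundaryDist D y < ε / 4
    · rw [gluedBarrier_of_lt hlt]
      linarith [h.neg_le_mul_boundaryDist hy (by linarith), le_max_left (u y) (q y),
        mul_nonneg hm.le hδ]
    · linarith [hqlow y, le_gluedBarrier (D := D) (u := u) (q := q) (e := ε / 4) y,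
        mul_nonneg hM.le hδ, mul_le_mul_of_nonneg_left (not_lt.1 hlt) hm.le, mul_pos hm hε]

/-- The linear form `fderiv ℝ u x` is bounded above on `D - x` by `-u x` up to a quadratic error: by
Taylor expansion and `u < 0` near `x`, and trivially away from `x`. -/
lemma fderiv_sub_le (h : UniformDefiningFunction D u ε m M k) (hx : x ∈ D)
    (hxε : boundaryDist D x < ε / 2) {y : Euc d} (hy : y ∈ D) :
    fderiv ℝ u x (y - x) ≤ -u x + (M + M / (ε / 2)) * ‖y - x‖ ^ 2 := by
  obtain ⟨p, hp, hsub⟩ := h.exists_ball_subset hx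
  have hM := h.gradUpper_pos
  have hε := h.eps_pos
  have hxp : x ∈ ball p ε := hsub (mem_ball_self (by linarith))
  rcases lt_or_ge ‖y - x‖ (ε / 2) with hlt | hge
  · have hyp : y ∈ ball p ε := hsub (by rw [mem_ball, dist_eq_norm]; linarith)
    have hsq : 0 ≤ M / (ε / 2) * ‖y - x‖ ^ 2 := by positivity
    linarith [(abs_le.1 (h.taylor p hp x hxp y hyp)).1, (h.mem_iff p hp y hyp).1 hy]
  · have hsq : 0 ≤ M * ‖y - x‖ ^ 2 := by positivity
    have hlin : fderiv ℝ u x (y - x) ≤ M / (ε / 2) * ‖y - x‖ ^ 2 := by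
      calc fderiv ℝ u x (y - x) ≤ M * ‖y - x‖ := (le_abs_self _).trans
            ((fderiv ℝ u x).le_of_opNorm_le (h.norm_fderiv_le p hp x hxp) (y - x))
        _ = M / (ε / 2) * (ε / 2 * ‖y - x‖) := by field_simp
        _ ≤ M / (ε / 2) * ‖y - x‖ ^ 2 := by
            rw [pow_two]
            gcongr
    linarith [h.neg hx (by linarith)]

lemma exists_lower_bounds (hd : 2 ≤ d) (h : UniformDefiningFunction D u ε m M k) :
    ∃ C : ℝ, 0 < C ∧ (∀ x ∈ D, ∀ v, ‖v‖ ≤ C * √(boundaryDist D x) * minMetric D x v) ∧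
      ∀ x ∈ D, boundaryDist D x < ε / 2 → ∀ v,
        |fderiv ℝ u x v| ≤ C * boundaryDist D x * minMetric D x v := by
  obtain ⟨φ, c, hφ, hφb⟩ := h.exists_isMinimalBarrier
  have hc := hφ.pos
  have hm := h.gradLower_pos
  have hM := h.gradUpper_pos
  have hε := h.eps_pos
  set F := (2 * M + m) / c with hF
  have hF0 : 0 < F := by positivity
  have hφc : ∀ x ∈ D, -φ x / c ≤ F * boundaryDist D x := fun x hx => by
    rw [hF, div_mul_eq_mul_div]
    exact div_le_div_of_nonneg_right (hφb x hx) hc.le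
  set K := M + M / (ε / 2)
  have hK : 0 < K := by positivity
  refine ⟨8 * √F + 16 * (2 * M + K * F), by positivity, fun x hx v => ?_, fun x hx hxε v => ?_⟩
  · refine (hφ.norm_le_minMetric hd h.isOpen hx v).trans
      (mul_le_mul_of_nonneg_right ?_ (minMetric_nonneg D x v))
    calc 8 * √(-φ x / c) ≤ 8 * √F * √(boundaryDist D x) := by
          rw [mul_assoc, ← Real.sqrt_mul hF0.le]
          gcongr
          exact hφc x hx
      _ ≤ _ := by
          gcongr
          linarith [mul_pos hK hF0]
  · have hδ : 0 ≤ boundaryDist D x := boundaryDist_nonneg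
    refine (hφ.abs_clm_le_minMetric hd h.isOpen hx (fderiv ℝ u x)
      (neg_nonneg.2 (h.neg hx (by linarith)).le) hK.le (fun y => h.fderiv_sub_le hx hxε) v).trans
      (mul_le_mul_of_nonneg_right ?_ (minMetric_nonneg D x v))
    calc 16 * (-u x + K * (-φ x / c))
        ≤ 16 * (2 * M * boundaryDist D x + K * (F * boundaryDist D x)) := by
          gcongr
          exacts [h.neg_le_mul_boundaryDist hx (by linarith), hφc x hx]
      _ = 16 * (2 * M + K * F) * boundaryDist D x := by ring
      _ ≤ _ := by
          gcongr
          linarith [Real.sqrt_nonneg F]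

end UniformDefiningFunction

/-! ### A `C¹` height comparable to the distance to the boundary -/

section SoftCap

variable {a t : ℝ}

/-- A concave `C¹` approximation of `min t a`, equal to `a` for `t ≥ a`. -/
def softCap (a t : ℝ) : ℝ := a - (max (a - t) 0) ^ 2 / a

lemma softCap_of_le (h : a ≤ t) : softCap a t = a := by
  simp [softCap, h]

lemma softCap_of_ge (h : t ≤ a) (ha : a ≠ 0) : softCap a t = 2 * t - t ^ 2 / a := by
  rw [softCap, max_eq_left (sub_nonneg.2 h)]
  field_simp
  ring

lemma min_le_softCap (ha : 0 < a) (ht : 0 ≤ t) : min t a ≤ softCap a t := by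
  rcases le_total a t with hat | hta
  · exact (min_le_right t a).trans_eq (softCap_of_le hat).symm
  · have hsq : t ^ 2 / a ≤ t := (div_le_iff₀ ha).2 (by nlinarith)
    rw [min_eq_left hta, softCap_of_ge hta ha.ne']
    linarith

lemma softCap_le_two_mul (ha : 0 < a) : softCap a t ≤ 2 * t := by
  rcases le_total a t with hat | hta
  · rw [softCap_of_le hat]
    linarith
  · rw [softCap_of_ge hta ha.ne']
    exact sub_le_self _ (by positivity)

lemma hasDerivAt_max_zero_sq (t : ℝ) :
    HasDerivAt (fun s : ℝ => (max s 0) ^ 2) (2 * max t 0) t := by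
  rcases lt_trichotomy t 0 with ht | rfl | ht
  · rw [max_eq_right ht.le, mul_zero]
    refine (hasDerivAt_const t (0 : ℝ)).congr_of_eventuallyEq ?_
    filter_upwards [gt_mem_nhds ht] with s hs
    rw [max_eq_right hs.le, zero_pow two_ne_zero]
  · rw [hasDerivAt_iff_isLittleO_nhds_zero]
    have hsq : (fun s : ℝ => s ^ 2) =o[nhds 0] fun s => s := by
      simpa using Asymptotics.isLittleO_pow_pow (𝕜 := ℝ) (m := 1) (n := 2) (by norm_num)
    refine (Asymptotics.IsBigO.of_norm_le fun s => ?_).trans_isLittleO hsq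
    rcases le_total s 0 with hs | hs <;> simp [hs, sq_nonneg]
  · rw [max_eq_left ht.le]
    have hsq : HasDerivAt (fun s : ℝ => s ^ 2) (2 * t) t := by simpa using hasDerivAt_pow 2 t
    refine hsq.congr_of_eventuallyEq ?_
    filter_upwards [lt_mem_nhds ht] with s hs
    rw [max_eq_left hs.le]

lemma hasDerivAt_softCap (a t : ℝ) : HasDerivAt (softCap a) (2 * max (a - t) 0 / a) t := by
  have hcomp := (hasDerivAt_max_zero_sq (a - t)).comp t ((hasDerivAt_id t).const_sub a)
  refine ((hcomp.div_const a).const_sub a).congr_deriv ?_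
  ring

lemma contDiff_softCap (a : ℝ) : ContDiff ℝ 1 (softCap a) := by
  rw [contDiff_one_iff_deriv, deriv_eq (hasDerivAt_softCap a)]
  exact ⟨fun t => (hasDerivAt_softCap a t).differentiableAt, by fun_prop⟩

lemma abs_deriv_softCap_le (ha : 0 < a) (ht : 0 ≤ t) : |deriv (softCap a) t| ≤ 2 := by
  rw [(hasDerivAt_softCap a t).deriv, abs_of_nonneg (by positivity), div_le_iff₀ ha]
  gcongr
  exact max_le (by linarith) ha.le

end SoftCap

section CollarHeight

variable {d : ℕ} {D : Set (Euc d)} {u : Euc d → ℝ} {e a : ℝ} {x : Euc d}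

/-- A function equal to `-u`, softly capped at height `a`, within distance `e` of `∂D`, and to the
constant `a` further inside. -/
def collarHeight (D : Set (Euc d)) (u : Euc d → ℝ) (e a : ℝ) (x : Euc d) : ℝ :=
  if boundaryDist D x < e then softCap a (-u x) else a

lemma collarHeight_of_lt (hx : boundaryDist D x < e) :
    collarHeight D u e a x = softCap a (-u x) := if_pos hx

lemma collarHeight_of_le (hu : ∀ x ∈ D, e / 2 ≤ boundaryDist D x → boundaryDist D x < e → a ≤ -u x)
    (hxD : x ∈ D) (hx : e / 2 ≤ boundaryDist D x) : collarHeight D u e a x = a := by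
  by_cases hlt : boundaryDist D x < e
  · rw [collarHeight_of_lt hlt, softCap_of_le (hu x hxD hx hlt)]
  · exact if_neg hlt

lemma collarHeight_eventuallyEq_softCap (hx : boundaryDist D x < e) :
    collarHeight D u e a =ᶠ[nhds x] fun z => softCap a (-u z) := by
  filter_upwards [continuous_boundaryDist.continuousAt.eventually_lt_const hx] with z hz
  exact collarHeight_of_lt hz

lemma collarHeight_eventuallyEq_const (hD : IsOpen D)
    (hu : ∀ x ∈ D, e / 2 ≤ boundaryDist D x → boundaryDist D x < e → a ≤ -u x)
    (hxD : x ∈ D) (hx : e / 2 < boundaryDist D x) :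
    collarHeight D u e a =ᶠ[nhds x] fun _ => a := by
  filter_upwards [continuous_boundaryDist.continuousAt.eventually_const_lt hx,
    hD.mem_nhds hxD] with z hz hzD
  exact collarHeight_of_le hu hzD hz.le

lemma abs_fderiv_collarHeight_le (hx : boundaryDist D x < e) (ha : 0 < a)
    (hux : DifferentiableAt ℝ u x) (hneg : u x ≤ 0) (v : Euc d) :
    |fderiv ℝ (collarHeight D u e a) x v| ≤ 2 * |fderiv ℝ u x v| := by
  have hcap := (hasDerivAt_softCap a (-u x)).differentiableAt.hasDerivAt
  have heq : fderiv ℝ (collarHeight D u e a) x v = deriv (softCap a) (-u x) * -fderiv ℝ u x v := by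
    have hcomp := hcap.comp_hasFDerivAt x hux.hasFDerivAt.fun_neg
    rw [(hcomp.congr_of_eventuallyEq (collarHeight_eventuallyEq_softCap hx)).fderiv]
    rfl
  rw [heq, abs_mul, abs_neg]
  exact mul_le_mul_of_nonneg_right (abs_deriv_softCap_le ha (neg_nonneg.2 hneg)) (abs_nonneg _)

end CollarHeight

section BoundaryHeight

variable {d : ℕ} {D : Set (Euc d)} {u S : Euc d → ℝ} {ε m M k c C : ℝ}

/-- A positive `C¹` function on `D` comparable to the distance to the boundary, whose logarithm is
Lipschitz for the minimal metric and whose square root bounds the Euclidean metric in terms of the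
minimal metric. -/
structure BoundaryHeight (D : Set (Euc d)) (S : Euc d → ℝ) (c C : ℝ) : Prop where
  lower_pos : 0 < c
  upper_pos : 0 < C
  pos : ∀ x ∈ D, 0 < S x
  mul_boundaryDist_le : ∀ x ∈ D, c * boundaryDist D x ≤ S x
  le_mul_boundaryDist : ∀ x ∈ D, S x ≤ C * boundaryDist D x
  contDiffOn_log : ContDiffOn ℝ 1 (fun x => Real.log (S x)) D
  abs_fderiv_log_le : ∀ x ∈ D, ∀ v,
    |fderiv ℝ (fun x => Real.log (S x)) x v| ≤ C * minMetric D x v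
  norm_le : ∀ x ∈ D, ∀ v, ‖v‖ ≤ C * √(S x) * minMetric D x v

namespace UniformDefiningFunction

variable {x : Euc d}

lemma exists_boundaryDist_le (h : UniformDefiningFunction D u ε m M k) :
    ∃ R, 0 < R ∧ ∀ x ∈ D, boundaryDist D x ≤ R := by
  obtain ⟨R, hR0, hR⟩ := h.isBounded.exists_pos_norm_le
  obtain ⟨z, hz⟩ := h.compl_nonempty
  refine ⟨R + ‖z‖, by positivity, fun x hx => (boundaryDist_le_dist hz).trans ?_⟩
  exact (dist_le_norm_add_norm x z).trans (by linarith [hR x hx])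

lemma mul_div_le_neg (h : UniformDefiningFunction D u ε m M k) (x) (hx : x ∈ D)
    (hlow : ε / 4 / 2 ≤ boundaryDist D x) (hup : boundaryDist D x < ε / 4) :
    m * ε / 32 ≤ -u x := by
  have hm := h.gradLower_pos
  calc m * ε / 32 = m / 4 * (ε / 4 / 2) := by ring
    _ ≤ m / 4 * boundaryDist D x := by gcongr
    _ ≤ -u x := h.mul_boundaryDist_le_neg hx (by linarith [h.eps_pos])

lemma contDiffAt_collarHeight (h : UniformDefiningFunction D u ε m M k) (hx : x ∈ D) :
    ContDiffAt ℝ 1 (collarHeight D u (ε / 4) (m * ε / 32)) x := by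
  have hε := h.eps_pos
  by_cases hlt : boundaryDist D x < ε / 4
  · have hux : ContDiffAt ℝ 1 u x := (h.contDiffAt hx (by linarith)).of_le one_le_two
    exact ((contDiff_softCap _).contDiffAt.comp x hux.neg).congr_of_eventuallyEq
      (collarHeight_eventuallyEq_softCap hlt)
  · exact contDiffAt_const.congr_of_eventuallyEq
      (collarHeight_eventuallyEq_const h.isOpen h.mul_div_le_neg hx (by linarith))

lemma exists_mul_boundaryDist_le_collarHeight (h : UniformDefiningFunction D u ε m M k) :
    ∃ c, 0 < c ∧ ∀ x ∈ D, c * boundaryDist D x ≤ collarHeight D u (ε / 4) (m * ε / 32) x := by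
  obtain ⟨R, hR0, hR⟩ := h.exists_boundaryDist_le
  have hm := h.gradLower_pos
  have hε := h.eps_pos
  refine ⟨min (m / 8) (m * ε / 32 / R), by positivity, fun x hx => ?_⟩
  have hδ := h.boundaryDist_pos hx
  by_cases hlt : boundaryDist D x < ε / 4
  · have hneg := h.mul_boundaryDist_le_neg hx (by linarith)
    rw [collarHeight_of_lt hlt]
    calc _ ≤ m / 8 * boundaryDist D x := by
          gcongr
          exact min_le_left _ _
      _ ≤ min (-u x) (m * ε / 32) := le_min (by linarith [mul_pos hm hδ])
          (by linarith [mul_le_mul_of_nonneg_left hlt.le hm.le])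
      _ ≤ _ := min_le_softCap (by positivity) (by linarith [mul_pos hm hδ])
  · rw [collarHeight_of_le h.mul_div_le_neg hx (by linarith)]
    calc _ ≤ m * ε / 32 / R * R :=
          mul_le_mul (min_le_right _ _) (hR x hx) hδ.le (by positivity)
      _ = m * ε / 32 := div_mul_cancel₀ _ hR0.ne'

lemma collarHeight_le (h : UniformDefiningFunction D u ε m M k) (hx : x ∈ D) :
    collarHeight D u (ε / 4) (m * ε / 32) x ≤ (4 * M + m) * boundaryDist D x := by
  have hm := h.gradLower_pos
  have hM := h.gradUpper_pos
  have hε := h.eps_pos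
  have hδ := h.boundaryDist_pos hx
  by_cases hlt : boundaryDist D x < ε / 4
  · rw [collarHeight_of_lt hlt]
    linarith [softCap_le_two_mul (a := m * ε / 32) (t := -u x) (by positivity),
      h.neg_le_mul_boundaryDist hx (by linarith), mul_pos hm hδ]
  · rw [collarHeight_of_le h.mul_div_le_neg hx (by linarith)]
    linarith [mul_le_mul_of_nonneg_left (not_lt.1 hlt) hm.le, mul_pos hM hδ, mul_pos hm hε]

lemma abs_fderiv_collarHeight_le (h : UniformDefiningFunction D u ε m M k) (hx : x ∈ D)
    {K : ℝ} (hK : 0 ≤ K) {v : Euc d}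
    (hgrad : boundaryDist D x < ε / 2 →
      |fderiv ℝ u x v| ≤ K * boundaryDist D x * minMetric D x v) :
    |fderiv ℝ (collarHeight D u (ε / 4) (m * ε / 32)) x v| ≤
      2 * (K * boundaryDist D x * minMetric D x v) := by
  have hm := h.gradLower_pos
  have hε := h.eps_pos
  by_cases hlt : boundaryDist D x < ε / 4
  · refine (_root_.abs_fderiv_collarHeight_le hlt (by positivity)
      ((h.contDiffAt hx (by linarith)).differentiableAt two_ne_zero)
      (h.neg hx (by linarith)).le v).trans ?_
    gcongr
    exact hgrad (by linarith)
  · rw [(collarHeight_eventuallyEq_const h.isOpen h.mul_div_le_neg hx (by linarith)).fderiv_eq]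
    have hδ : 0 ≤ boundaryDist D x := boundaryDist_nonneg
    have hv := minMetric_nonneg D x v
    simpa using by positivity

theorem exists_boundaryHeight (hd : 2 ≤ d) (h : UniformDefiningFunction D u ε m M k) :
    ∃ S c C, BoundaryHeight D S c C := by
  obtain ⟨K, hK, hnorm, hgrad⟩ := h.exists_lower_bounds hd
  obtain ⟨c, hc, hlow⟩ := h.exists_mul_boundaryDist_le_collarHeight
  have hm := h.gradLower_pos
  have hM := h.gradUpper_pos
  set S := collarHeight D u (ε / 4) (m * ε / 32)
  have hpos : ∀ x ∈ D, 0 < S x := fun x hx =>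
    (mul_pos hc (h.boundaryDist_pos hx)).trans_le (hlow x hx)
  have hsum : 0 < 2 * K / c := by positivity
  have hsqrt : 0 < K / √c := by positivity
  refine ⟨S, c, 4 * M + m + 2 * K / c + K / √c, hc, by positivity, hpos, hlow, fun x hx => ?_,
    fun x hx => ((h.contDiffAt_collarHeight hx).log (hpos x hx).ne').contDiffWithinAt,
    fun x hx v => ?_, fun x hx v => ?_⟩
  · refine (h.collarHeight_le hx).trans (mul_le_mul_of_nonneg_right ?_ boundaryDist_nonneg)
    linarith
  · have hδ := h.boundaryDist_pos hx
    have hv := minMetric_nonneg D x v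
    rw [fderiv.log ((h.contDiffAt_collarHeight hx).differentiableAt one_ne_zero) (hpos x hx).ne',
      smul_apply, smul_eq_mul, abs_mul, abs_of_pos (inv_pos.2 (hpos x hx))]
    calc (S x)⁻¹ * |fderiv ℝ S x v|
        ≤ (c * boundaryDist D x)⁻¹ * (2 * (K * boundaryDist D x * minMetric D x v)) :=
          mul_le_mul (inv_anti₀ (by positivity) (hlow x hx))
            (h.abs_fderiv_collarHeight_le hx hK.le fun hlt => hgrad x hx hlt v)
            (abs_nonneg _) (by positivity)
      _ = 2 * K / c * minMetric D x v := by field_simp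
      _ ≤ _ := mul_le_mul_of_nonneg_right (by linarith) hv
  · have hv := minMetric_nonneg D x v
    calc ‖v‖ ≤ K * √(boundaryDist D x) * minMetric D x v := hnorm x hx v
      _ ≤ K * √(S x / c) * minMetric D x v := by
          gcongr
          rw [le_div_iff₀ hc, mul_comm]
          exact hlow x hx
      _ = K / √c * √(S x) * minMetric D x v := by
          rw [Real.sqrt_div' _ hc.le]
          ring
      _ ≤ _ := by
          gcongr
          linarith

end UniformDefiningFunction

namespace BoundaryHeight

variable {γ : ℝ → Euc d} {a b : ℝ}

lemma le_exp_mul (hd : 2 ≤ d) (hD : IsOpen D) (hS : BoundaryHeight D S c C)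
    (hγ : IsCurveIn D γ a b) : S (γ b) ≤ Real.exp (C * minLength D γ a b) * S (γ a) := by
  have hab := hγ.1.le
  have hlog := hγ.norm_sub_le_minLength hd hD hS.contDiffOn_log
    fun t ht v => hS.abs_fderiv_log_le _ (hγ.2 ht) v
  have ha := hS.pos _ (hγ.2 (left_mem_Icc.2 hab))
  rw [← Real.log_le_log_iff (hS.pos _ (hγ.2 (right_mem_Icc.2 hab))) (by positivity),
    Real.log_mul (Real.exp_pos _).ne' ha.ne', Real.log_exp]
  linarith [(abs_le.1 hlog).2]

/-- Along a curve of bounded minimal length the height varies by a bounded factor only, so the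
Euclidean speed is bounded by the square root of the initial height. -/
lemma norm_sub_le (hd : 2 ≤ d) (hD : IsOpen D) (hS : BoundaryHeight D S c C)
    (hγ : IsCurveIn D γ a b) {ℓ : ℝ} (hℓ : minLength D γ a b ≤ ℓ) :
    ‖γ b - γ a‖ ≤ C * √(Real.exp (C * ℓ)) * √(S (γ a)) * ℓ := by
  have hC := hS.upper_pos
  have hheight : ∀ t ∈ Icc a b, S (γ t) ≤ Real.exp (C * ℓ) * S (γ a) := fun t ht => by
    have hinit := hγ.mono le_rfl ht.1 ht.2
    have hrest := hγ.mono ht.1 ht.2 le_rfl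
    refine (hS.le_exp_mul hd hD hinit).trans ?_
    refine mul_le_mul_of_nonneg_right (Real.exp_le_exp.2 (mul_le_mul_of_nonneg_left ?_ hC.le))
      (hS.pos _ (hγ.2 (left_mem_Icc.2 hγ.1.le))).le
    linarith [hinit.minLength_add hd hD hrest, minLength_nonneg (D := D) (γ := γ) ht.2]
  refine (hγ.norm_sub_le_minLength hd hD contDiffOn_id (K := C * √(Real.exp (C * ℓ)) * √(S (γ a)))
    fun t ht v => ?_).trans (by gcongr)
  rw [fderiv_id, ContinuousLinearMap.id_apply]
  refine (hS.norm_le _ (hγ.2 ht) v).trans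
    (mul_le_mul_of_nonneg_right ?_ (minMetric_nonneg D _ v))
  rw [mul_assoc, ← Real.sqrt_mul (Real.exp_pos _).le]
  gcongr
  exact hheight t ht

lemma exists_fillingGauge_le (hd : 2 ≤ d) (hD : IsOpen D) (hc : IsConnected D)
    (hS : BoundaryHeight D S c C) : ∃ L, ∀ x y : MinSpace D, minDist D x.point y.point ≤ 1 →
      fillingGauge MinSpace.point (fun z => √(S z.point)) x y ≤ L := by
  set E := Real.exp (C * 2)
  have hE : 0 < E := Real.exp_pos _
  have hcompare : ∀ x y : MinSpace D, minDist D x.point y.point ≤ 1 →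
      √(S y.point) ≤ √E * √(S x.point) ∧
        dist x.point y.point ≤ C * √E * √(S x.point) * 2 := by
    rintro ⟨x, hx⟩ ⟨y, hy⟩ hxy
    obtain ⟨ℓ, hℓ, γ, a, b, hγ, rfl, rfl, rfl⟩ :=
      exists_joinedWithLength_of_minDist_lt hd hD hc hx hy (hxy.trans_lt one_lt_two)
    have hC := hS.upper_pos
    constructor
    · rw [← Real.sqrt_mul hE.le]
      refine Real.sqrt_le_sqrt ((hS.le_exp_mul hd hD hγ).trans ?_)
      refine mul_le_mul_of_nonneg_right (Real.exp_le_exp.2 ?_) (hS.pos _ hx).le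
      gcongr
    · rw [dist_comm, dist_eq_norm]
      exact hS.norm_sub_le hd hD hγ hℓ.le
  refine ⟨2 * Real.log (C * √E * 2 + (1 + √E)) + Real.log √E, fun x y hxy => ?_⟩
  have hC := hS.upper_pos
  have hx : 0 < √(S x.point) := Real.sqrt_pos.2 (hS.pos _ x.mem)
  have hy : 0 < √(S y.point) := Real.sqrt_pos.2 (hS.pos _ y.mem)
  obtain ⟨hyx, hdist⟩ := hcompare x y hxy
  obtain ⟨hxy', -⟩ := hcompare y x (by rwa [minDist_comm hd hD])
  have hmax : max √(S x.point) √(S y.point) ≤ (1 + √E) * √(S x.point) :=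
    max_le (by nlinarith [Real.sqrt_nonneg E]) (by linarith)
  have hheight : heightDist MinSpace.point (fun z => √(S z.point)) x y ≤
      (C * √E * 2 + (1 + √E)) * √(S x.point) := by
    rw [heightDist]
    linarith
  have hlog := log_le_log_add_log_of_le_mul
    (heightDist_pos (fun z => Real.sqrt_pos.2 (hS.pos _ z.mem)) x y) (by positivity) hx hheight
  have hlog' := log_le_log_add_log_of_le_mul hx (by positivity) hy hxy'
  rw [fillingGauge]
  linarith

end BoundaryHeight

end BoundaryHeight

/-! ### Upper bounds on the minimal distance -/

namespace UniformDefiningFunction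

variable {d : ℕ} {D : Set (Euc d)} {u : Euc d → ℝ} {ε m M k : ℝ} {p x y v : Euc d}

lemma boundaryDist_le_dist (h : UniformDefiningFunction D u ε m M k) (hp : p ∈ frontier D) :
    boundaryDist D x ≤ dist x p :=
  _root_.boundaryDist_le_dist (h.isOpen.frontier_eq ▸ hp).2

lemma sub_smul_mem (h : UniformDefiningFunction D u ε m M k) (hp : p ∈ frontier D) (hx : x ∈ D)
    (hxp : dist x p < ε / 2) {n : Euc d} (hn : ‖n‖ = 1) (hmn : m ≤ fderiv ℝ u x n) {t : ℝ}
    (ht : 0 ≤ t) (hpt : dist x p + t < ε) :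
    x - t • n ∈ D ∧ u (x - t • n) ≤ u x - m / 2 * t ∧
      m / (8 * M) * boundaryDist D x ≤ boundaryDist D (x - t • n) := by
  have hm := h.gradLower_pos
  have hM := h.gradUpper_pos
  have hε := h.eps_pos
  have hδ : boundaryDist D x < ε / 2 := (h.boundaryDist_le_dist hp).trans_lt hxp
  have hball : x - t • n ∈ ball p ε := by
    rw [mem_ball]
    refine (dist_triangle _ x p).trans_lt ?_
    rwa [dist_eq_norm, sub_sub_cancel_left, norm_neg, norm_smul, hn, mul_one,
      Real.norm_of_nonneg ht, add_comm]
  have hu := h.le_sub_of_le_fderiv hp (by rw [mem_ball]; linarith) hn hmn ht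
    (by linarith [dist_nonneg (x := x) (y := p)]) hball
  have hmem : x - t • n ∈ D := (h.mem_iff p hp _ hball).2 <| by
    linarith [h.neg hx (by linarith), mul_nonneg hm.le ht]
  refine ⟨hmem, hu, ?_⟩
  rw [div_mul_eq_mul_div, div_le_iff₀ (by positivity)]
  linarith [h.neg_le_mul_boundaryDist hmem ((h.boundaryDist_le_dist hp).trans_lt hball),
    h.mul_boundaryDist_le_neg hx hδ, mul_nonneg hm.le ht]

lemma exists_inward_point (hd : 2 ≤ d) (h : UniformDefiningFunction D u ε m M k)
    (hp : p ∈ frontier D) (hx : x ∈ D) (hxp : dist x p < ε / 2) {a : ℝ} (ha : 0 ≤ a)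
    (hap : dist x p + a < ε) :
    ∃ x' ∈ D, dist x' x = a ∧ u x' ≤ u x - m / 2 * a ∧
      minDist D x x' ≤ a * (8 * M / (m * boundaryDist D x)) := by
  have hm := h.gradLower_pos
  have hM := h.gradUpper_pos
  have hδ := h.boundaryDist_pos hx
  obtain ⟨n, hn, hmn⟩ := h.exists_normal hp (x := x) (by rw [mem_ball]; linarith [h.eps_pos])
  have hnorm : ‖x - a • n - x‖ = a := by
    rw [sub_sub_cancel_left, norm_neg, norm_smul, hn, mul_one, Real.norm_of_nonneg ha]
  have hseg (t : ℝ) (ht : t ∈ Icc (0 : ℝ) 1) : x + t • (x - a • n - x) ∈ D ∧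
      m / (8 * M) * boundaryDist D x ≤ boundaryDist D (x + t • (x - a • n - x)) := by
    have hta : t * a ≤ a := mul_le_of_le_one_left ha ht.2
    have hmem := h.sub_smul_mem hp hx hxp hn hmn (mul_nonneg ht.1 ha) (by linarith)
    rw [show x + t • (x - a • n - x) = x - (t * a) • n by module]
    exact ⟨hmem.1, hmem.2.2⟩
  obtain ⟨hmem, hu, -⟩ := h.sub_smul_mem hp hx hxp hn hmn ha hap
  refine ⟨x - a • n, hmem, (dist_eq_norm _ _).trans hnorm, hu,
    minDist_le_of_segment hd h.isOpen (fun t ht => (hseg t ht).1) fun t ht => ?_⟩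
  refine (minMetric_le_of_ball_subset hd (R := m / (8 * M) * boundaryDist D x) (by positivity)
    ((ball_subset_ball (hseg t ht).2).trans ball_boundaryDist_subset)).trans_eq ?_
  rw [hnorm]
  field_simp

lemma abs_sub_fderiv_segment_le (h : UniformDefiningFunction D u ε m M k) (hp : p ∈ frontier D)
    (hx : x ∈ ball p ε) (hy : y ∈ ball p ε) {t : ℝ} (ht : t ∈ Icc (0 : ℝ) 1) :
    |u x - u (x + t • (y - x)) + t * fderiv ℝ u (x + t • (y - x)) (y - x)| ≤ M * ‖y - x‖ ^ 2 ∧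
      |u y - u (x + t • (y - x)) - (1 - t) * fderiv ℝ u (x + t • (y - x)) (y - x)| ≤
        M * ‖y - x‖ ^ 2 := by
  have hM := h.gradUpper_pos
  have hq : x + t • (y - x) ∈ ball p ε := (convex_ball p ε).add_smul_sub_mem hx hy ht
  set q := x + t • (y - x) with hqdef
  have hxq : x - q = -(t • (y - x)) := by rw [hqdef]; abel
  have hyq : y - q = (1 - t) • (y - x) := by rw [hqdef]; module
  have htaylor_x := h.taylor p hp q hq x hx
  have htaylor_y := h.taylor p hp q hq y hy
  rw [hxq, map_neg, map_smul, smul_eq_mul, sub_neg_eq_add, norm_neg, norm_smul, mul_pow,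
    Real.norm_of_nonneg ht.1] at htaylor_x
  rw [hyq, map_smul, smul_eq_mul, norm_smul, mul_pow,
    Real.norm_of_nonneg (sub_nonneg.2 ht.2)] at htaylor_y
  refine ⟨htaylor_x.trans ?_, htaylor_y.trans ?_⟩ <;> gcongr
  · exact mul_le_of_le_one_left (sq_nonneg _) (pow_le_one₀ ht.1 ht.2)
  · exact mul_le_of_le_one_left (sq_nonneg _) (pow_le_one₀ (sub_nonneg.2 ht.2) (by linarith [ht.1]))

lemma apply_segment_le (h : UniformDefiningFunction D u ε m M k) (hp : p ∈ frontier D)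
    (hx : x ∈ ball p ε) (hy : y ∈ ball p ε) {t : ℝ} (ht : t ∈ Icc (0 : ℝ) 1) :
    u (x + t • (y - x)) ≤ max (u x) (u y) + M * ‖y - x‖ ^ 2 := by
  obtain ⟨hxq, hyq⟩ := h.abs_sub_fderiv_segment_le hp hx hy ht
  have ht' : 0 ≤ 1 - t := sub_nonneg.2 ht.2
  linarith [mul_le_mul_of_nonneg_left (abs_le.1 hxq).1 ht',
    mul_le_mul_of_nonneg_left (abs_le.1 hyq).1 ht.1,
    mul_le_mul_of_nonneg_left (le_max_left (u x) (u y)) ht',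
    mul_le_mul_of_nonneg_left (le_max_right (u x) (u y)) ht.1]

lemma abs_fderiv_segment_le (h : UniformDefiningFunction D u ε m M k) (hp : p ∈ frontier D)
    (hx : x ∈ ball p ε) (hy : y ∈ ball p ε) {t : ℝ} (ht : t ∈ Icc (0 : ℝ) 1) :
    |fderiv ℝ u (x + t • (y - x)) (y - x)| ≤ |u y - u x| + 2 * (M * ‖y - x‖ ^ 2) := by
  obtain ⟨hxq, hyq⟩ := h.abs_sub_fderiv_segment_le hp hx hy ht
  rw [abs_le] at hxq hyq ⊢
  constructor <;> linarith [neg_abs_le (u y - u x), le_abs_self (u y - u x)]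

/-- The flat disk at `q` spanned by `v` and by a direction orthogonal to `v` and tangent to the
level set of `u` stays in `D` as far as a segment in the direction `v` would. Such a direction
exists in dimension at least three. -/
lemma minMetric_le_inv (hd : 3 ≤ d) (h : UniformDefiningFunction D u ε m M k)
    (hp : p ∈ frontier D) {q : Euc d} {κ : ℝ} (hκ : 0 < κ)
    (hball : closedBall q (κ * ‖v‖) ⊆ ball p ε)
    (hneg : u q + κ * |fderiv ℝ u q v| + M * (κ * ‖v‖) ^ 2 < 0) : minMetric D q v ≤ κ⁻¹ := by
  have hM := h.gradUpper_pos
  have hq : q ∈ ball p ε := hball (mem_closedBall_self (by positivity))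
  rcases eq_or_ne v 0 with rfl | hv
  · rw [minMetric_zero ((h.mem_iff p hp q hq).2 (by simpa using hneg))]
    positivity
  have hvpos : 0 < ‖v‖ := norm_pos_iff.2 hv
  set T := fderiv ℝ u q
  obtain ⟨w, hw, hperp⟩ := exists_norm_eq_one_forall_inner_eq_zero
    {v, (InnerProductSpace.toDual ℝ (Euc d)).symm T}
    (Finset.card_le_two.trans_lt (by rw [finrank_euclideanSpace_fin]; omega))
  have hvw : ⟪v, w⟫ = 0 := hperp v (by simp)
  have hTw : T w = 0 := by
    rw [← InnerProductSpace.toDual_symm_apply]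
    exact hperp _ (by simp)
  refine (minMetric_le_of_flat (mul_pos hκ hvpos) hw hvw fun z hz hzR => ?_).trans_eq
    (by field_simp)
  have hzball : q + z ∈ ball p ε := hball (by simpa using hzR.le)
  have htaylor := h.taylor p hp q hq _ hzball
  rw [add_sub_cancel_left] at htaylor
  have hsq : M * ‖z‖ ^ 2 ≤ M * (κ * ‖v‖) ^ 2 := by gcongr
  have hTz : T z ≤ κ * |T v| := by
    obtain ⟨a, b, rfl⟩ := Submodule.mem_span_pair.1 hz
    have hinner : ⟪v, a • v + b • w⟫ = a * ‖v‖ ^ 2 := by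
      rw [inner_add_right, real_inner_smul_right, real_inner_smul_right, hvw,
        real_inner_self_eq_norm_sq, mul_zero, add_zero]
    have ha : |a| * ‖v‖ ^ 2 ≤ κ * ‖v‖ ^ 2 := by
      calc |a| * ‖v‖ ^ 2 = |⟪v, a • v + b • w⟫| := by
            rw [hinner, abs_mul, abs_of_nonneg (sq_nonneg ‖v‖)]
        _ ≤ ‖v‖ * ‖a • v + b • w‖ := abs_real_inner_le_norm _ _
        _ ≤ ‖v‖ * (κ * ‖v‖) := by gcongr
        _ = κ * ‖v‖ ^ 2 := by ring
    rw [map_add, map_smul, map_smul, hTw, smul_zero, add_zero, smul_eq_mul]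
    refine (le_abs_self _).trans ?_
    rw [abs_mul]
    gcongr
    exact le_of_mul_le_mul_right ha (by positivity)
  exact (h.mem_iff p hp _ hzball).2 (by linarith [(abs_le.1 htaylor).2])

lemma minDist_le_of_le_neg (hd : 3 ≤ d) (h : UniformDefiningFunction D u ε m M k)
    (hp : p ∈ frontier D) {r L : ℝ} (hr : 0 < r) (hL : 0 ≤ L) (hxy : ‖y - x‖ ≤ r)
    (hx : u x ≤ -(4 * M * r ^ 2)) (hy : u y ≤ -(4 * M * r ^ 2)) (hu : |u y - u x| ≤ L)
    (hball : closedBall x (2 * r) ⊆ ball p ε) :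
    minDist D x y ≤ (L + 3 * M * r ^ 2) / (M * r ^ 2) := by
  have hd' : 2 ≤ d := by omega
  have hM := h.gradUpper_pos
  have hMr : 0 < M * r ^ 2 := by positivity
  have hxp : x ∈ ball p ε := hball (mem_closedBall_self (by positivity))
  have hyp : y ∈ ball p ε := hball (by rw [mem_closedBall, dist_eq_norm]; linarith)
  set κ := M * r ^ 2 / (L + 3 * M * r ^ 2)
  have hκpos : 0 < κ := by positivity
  have hκone : κ ≤ 1 := div_le_one_of_le₀ (by linarith) (by positivity)
  have hκmul : κ * (L + 3 * M * r ^ 2) = M * r ^ 2 := div_mul_cancel₀ _ (by positivity)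
  have hsq : M * ‖y - x‖ ^ 2 ≤ M * r ^ 2 := by gcongr
  have hκsq : M * (κ * ‖y - x‖) ^ 2 ≤ κ * (M * r ^ 2) := by
    calc M * (κ * ‖y - x‖) ^ 2 = κ ^ 2 * (M * ‖y - x‖ ^ 2) := by ring
      _ ≤ κ * (M * r ^ 2) := by
        gcongr
        exact pow_le_of_le_one hκpos.le hκone two_ne_zero
  have hseg (t : ℝ) (ht : t ∈ Icc (0 : ℝ) 1) : u (x + t • (y - x)) ≤ -(3 * M * r ^ 2) := by
    linarith [h.apply_segment_le hp hxp hyp ht, max_le hx hy]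
  refine minDist_le_of_segment hd' h.isOpen (fun t ht => ?_) fun t ht => ?_
  · exact (h.mem_iff p hp _ ((convex_ball p ε).add_smul_sub_mem hxp hyp ht)).2
      (by linarith [hseg t ht])
  · refine (h.minMetric_le_inv hd hp hκpos ((closedBall_subset_closedBall' ?_).trans hball)
      ?_).trans_eq (inv_div _ _)
    · rw [dist_eq_norm, add_sub_cancel_left, norm_smul, Real.norm_of_nonneg ht.1]
      linarith [mul_le_of_le_one_left (norm_nonneg (y - x)) hκone,
        mul_le_of_le_one_left (norm_nonneg (y - x)) ht.2]
    · have hfderiv := (h.abs_fderiv_segment_le hp hxp hyp ht).trans (add_le_add_left hu _)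
      linarith [hseg t ht, mul_le_mul_of_nonneg_left hfderiv hκpos.le,
        mul_le_mul_of_nonneg_left hsq hκpos.le]

/-- Move both points inwards by a large multiple of `r ^ 2`, then across. -/
lemma minDist_le_of_dist_le (hd : 3 ≤ d) (h : UniformDefiningFunction D u ε m M k)
    (hp : p ∈ frontier D) (hx : x ∈ D) (hy : y ∈ D) {r a b : ℝ} (hr : 0 < r)
    (ha : a = 8 * M * r ^ 2 / m) (hxy : dist x y + 2 * a ≤ r) (hxp : dist x p + a + 2 * r < ε / 2)
    (hxb : boundaryDist D x + a ≤ b) (hyb : boundaryDist D y + a ≤ b) :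
    minDist D x y ≤ a * (8 * M / (m * boundaryDist D x)) +
      (2 * M * b + 3 * M * r ^ 2) / (M * r ^ 2) + a * (8 * M / (m * boundaryDist D y)) := by
  have hd' : 2 ≤ d := by omega
  have hm := h.gradLower_pos
  have hM := h.gradUpper_pos
  have hε := h.eps_pos
  have ha0 : 0 ≤ a := by rw [ha]; positivity
  have hma : m / 2 * a = 4 * M * r ^ 2 := by rw [ha]; field_simp; norm_num
  have hyp : dist y p ≤ dist x p + r := by linarith [dist_triangle_left y p x]
  obtain ⟨x', hx', hdx, hux, hxx'⟩ := h.exists_inward_point hd' hp hx (by linarith) ha0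
    (by linarith)
  obtain ⟨y', hy', hdy, huy, hyy'⟩ := h.exists_inward_point hd' hp hy (by linarith) ha0
    (by linarith)
  have hneg_x : u x < 0 := h.neg hx (by linarith [h.boundaryDist_le_dist (x := x) hp])
  have hneg_y : u y < 0 := h.neg hy (by linarith [h.boundaryDist_le_dist (x := y) hp])
  have hδx : boundaryDist D x' ≤ b := by
    linarith [boundaryDist_le_add_dist (D := D) (x := x) (y := x')]
  have hδy : boundaryDist D y' ≤ b := by
    linarith [boundaryDist_le_add_dist (D := D) (x := y) (y := y')]
  have hlow_x : -u x' ≤ 2 * M * b := (h.neg_le_mul_boundaryDist hx' (by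
    linarith [boundaryDist_le_add_dist (D := D) (x := x) (y := x'),
      h.boundaryDist_le_dist (x := x) hp])).trans (by gcongr)
  have hlow_y : -u y' ≤ 2 * M * b := (h.neg_le_mul_boundaryDist hy' (by
    linarith [boundaryDist_le_add_dist (D := D) (x := y) (y := y'),
      h.boundaryDist_le_dist (x := y) hp])).trans (by gcongr)
  have hMr : 0 < M * r ^ 2 := by positivity
  have hacross := h.minDist_le_of_le_neg hd hp hr (L := 2 * M * b) (by linarith) (x := x') (y := y')
    (by
      rw [← dist_eq_norm]
      linarith [dist_triangle4 y' y x x', dist_comm x x', dist_comm y x])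
    (by linarith) (by linarith) (by rw [abs_le]; constructor <;> linarith)
    (closedBall_subset_ball' (by linarith [dist_triangle x' x p]))
  linarith [minDist_triangle hd' h.isOpen h.isConnected hx hx' hy,
    minDist_triangle hd' h.isOpen h.isConnected hx' hy' hy, minDist_comm hd' h.isOpen y' y]

end UniformDefiningFunction

/-! ### Heights over the boundary -/

lemma hasHeight_sqrt_iff {X : Type*} {S : X → ℝ} {C s : ℝ} {x : X} (hC : 0 ≤ C) (hs : 0 ≤ s)
    (hS : 0 ≤ S x) :
    HasHeight (fun z => √(S z)) C s x ↔ s ^ 2 ≤ C ^ 2 * S x ∧ S x ≤ C ^ 2 * s ^ 2 := by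
  refine and_congr ?_ ?_
  · rw [← sq_le_sq₀ hs (by positivity), mul_pow, Real.sq_sqrt hS]
  · rw [Real.sqrt_le_left (by positivity), mul_pow]

lemma HasHeight.mono {X : Type*} {h : X → ℝ} {C C' s : ℝ} {x : X} (hx : HasHeight h C s x)
    (hC : C ≤ C') (hs : 0 ≤ s) (hpos : 0 ≤ h x) : HasHeight h C' s x :=
  ⟨hx.1.trans (by gcongr), hx.2.trans (by gcongr)⟩

section BoundaryHeight

variable {d : ℕ} {D : Set (Euc d)} {u : Euc d → ℝ} {ε m M k : ℝ}

namespace UniformDefiningFunction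

lemma exists_minDist_le_of_mul_sq_le (hd : 3 ≤ d) (h : UniformDefiningFunction D u ε m M k)
    {b B C : ℝ} (hb : 0 < b) (hB : 0 ≤ B) (hC : 0 ≤ C) :
    ∃ s₀ > 0, ∃ C', ∀ x ∈ D, ∀ y ∈ D, ∀ s, 0 < s → s ≤ s₀ →
      boundaryDist D x ∈ Icc (b * s ^ 2) (B * s ^ 2) →
      boundaryDist D y ∈ Icc (b * s ^ 2) (B * s ^ 2) → dist x y ≤ C * s → minDist D x y ≤ C' := by
  have hm := h.gradLower_pos
  have hM := h.gradUpper_pos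
  have hε := h.eps_pos
  set V := C + 1 with hV
  set A := 8 * M * V ^ 2 / m with hA
  have hA0 : 0 ≤ A := by positivity
  set Q := B + 2 * A + 2 * V + 1 with hQ
  refine ⟨ε / (4 * Q), by positivity, 2 * (A * (8 * M / (m * b))) +
    (2 * M * (B + A) + 3 * M * V ^ 2) / (M * V ^ 2),
    fun x hx y hy s hs hsQ hxs hys hxy => ?_⟩
  have hQs : B * s + 2 * (A * s) + 2 * (V * s) + s ≤ ε / 4 := by
    rw [le_div_iff₀ (by positivity), hQ] at hsQ
    linarith
  have hBs : 0 ≤ B * s := by positivity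
  have hAs : 0 ≤ A * s := by positivity
  have hVs : 0 < V * s := by positivity
  have hsq : s ^ 2 ≤ s := pow_le_of_le_one hs.le (by linarith [h.eps_le_one]) two_ne_zero
  have hAsq : 2 * (A * s ^ 2) ≤ s := by
    have hAs1 : 2 * (A * s) ≤ 1 := by linarith [h.eps_le_one]
    linarith [mul_le_mul_of_nonneg_right hAs1 hs.le]
  obtain ⟨p, hp, hxp⟩ := h.exists_dist_eq_boundaryDist hx
  have hinward {z : Euc d} (hz : b * s ^ 2 ≤ boundaryDist D z) :
      A * s ^ 2 * (8 * M / (m * boundaryDist D z)) ≤ A * (8 * M / (m * b)) := by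
    calc A * s ^ 2 * (8 * M / (m * boundaryDist D z))
        ≤ A * s ^ 2 * (8 * M / (m * (b * s ^ 2))) := by gcongr
      _ = A * (8 * M / (m * b)) := by field_simp
  have hacross : (2 * M * ((B + A) * s ^ 2) + 3 * M * (V * s) ^ 2) / (M * (V * s) ^ 2) =
      (2 * M * (B + A) + 3 * M * V ^ 2) / (M * V ^ 2) := by field_simp
  have hdist := h.minDist_le_of_dist_le hd hp hx hy (r := V * s) (a := A * s ^ 2)
    (b := (B + A) * s ^ 2) hVs (by rw [hA]; ring) (by rw [hV]; linarith)
    (by linarith [hxs.2, mul_le_mul_of_nonneg_left hsq hB, mul_le_mul_of_nonneg_left hsq hA0])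
    (by linarith [hxs.2]) (by linarith [hys.2])
  rw [hacross] at hdist
  linarith [hinward hxs.1, hinward hys.1]

lemma exists_minDist_le_of_le_boundaryDist (hd : 2 ≤ d) (h : UniformDefiningFunction D u ε m M k)
    {b : ℝ} (hb : 0 < b) :
    ∃ C, ∀ x y, b ≤ boundaryDist D x → b ≤ boundaryDist D y → minDist D x y ≤ C := by
  obtain ⟨o, ho⟩ := h.isConnected.nonempty
  have hKD : {x | b ≤ boundaryDist D x} ⊆ D := fun x hx =>
    ball_boundaryDist_subset (mem_ball_self (hb.trans_le hx))
  have hK : IsCompact {x | b ≤ boundaryDist D x} :=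
    isCompact_of_isClosed_isBounded (isClosed_le continuous_const continuous_boundaryDist)
      (h.isBounded.subset hKD)
  obtain ⟨C, hC⟩ := exists_minDist_le_of_isCompact hd h.isOpen h.isConnected ho hK hKD
  refine ⟨C + C, fun x y hx hy => ?_⟩
  linarith [minDist_triangle hd h.isOpen h.isConnected (hKD hx) ho (hKD hy),
    minDist_comm hd h.isOpen x o, hC x hx, hC y hy]

end UniformDefiningFunction

namespace BoundaryHeight

variable {S : Euc d → ℝ} {c C : ℝ}

lemma sqrt_pos (hS : BoundaryHeight D S c C) (x : MinSpace D) : 0 < √(S x.point) :=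
  Real.sqrt_pos.2 (hS.pos x.point x.mem)

lemma exists_heightDist_le (hS : BoundaryHeight D S c C)
    (h : UniformDefiningFunction D u ε m M k) :
    ∃ H, ∀ x y : MinSpace D, heightDist MinSpace.point (fun z => √(S z.point)) x y ≤ H := by
  have hC := hS.upper_pos
  obtain ⟨R, -, hδ⟩ := h.exists_boundaryDist_le
  have hle (x : MinSpace D) : √(S x.point) ≤ √(C * R) :=
    Real.sqrt_le_sqrt ((hS.le_mul_boundaryDist x.point x.mem).trans (by gcongr; exact hδ _ x.mem))
  exact ⟨diam D + √(C * R), fun x y =>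
    add_le_add (dist_le_diam_of_mem h.isBounded x.mem y.mem) (max_le (hle x) (hle y))⟩

lemma boundaryDist_mem_Icc (hS : BoundaryHeight D S c C) {K s : ℝ} {x : MinSpace D} (hK : 0 < K)
    (hs : 0 < s) (hx : HasHeight (fun z : MinSpace D => √(S z.point)) K s x) :
    boundaryDist D x.point ∈ Icc (1 / (C * K ^ 2) * s ^ 2) (K ^ 2 / c * s ^ 2) := by
  have hc := hS.lower_pos
  have hC := hS.upper_pos
  obtain ⟨hlow, hupp⟩ := (hasHeight_sqrt_iff hK.le hs.le (hS.pos _ x.mem).le).1 hx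
  rw [mem_Icc, div_mul_eq_mul_div, div_mul_eq_mul_div, div_le_iff₀ (by positivity),
    le_div_iff₀ hc]
  constructor
  · linarith [mul_le_mul_of_nonneg_left (hS.le_mul_boundaryDist _ x.mem) (sq_nonneg K)]
  · linarith [hS.mul_boundaryDist_le _ x.mem]

lemma exists_boundedAtScale (hd : 3 ≤ d) (hS : BoundaryHeight D S c C)
    (h : UniformDefiningFunction D u ε m M k) {K : ℝ} (hK : 0 < K) :
    let _ := MinSpace.pseudoMetricSpace (d := d) (by omega) h.isOpen h.isConnected
    ∃ B, 0 ≤ B ∧ BoundedAtScale (MinSpace.point (D := D)) (fun z => √(S z.point)) K B := by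
  have hc := hS.lower_pos
  have hC := hS.upper_pos
  obtain ⟨s₀, hs₀, C₁, hsmall⟩ := h.exists_minDist_le_of_mul_sq_le hd (b := 1 / (C * K ^ 2))
    (B := K ^ 2 / c) (by positivity) (by positivity) hK.le
  obtain ⟨C₂, hlarge⟩ := h.exists_minDist_le_of_le_boundaryDist (by omega)
    (b := 1 / (C * K ^ 2) * s₀ ^ 2) (by positivity)
  refine ⟨max 0 (max C₁ C₂), le_max_left _ _, fun x y s hs hx hy hxy => le_max_of_le_right ?_⟩
  have hxs := hS.boundaryDist_mem_Icc hK hs hx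
  have hys := hS.boundaryDist_mem_Icc hK hs hy
  rcases le_total s s₀ with hss | hss
  · exact le_max_of_le_left (hsmall _ x.mem _ y.mem s hs hss hxs hys hxy)
  · have hsq : 1 / (C * K ^ 2) * s₀ ^ 2 ≤ 1 / (C * K ^ 2) * s ^ 2 := by gcongr
    exact le_max_of_le_right (hlarge _ _ (hsq.trans hxs.1) (hsq.trans hys.1))

lemma hasHeight_of_boundaryDist_mem_Icc (hS : BoundaryHeight D S c C) {a b s : ℝ} {x : MinSpace D}
    (ha : 0 < a) (hb : 0 ≤ b) (hs : 0 ≤ s)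
    (hx : boundaryDist D x.point ∈ Icc (a * s ^ 2) (b * s ^ 2)) :
    HasHeight (fun z : MinSpace D => √(S z.point)) (1 + 1 / (c * a) + C * b) s x := by
  have hc := hS.lower_pos
  have hC := hS.upper_pos
  set K := 1 + 1 / (c * a) + C * b with hK
  have hca : 0 ≤ 1 / (c * a) := by positivity
  have hCb : 0 ≤ C * b := by positivity
  have hKsq : K ≤ K ^ 2 := le_self_pow₀ (by rw [hK]; linarith) two_ne_zero
  refine (hasHeight_sqrt_iff (by positivity) hs (hS.pos _ x.mem).le).2 ⟨?_, ?_⟩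
  · calc s ^ 2 ≤ 1 / (c * a) * S x.point := by
          rw [div_mul_eq_mul_div, one_mul, le_div_iff₀ (by positivity)]
          linarith [hS.mul_boundaryDist_le _ x.mem, mul_le_mul_of_nonneg_left hx.1 hc.le]
      _ ≤ K ^ 2 * S x.point :=
          mul_le_mul_of_nonneg_right (hKsq.trans' (by rw [hK]; linarith)) (hS.pos _ x.mem).le
  · calc S x.point ≤ C * boundaryDist D x.point := hS.le_mul_boundaryDist _ x.mem
      _ ≤ C * (b * s ^ 2) := by gcongr; exact hx.2
      _ = C * b * s ^ 2 := by ring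
      _ ≤ K ^ 2 * s ^ 2 := by gcongr; exact hKsq.trans' (by rw [hK]; linarith)

lemma exists_lift_near_boundary (hd : 2 ≤ d) (hS : BoundaryHeight D S c C)
    (h : UniformDefiningFunction D u ε m M k) :
    ∃ s₀ > 0, ∃ K, ∀ x : MinSpace D, ∀ s, √(S x.point) ≤ s → s ≤ s₀ →
      ∃ p : MinSpace D, HasHeight (fun z => √(S z.point)) K s p ∧ dist x.point p.point ≤ K * s := by
  have hc := hS.lower_pos
  have hC := hS.upper_pos
  have hm := h.gradLower_pos
  have hM := h.gradUpper_pos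
  have hε := h.eps_pos
  set K := 1 + 1 / (c * (m / (4 * M))) + C * (1 / c + 1) with hK
  have hK1 : 1 ≤ K := by
    rw [hK, add_assoc, le_add_iff_nonneg_right]
    positivity
  refine ⟨min 1 (min (c * ε / 16) (ε / 16)), by positivity, K, fun x s hxs hs => ?_⟩
  have hs0 : 0 < s := (hS.sqrt_pos x).trans_le hxs
  obtain ⟨hs1, hsc, hsε⟩ := by simpa only [le_min_iff] using hs
  have hsq : s ^ 2 ≤ s := pow_le_of_le_one hs0.le hs1 two_ne_zero
  have hδ : boundaryDist D x.point ≤ 1 / c * s ^ 2 := by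
    rw [one_div_mul_eq_div, le_div_iff₀' hc]
    exact (hS.mul_boundaryDist_le _ x.mem).trans ((Real.sqrt_le_left hs0.le).1 hxs)
  have hδε : boundaryDist D x.point < ε / 8 := by
    refine hδ.trans_lt ?_
    rw [one_div_mul_eq_div, div_lt_iff₀ hc]
    linarith [mul_pos hc hε]
  obtain ⟨p, hp, hxp⟩ := h.exists_dist_eq_boundaryDist x.mem
  obtain ⟨y, hy, hyx, huy, -⟩ := h.exists_inward_point hd hp x.mem (by linarith) (sq_nonneg s)
    (by linarith)
  have hδy : boundaryDist D y ≤ boundaryDist D x.point + s ^ 2 := hyx ▸ boundaryDist_le_add_dist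
  have hneg := h.neg_le_mul_boundaryDist hy (by linarith)
  refine ⟨⟨y, hy⟩, hS.hasHeight_of_boundaryDist_mem_Icc (by positivity) (by positivity) hs0.le
    ⟨?_, by linarith⟩, ?_⟩
  · rw [div_mul_eq_mul_div, div_le_iff₀ (by positivity)]
    linarith [h.neg x.mem (by linarith)]
  · rw [dist_comm, hyx]
    exact hsq.trans (le_mul_of_one_le_left hs0.le hK1)

lemma exists_lift_far_from_boundary (hS : BoundaryHeight D S c C) (hD : IsConnected D)
    (hDb : Bornology.IsBounded D) {s₀ : ℝ} (hs₀ : 0 < s₀) (H : ℝ) :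
    ∃ K, ∀ x : MinSpace D, ∀ s, s₀ ≤ s → s ≤ H →
      ∃ p : MinSpace D, HasHeight (fun z => √(S z.point)) K s p ∧ dist x.point p.point ≤ K * s := by
  obtain ⟨o, ho⟩ := hD.nonempty
  have hSo := hS.sqrt_pos ⟨o, ho⟩
  refine ⟨max (H / √(S o)) (max (√(S o) / s₀) (diam D / s₀)), fun x s hs hsH => ?_⟩
  refine ⟨⟨o, ho⟩, ⟨?_, ?_⟩, ?_⟩
  · calc s ≤ H / √(S o) * √(S o) := by rwa [div_mul_cancel₀ _ hSo.ne']
      _ ≤ _ := by gcongr; exact le_max_left _ _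
  · calc √(S o) = √(S o) / s₀ * s₀ := (div_mul_cancel₀ _ hs₀.ne').symm
      _ ≤ _ := by gcongr; exact (le_max_left _ _).trans (le_max_right _ _)
  · calc dist x.point o ≤ diam D := dist_le_diam_of_mem hDb x.mem ho
      _ = diam D / s₀ * s₀ := (div_mul_cancel₀ _ hs₀.ne').symm
      _ ≤ _ := by gcongr; exact (le_max_right _ _).trans (le_max_right _ _)

lemma exists_hasLifts (hd : 2 ≤ d) (hS : BoundaryHeight D S c C)
    (h : UniformDefiningFunction D u ε m M k) (H : ℝ) :
    ∃ K, 1 ≤ K ∧ HasLifts (MinSpace.point (D := D)) (fun z => √(S z.point)) K H := by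
  obtain ⟨s₀, hs₀, K₁, hnear⟩ := hS.exists_lift_near_boundary hd h
  obtain ⟨K₂, hfar⟩ := hS.exists_lift_far_from_boundary h.isConnected h.isBounded hs₀ H
  refine ⟨max 1 (max K₁ K₂), le_max_left _ _, fun x s hxs hsH => ?_⟩
  have hs0 : 0 ≤ s := (hS.sqrt_pos x).le.trans hxs
  rcases le_total s s₀ with hs | hs
  · obtain ⟨p, hp, hxp⟩ := hnear x s hxs hs
    have hK : K₁ ≤ max 1 (max K₁ K₂) := (le_max_left _ _).trans (le_max_right _ _)
    exact ⟨p, hp.mono hK hs0 (Real.sqrt_nonneg _), hxp.trans (by gcongr)⟩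
  · obtain ⟨p, hp, hxp⟩ := hfar x s hs hsH
    have hK : K₂ ≤ max 1 (max K₁ K₂) := (le_max_right _ _).trans (le_max_right _ _)
    exact ⟨p, hp.mono hK hs0 (Real.sqrt_nonneg _), hxp.trans (by gcongr)⟩

end BoundaryHeight

end BoundaryHeight

/-- Every bounded strongly minimally convex domain `D ⊆ ℝ^d` (`d ≥ 3`)
is Gromov hyperbolic with respect to the minimal distance `ρ_D`. -/
theorem minimal_metric_gromov_hyperbolic
    (d : ℕ) (hd : 3 ≤ d) (D : Set (Euc d)) (hD : IsStronglyMinimallyConvex D) :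
    ∃ δ : ℝ, 0 ≤ δ ∧ ∀ x ∈ D, ∀ y ∈ D, ∀ z ∈ D, ∀ o ∈ D,
      min (gromovProd D o x z) (gromovProd D o y z) - δ ≤ gromovProd D o x y := by
  have hd' : 2 ≤ d := by omega
  have : Nontrivial (Fin d) := Fin.nontrivial_iff_two_le.2 hd'
  obtain ⟨u, ε, m, M, k, h⟩ := hD.exists_uniformDefiningFunction
  obtain ⟨S, c, C, hS⟩ := h.exists_boundaryHeight hd'
  let _ := MinSpace.pseudoMetricSpace hd' h.isOpen h.isConnected
  obtain ⟨L, hL⟩ := hS.exists_fillingGauge_le hd' h.isOpen h.isConnected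
  obtain ⟨H, hH⟩ := hS.exists_heightDist_le h
  obtain ⟨K, hK, hlift⟩ := hS.exists_hasLifts hd' h H
  obtain ⟨B, hB0, hB⟩ := hS.exists_boundedAtScale hd h (K := 4 * K) (by linarith)
  obtain ⟨δ, hδ, hyp⟩ := hlift.gromovHyperbolic hB hB0 hS.sqrt_pos hK hH
    (MinSpace.roughlyGeodesic hd' h.isOpen h.isConnected) hL
  exact ⟨δ, hδ, fun x hx y hy z hz o ho => hyp ⟨x, hx⟩ ⟨y, hy⟩ ⟨z, hz⟩ ⟨o, ho⟩⟩
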